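/- Let 1/2 < α < 1 and let T be the corresponding Liverani–Saussol–Vaienti map with absolutely continuous invariant probability measure m of density h. Let f : [0,1] → ℝ be Hölder continuous, and γ-Hölder on some neighborhood of 0 with γ > (2α−1)/(α+1). Assume ∫ f dm = 0 and f(0) ≠ 0. Set c = (h(1/2)/(4(α/|f(0)|)^{1/α})) · Γ(1−1/α) · cos(π/(2α)) (a positive real number). Then S_n f/n^α converges in distribution under m to the stable law X_{1/α, c, sgn(f(0))}; equivalently, for every t ∈ ℝ, ∫_{[0,1]} exp(i t S_n f(x)/n^α) dm(x) → exp(−c|t|^{1/α}(1 − i·sgn(f(0))·sgn(t)·tan(π/(2α)))) as n → ∞. -/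

import Mathlib

/-!
The proof induces on `A = (1/2, 1]`. The first return map `Ret` has full inverse branches `psi n`,
one for each return time `n + 1`, which contract by `1/2` and have bounded distortion
(collected in the structure `Sys`, instantiated by `sys`). Hence its transfer operator preserves a
cone of log-Hölder densities, and a coupling argument inside that cone gives exponential decay on
mean-zero Hölder functions (`Sys.decay`), with an invariant density `h0`.

Twisting the transfer operator by `exp (i t G)` is a perturbation of size `O(|t|)`, so the
characteristic functions of the induced sums are governed by powers of a scalar `lam t`
(`Sys.Obs.perturb`, `Sys.Obs.limit`). The induced observable `gs f`, the sum of `f` over an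
excursion, is asymptotic to `f 0` times the return time, and the return time of `1/2 + s` is
asymptotic to `(α 4^α)⁻¹ s^(-α)`. Therefore `n (lam (t / n^α) - 1)` converges to
`h0 (1/2) ∫ Psi (t κ σ^(-α)) dσ` with `κ = f 0 (α 4^α)⁻¹` and
`Psi w = exp (i w) - 1 - i w` (`lam_asymp`); a Gamma integral evaluates it (`integral_Psi`), which gives a stable law of index `1/α` for the return map started
from any absolutely continuous law (`induced_stable`).

Kac's formula shows that `gs f` is centred when `f` is, and equidistribution of the return map
identifies `h (1/2)` with `m(A) h0 (1/2)` (`density_half`). Finally the sum up to time `n` is compared with the sum up to the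
`⌊n m(A)⌋`-th visit to `A`. The time of that visit is `n + O(n^α)` in probability, by the same
stable law applied to the centred return time, and the Birkhoff sum over a window of this length is
`o(n^α)` by stationarity and a maximal weak law of large numbers (`Nice.wlln_max`, `Nice.window`),
so both sums have the same limit.
-/

open MeasureTheory Filter Topology Real

/-- The Liverani–Saussol–Vaienti map `T(x) = x(1 + 2^α x^α)` on `[0, 1/2]`,
`T(x) = 2x - 1` on `(1/2, 1]`. -/
noncomputable def lsv (α : ℝ) (x : ℝ) : ℝ :=
  if x ≤ 1 / 2 then x * (1 + 2 ^ α * x ^ α) else 2 * x - 1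

namespace LSV

/-! ### The left branch and its inverse iterates -/

/-- The left branch `x(1 + 2^α x^α)` of the map, considered on all of `[0, ∞)`. -/
noncomputable def T0 (α x : ℝ) : ℝ := x * (1 + 2 ^ α * x ^ α)

/-- The derivative of the left branch. -/
noncomputable def dT (α x : ℝ) : ℝ := 1 + (1 + α) * 2 ^ α * x ^ α

/-- The inverse of the left branch on `[0, ∞)`. -/
noncomputable def q (α y : ℝ) : ℝ := Function.invFunOn (T0 α) (Set.Ici 0) y

/-- The `n`-fold inverse of the left branch. -/
noncomputable def chi (α : ℝ) (n : ℕ) (y : ℝ) : ℝ := (q α)^[n] y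

/-- The derivative of `chi α n`. -/
noncomputable def dchi (α : ℝ) (n : ℕ) (y : ℝ) : ℝ :=
  ∏ j ∈ Finset.range n, (dT α (chi α (j + 1) y))⁻¹

/-- The successive preimages of `1` under the left branch; the `n`-th of them bounds the
set of points that need at least `n` steps to enter `(1/2, 1]`. -/
noncomputable def X (α : ℝ) (n : ℕ) : ℝ := chi α n 1

variable {α : ℝ}

lemma T0_zero (α : ℝ) : T0 α 0 = 0 := by simp [T0]

lemma T0_sub_ge (hα : 0 < α) {a b : ℝ} (ha : 0 ≤ a) (hab : a ≤ b) :
    b - a ≤ T0 α b - T0 α a := by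
  unfold T0
  have h1 : a ^ α ≤ b ^ α := rpow_le_rpow ha hab hα.le
  have h2 : (0:ℝ) ≤ 2 ^ α := by positivity
  have h3 : 0 ≤ a ^ α := rpow_nonneg ha _
  have hb : 0 ≤ b := ha.trans hab
  have : a * (2 ^ α * a ^ α) ≤ b * (2 ^ α * b ^ α) := by gcongr
  nlinarith

lemma T0_strictMonoOn (hα : 0 < α) : StrictMonoOn (T0 α) (Set.Ici 0) := by
  intro a ha b _ hab
  have := T0_sub_ge hα ha hab.le
  linarith

lemma continuous_T0 (hα : 0 < α) : Continuous (T0 α) := by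
  unfold T0
  exact continuous_id.mul (continuous_const.add (continuous_const.mul
    (continuous_id.rpow_const fun _ => Or.inr hα.le)))

lemma exists_T0 (hα : 0 < α) {y : ℝ} (hy : 0 ≤ y) : ∃ x ∈ Set.Ici (0:ℝ), T0 α x = y := by
  have h1 := T0_sub_ge hα le_rfl hy
  rw [T0_zero] at h1
  have := intermediate_value_Icc hy (continuous_T0 hα).continuousOn
  obtain ⟨x, hx, hxy⟩ := this (show y ∈ Set.Icc (T0 α 0) (T0 α y) from
    ⟨by rw [T0_zero]; exact hy, by linarith⟩)
  exact ⟨x, hx.1, hxy⟩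

lemma q_nonneg (hα : 0 < α) {y : ℝ} (hy : 0 ≤ y) : 0 ≤ q α y :=
  Function.invFunOn_mem (exists_T0 hα hy)

lemma T0_q (hα : 0 < α) {y : ℝ} (hy : 0 ≤ y) : T0 α (q α y) = y :=
  Function.invFunOn_eq (exists_T0 hα hy)

lemma T0_nonneg {x : ℝ} (hx : 0 ≤ x) : 0 ≤ T0 α x := by unfold T0; positivity

lemma q_T0 (hα : 0 < α) {x : ℝ} (hx : 0 ≤ x) : q α (T0 α x) = x :=
  (T0_strictMonoOn hα).injOn (q_nonneg hα (T0_nonneg hx)) hx (T0_q hα (T0_nonneg hx))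

lemma q_lip_aux (hα : 0 < α) {y z : ℝ} (hy : 0 ≤ y) (hyz : y ≤ z) :
    q α y ≤ q α z ∧ q α z - q α y ≤ z - y := by
  have h1 : q α y ≤ q α z := by
    rw [← (T0_strictMonoOn hα).le_iff_le (q_nonneg hα hy) (q_nonneg hα (hy.trans hyz)),
      T0_q hα hy, T0_q hα (hy.trans hyz)]
    exact hyz
  have h2 := T0_sub_ge hα (q_nonneg hα hy) h1
  rw [T0_q hα hy, T0_q hα (hy.trans hyz)] at h2
  exact ⟨h1, h2⟩

lemma q_mono (hα : 0 < α) {y z : ℝ} (hy : 0 ≤ y) (hyz : y ≤ z) : q α y ≤ q α z :=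
  (q_lip_aux hα hy hyz).1

lemma q_strictMono (hα : 0 < α) {y z : ℝ} (hy : 0 ≤ y) (hyz : y < z) : q α y < q α z := by
  rw [← (T0_strictMonoOn hα).lt_iff_lt (q_nonneg hα hy) (q_nonneg hα (hy.trans hyz.le)),
      T0_q hα hy, T0_q hα (hy.trans hyz.le)]
  exact hyz

lemma q_lip (hα : 0 < α) {y z : ℝ} (hy : 0 ≤ y) (hz : 0 ≤ z) : |q α y - q α z| ≤ |y - z| := by
  rcases le_total y z with h | h
  · have := q_lip_aux hα hy h
    rw [abs_sub_comm, abs_sub_comm y, abs_of_nonneg (by linarith [this.1]),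
      abs_of_nonneg (by linarith)]
    exact this.2
  · have := q_lip_aux hα hz h
    rw [abs_of_nonneg (by linarith [this.1]), abs_of_nonneg (by linarith)]
    exact this.2

lemma q_zero (hα : 0 < α) : q α 0 = 0 := by
  have := q_T0 hα (le_refl (0:ℝ))
  rwa [T0_zero] at this

lemma q_pos (hα : 0 < α) {y : ℝ} (hy : 0 < y) : 0 < q α y := by
  have := q_strictMono hα le_rfl hy
  rwa [q_zero hα] at this

lemma T0_half (α : ℝ) : T0 α (1/2) = 1 := by
  unfold T0
  rw [← mul_rpow (by norm_num) (by norm_num)]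
  norm_num

lemma q_one (hα : 0 < α) : q α 1 = 1/2 := by
  have := q_T0 hα (show (0:ℝ) ≤ 1 / 2 by norm_num)
  rwa [T0_half] at this

lemma one_le_dT (hα : 0 < α) {x : ℝ} (hx : 0 ≤ x) : 1 ≤ dT α x := by
  unfold dT
  have : 0 ≤ (1 + α) * 2 ^ α * x ^ α := by positivity
  linarith

lemma dT_mono (hα : 0 < α) {x y : ℝ} (hx : 0 ≤ x) (hxy : x ≤ y) : dT α x ≤ dT α y := by
  unfold dT
  gcongr

lemma hasDerivAt_T0 {x : ℝ} (hx : 0 < x) : HasDerivAt (T0 α) (dT α x) x := by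
  have h1 := (hasDerivAt_id x).mul
    (((hasDerivAt_rpow_const (p := α) (Or.inl hx.ne')).const_mul ((2:ℝ) ^ α)).const_add 1)
  refine h1.congr_deriv ?_
  simp only [id, dT]
  have : x * x ^ (α - 1) = x ^ α := by
    rw [mul_comm, ← rpow_add_one hx.ne']; ring_nf
  linear_combination (2 ^ α * α) * this

lemma continuousAt_q (hα : 0 < α) {y : ℝ} (hy : 0 < y) : ContinuousAt (q α) y := by
  rw [Metric.continuousAt_iff]
  intro ε hε
  refine ⟨min ε y, lt_min hε hy, fun {z} hz => ?_⟩
  rw [Real.dist_eq] at hz ⊢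
  have hz0 : 0 ≤ z := by
    have := (abs_lt.1 (hz.trans_le (min_le_right _ _))).1
    linarith
  exact (q_lip hα hz0 hy.le).trans_lt (hz.trans_le (min_le_left _ _))

lemma hasDerivAt_q (hα : 0 < α) {y : ℝ} (hy : 0 < y) :
    HasDerivAt (q α) (dT α (q α y))⁻¹ y := by
  refine HasDerivAt.of_local_left_inverse (continuousAt_q hα hy)
    (hasDerivAt_T0 (q_pos hα hy)) ?_ ?_
  · have := one_le_dT hα (q_pos hα hy).le
    positivity
  · filter_upwards [lt_mem_nhds hy] with z hz using T0_q hα hz.le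

lemma chi_zero (y : ℝ) : chi α 0 y = y := rfl

lemma chi_succ (n : ℕ) (y : ℝ) : chi α (n + 1) y = q α (chi α n y) :=
  Function.iterate_succ_apply' _ _ _

lemma chi_succ' (n : ℕ) (y : ℝ) : chi α (n + 1) y = chi α n (q α y) :=
  Function.iterate_succ_apply _ _ _

lemma chi_pos (hα : 0 < α) (n : ℕ) {y : ℝ} (hy : 0 < y) : 0 < chi α n y := by
  induction n with
  | zero => exact hy
  | succ n ih => rw [chi_succ]; exact q_pos hα ih

lemma chi_mono (hα : 0 < α) (n : ℕ) {y z : ℝ} (hy : 0 < y) (hyz : y ≤ z) :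
    chi α n y ≤ chi α n z := by
  induction n with
  | zero => exact hyz
  | succ n ih => rw [chi_succ, chi_succ]; exact q_mono hα (chi_pos hα n hy).le ih

lemma chi_strictMono (hα : 0 < α) (n : ℕ) {y z : ℝ} (hy : 0 < y) (hyz : y < z) :
    chi α n y < chi α n z := by
  induction n with
  | zero => exact hyz
  | succ n ih => rw [chi_succ, chi_succ]; exact q_strictMono hα (chi_pos hα n hy).le ih

lemma chi_lip (hα : 0 < α) (n : ℕ) {y z : ℝ} (hy : 0 < y) (hz : 0 < z) :
    |chi α n y - chi α n z| ≤ |y - z| := by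
  induction n with
  | zero => exact le_rfl
  | succ n ih =>
    rw [chi_succ, chi_succ]
    exact (q_lip hα (chi_pos hα n hy).le (chi_pos hα n hz).le).trans ih

lemma hasDerivAt_chi (hα : 0 < α) (n : ℕ) {y : ℝ} (hy : 0 < y) :
    HasDerivAt (chi α n) (dchi α n y) y := by
  induction n with
  | zero =>
    simp only [dchi, Finset.range_zero, Finset.prod_empty]
    exact hasDerivAt_id y
  | succ n ih =>
    have h := (hasDerivAt_q hα (chi_pos hα n hy)).comp y ih
    have he : chi α (n + 1) = q α ∘ chi α n := by
      funext z; exact chi_succ n z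
    rw [he]
    refine h.congr_deriv ?_
    rw [dchi, dchi, Finset.prod_range_succ _ n, chi_succ, mul_comm]

lemma dchi_pos (hα : 0 < α) (n : ℕ) {y : ℝ} (hy : 0 < y) : 0 < dchi α n y :=
  Finset.prod_pos fun _ _ => inv_pos.2
    (zero_lt_one.trans_le (one_le_dT hα (chi_pos hα _ hy).le))

lemma dchi_anti (hα : 0 < α) (n : ℕ) {y z : ℝ} (hy : 0 < y) (hyz : y ≤ z) :
    dchi α n z ≤ dchi α n y := by
  refine Finset.prod_le_prod (fun j _ => inv_nonneg.2
    (zero_le_one.trans (one_le_dT hα (chi_pos hα _ (hy.trans_le hyz)).le))) fun j _ => ?_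
  have := one_le_dT hα (chi_pos hα (j+1) hy).le
  gcongr
  exact dT_mono hα (chi_pos hα _ hy).le (chi_mono hα _ hy hyz)

lemma X_zero : X α 0 = 1 := rfl

lemma X_one (hα : 0 < α) : X α 1 = 1/2 := q_one hα

lemma X_succ (n : ℕ) : X α (n + 1) = q α (X α n) := chi_succ n 1

lemma X_pos (hα : 0 < α) (n : ℕ) : 0 < X α n := chi_pos hα n one_pos

lemma chi_half (hα : 0 < α) (n : ℕ) : chi α n (1/2) = X α (n + 1) := by
  rw [X, chi_succ', q_one hα]

lemma chi_X (n k : ℕ) : chi α n (X α k) = X α (n + k) := by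
  rw [X, X, chi, chi, chi, Function.iterate_add_apply]

lemma T0_X (hα : 0 < α) (n : ℕ) : T0 α (X α (n + 1)) = X α n := by
  rw [X_succ, T0_q hα (X_pos hα n).le]

/-- The defining recursion of the preimages, in difference form. -/
lemma X_sub (hα : 0 < α) (n : ℕ) : X α n - X α (n + 1) = 2 ^ α * X α (n + 1) ^ (1 + α) := by
  have h := T0_X hα n
  have hp := X_pos hα (n + 1)
  rw [← h, T0, rpow_add hp, rpow_one]
  ring

lemma X_succ_lt (hα : 0 < α) (n : ℕ) : X α (n + 1) < X α n := by
  have := X_sub hα n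
  have : 0 < 2 ^ α * X α (n + 1) ^ (1 + α) := by
    have := X_pos hα (n + 1)
    positivity
  linarith

lemma X_anti (hα : 0 < α) : StrictAnti (X α) := strictAnti_nat_of_succ_lt (X_succ_lt hα)

lemma tendsto_X (hα : 0 < α) : Tendsto (X α) atTop (𝓝 0) := by
  have hl := tendsto_atTop_ciInf (X_anti hα).antitone
    ⟨0, by rintro _ ⟨n, rfl⟩; exact (X_pos hα n).le⟩
  set l := ⨅ i, X α i
  have hl0 : 0 ≤ l := ge_of_tendsto' hl fun n => (X_pos hα n).le
  have h1 : Tendsto (fun n => T0 α (X α (n + 1))) atTop (𝓝 (T0 α l)) :=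
    ((continuous_T0 hα).tendsto l).comp (hl.comp (tendsto_add_atTop_nat 1))
  simp_rw [T0_X hα] at h1
  have h2 : T0 α l = l := tendsto_nhds_unique h1 hl
  rcases hl0.eq_or_lt with h | h
  · rwa [← h] at hl
  · unfold T0 at h2
    have : 0 < 2 ^ α * l ^ α := by positivity
    nlinarith

/-- `n x_n^α → 1/(α 2^α)`, written for the inverse. -/
lemma tendsto_X_rpow (hα : 0 < α) :
    Tendsto (fun n : ℕ => (X α n ^ α)⁻¹ / n) atTop (𝓝 (α * 2 ^ α)) := by
  set z : ℕ → ℝ := fun n => (X α n ^ α)⁻¹ with hz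
  have hzpos : ∀ n, 0 < z n := fun n => by
    have := X_pos hα n
    simp only [hz]; positivity
  -- `w ↦ (1 - (1 + 2^α w)^(-α)) / w` tends to `α 2^α` at `0`, being a difference quotient
  have hd : HasDerivAt (fun w : ℝ => (1 + 2 ^ α * w) ^ (-α)) (-(α * 2 ^ α)) 0 := by
    have h1 : HasDerivAt (fun w : ℝ => 1 + 2 ^ α * w) (2 ^ α) 0 := by
      simpa using ((hasDerivAt_id (0:ℝ)).const_mul ((2:ℝ) ^ α)).const_add 1
    have h2 := h1.rpow_const (p := -α) (Or.inl (by norm_num))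
    refine h2.congr_deriv ?_
    simp; ring
  have hw : Tendsto (fun n => X α (n + 1) ^ α) atTop (𝓝[≠] 0) := by
    rw [tendsto_nhdsWithin_iff]
    refine ⟨?_, Eventually.of_forall fun n => (rpow_pos_of_pos (X_pos hα _) _).ne'⟩
    have := ((tendsto_X hα).comp (tendsto_add_atTop_nat 1)).rpow_const (p := α) (Or.inr hα.le)
    simpa [zero_rpow hα.ne'] using this
  have hs := (hasDerivAt_iff_tendsto_slope.1 hd).comp hw
  have hdiff : Tendsto (fun n => z (n + 1) - z n) atTop (𝓝 (α * 2 ^ α)) := by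
    have := hs.neg
    rw [neg_neg] at this
    refine this.congr fun n => ?_
    have hp := X_pos hα (n + 1)
    have hpp : 0 < X α (n + 1) ^ α := rpow_pos_of_pos hp _
    simp only [Function.comp, slope_def_field, hz]
    rw [← T0_X hα n, T0, mul_rpow hp.le (by positivity), mul_inv, rpow_neg (by positivity)]
    simp only [mul_zero, add_zero, one_rpow, sub_zero]
    field_simp
    ring
  have hc := hdiff.cesaro
  have hsum : ∀ n : ℕ, ∑ i ∈ Finset.range n, (z (i + 1) - z i) = z n - z 0 :=
    fun n => Finset.sum_range_sub z n
  simp_rw [hsum] at hc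
  have h0 : Tendsto (fun n : ℕ => (n:ℝ)⁻¹ * z 0) atTop (𝓝 0) := by
    simpa using (tendsto_inv_atTop_nhds_zero_nat (𝕜 := ℝ)).mul_const (z 0)
  have := hc.add h0
  rw [add_zero] at this
  refine this.congr fun n => ?_
  ring

lemma X_rpow_le (hα : 0 < α) : ∃ C > 0, ∀ n : ℕ, X α n ^ α ≤ C / (n + 1) := by
  have h := tendsto_X_rpow hα
  have hpos : 0 < α * 2 ^ α := by positivity
  have h1 : ∀ᶠ n : ℕ in atTop, X α n ^ α * (n + 1) ≤ 4 / (α * 2 ^ α) := by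
    filter_upwards [h.eventually (lt_mem_nhds (half_lt_self hpos)), eventually_ge_atTop 1]
      with n hn hn1
    have hn0 : (1:ℝ) ≤ n := by exact_mod_cast hn1
    have hp : 0 < X α n ^ α := rpow_pos_of_pos (X_pos hα n) _
    rw [lt_div_iff₀ (by linarith), lt_inv_comm₀ (by positivity) hp] at hn
    rw [mul_comm]
    calc ((n:ℝ) + 1) * X α n ^ α ≤ (2 * n) * (α * 2 ^ α / 2 * n)⁻¹ := by
          gcongr; linarith
      _ = 4 / (α * 2 ^ α) := by field_simp; norm_num
  obtain ⟨N, hN⟩ := eventually_atTop.1 h1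
  refine ⟨max (4 / (α * 2 ^ α)) (N + 1), by positivity, fun n => ?_⟩
  rw [le_div_iff₀ (by positivity)]
  rcases le_total N n with hn | hn
  · exact (hN n hn).trans (le_max_left _ _)
  · refine le_trans ?_ (le_max_right _ _)
    have hx : X α n ≤ 1 := (X_anti hα).antitone (Nat.zero_le n)
    have h1 : X α n ^ α ≤ 1 := rpow_le_one (X_pos hα n).le hx hα.le
    have : (n:ℝ) ≤ N := by exact_mod_cast hn
    have hp : 0 < X α n ^ α := rpow_pos_of_pos (X_pos hα n) _
    nlinarith

/-- By the mean value theorem and monotonicity of `dchi`, the derivative at `1/2` is at most the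
slope of `chi` over `[X 2, X 1]`. -/
lemma dchi_half_le (hα : 0 < α) (n : ℕ) :
    dchi α n (1/2) ≤ 2 ^ α * X α (n + 2) ^ (1 + α) / (X α 1 - X α 2) := by
  have h21 : X α 2 < X α 1 := X_succ_lt hα 1
  obtain ⟨c, hc, hce⟩ := exists_hasDerivAt_eq_slope (chi α n) (dchi α n) h21
    (fun x hx => (hasDerivAt_chi hα n ((X_pos hα 2).trans_le hx.1)).continuousAt.continuousWithinAt)
    (fun x hx => hasDerivAt_chi hα n ((X_pos hα 2).trans hx.1))
  rw [chi_X, chi_X, X_sub hα (n + 1)] at hce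
  have := dchi_anti hα n ((X_pos hα 2).trans hc.1) (hc.2.le)
  rw [X_one hα] at this
  rw [← hce]
  exact this

lemma dchi_le_half (hα : 0 < α) (n : ℕ) {y : ℝ} (hy : 1/2 ≤ y) : dchi α n y ≤ dchi α n (1/2) :=
  dchi_anti hα n (by norm_num) hy

/-- On `[1/2, ∞)` the map `chi α n` is Lipschitz with the constant `dchi α n (1/2)`. -/
lemma chi_lip_half (hα : 0 < α) (n : ℕ) {y z : ℝ} (hy : 1/2 ≤ y) (hz : 1/2 ≤ z) :
    |chi α n y - chi α n z| ≤ dchi α n (1/2) * |y - z| := by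
  refine (convex_Ici (1/2:ℝ)).norm_image_sub_le_of_norm_hasDerivWithin_le (f := chi α n)
    (f' := dchi α n) (fun x hx => (hasDerivAt_chi hα n ?_).hasDerivWithinAt) ?_ hz hy
  · exact lt_of_lt_of_le (by norm_num) hx
  · intro x hx
    rw [Real.norm_of_nonneg (dchi_pos hα n (lt_of_lt_of_le (by norm_num) hx)).le]
    exact dchi_le_half hα n hx

lemma abs_rpow_sub_le (hα : 0 < α) (hα1 : α < 1) {c u v : ℝ} (hc : 0 < c) (hu : c ≤ u)
    (hv : c ≤ v) : |u ^ α - v ^ α| ≤ α * c ^ (α - 1) * |u - v| := by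
  refine (convex_Ici c).norm_image_sub_le_of_norm_hasDerivWithin_le (f := fun x : ℝ => x ^ α)
    (f' := fun x => α * x ^ (α - 1)) (fun x hx => (hasDerivAt_rpow_const
      (Or.inl (hc.trans_le hx).ne')).hasDerivWithinAt) ?_ hv hu
  intro x hx
  have hx0 : 0 < x := hc.trans_le hx
  rw [Real.norm_of_nonneg (by positivity)]
  have := rpow_le_rpow_of_nonpos hc hx (by linarith : α - 1 ≤ 0)
  gcongr

/-- Polynomial decay of the size of the `n`-th branch. -/
lemma dchi_decay (hα : 0 < α) :
    ∃ K > 0, ∀ n : ℕ, dchi α n (1/2) ≤ K * X α (n + 2) ^ (1 + α) := by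
  have h21 : 0 < X α 1 - X α 2 := sub_pos.2 (X_succ_lt hα 1)
  refine ⟨2 ^ α / (X α 1 - X α 2), by positivity, fun n => (dchi_half_le hα n).trans_eq ?_⟩
  ring

lemma summable_dchi (hα : 0 < α) (hα1 : α < 1) :
    Summable fun n : ℕ => ((n:ℝ) + 1) * dchi α n (1/2) := by
  obtain ⟨K, hK, hd⟩ := dchi_decay hα
  obtain ⟨C, hC, hx⟩ := X_rpow_le hα
  have hp : 1 < 1 / α := by rw [lt_div_iff₀ hα]; linarith
  have hs : Summable fun n : ℕ => (K * C ^ (1 + 1/α)) * (1 / |(n:ℝ) + 1| ^ (1/α)) :=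
    ((Real.summable_one_div_nat_add_rpow 1 (1/α)).2 hp).mul_left _
  refine Summable.of_nonneg_of_le (fun n => ?_) (fun n => ?_) hs
  · have := dchi_pos hα n (show (0:ℝ) < 1/2 by norm_num)
    positivity
  · have hn : (0:ℝ) < (n:ℝ) + 1 := by positivity
    have h1 : X α (n + 2) ^ (1 + α) ≤ (C / (n + 1)) ^ (1 + 1/α) := by
      have e : X α (n + 2) ^ (1 + α) = (X α (n + 2) ^ α) ^ (1 + 1/α) := by
        rw [← rpow_mul (X_pos hα _).le]; congr 1; field_simp; ring
      rw [e]
      have h2 : X α (n + 2) ^ α ≤ C / (n + 1) := by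
        refine (hx (n + 2)).trans ?_
        push_cast
        gcongr
        linarith
      have := (X_pos hα (n + 2)).le
      gcongr
    calc ((n:ℝ) + 1) * dchi α n (1/2)
        ≤ (n + 1) * (K * (C / (n + 1)) ^ (1 + 1/α)) := by
          gcongr
          exact (hd n).trans (by gcongr)
      _ = _ := by
          rw [abs_of_pos hn, div_rpow hC.le hn.le, rpow_add hn, rpow_one]
          field_simp

/-- Bounded distortion of the inverse branches, with a uniform Lipschitz constant. -/
lemma dchi_distortion (hα : 0 < α) (hα1 : α < 1) :
    ∃ D > 0, ∀ n : ℕ, ∀ y z : ℝ, 1/2 ≤ y → 1/2 ≤ z →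
      dchi α n y ≤ rexp (D * |y - z|) * dchi α n z := by
  obtain ⟨K, hK, hd⟩ := dchi_decay hα
  obtain ⟨C, hC, hx⟩ := X_rpow_le hα
  set c : ℕ → ℝ := fun j => (1 + α) * 2 ^ α * (α * K * (C / (j + 1)) ^ 2) with hc
  have hc0 : ∀ j, 0 ≤ c j := fun j => by simp only [hc]; positivity
  have hs : Summable c := by
    have h := ((Real.summable_one_div_nat_add_rpow 1 2).2 one_lt_two).mul_left
      ((1 + α) * 2 ^ α * (α * K * C ^ 2))
    refine h.congr fun j => ?_
    simp only [hc, rpow_two, sq_abs, div_pow]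
    ring
  -- one factor of the derivative of `chi`
  have hfac : ∀ j : ℕ, ∀ y z : ℝ, 1/2 ≤ y → 1/2 ≤ z →
      (dT α (chi α (j + 1) y))⁻¹ ≤ rexp (c j * |y - z|) * (dT α (chi α (j + 1) z))⁻¹ := by
    intro j y z hy hz
    have hy0 : 0 < y := by linarith
    have hz0 : 0 < z := by linarith
    have hXp := X_pos hα (j + 2)
    have hcy : X α (j + 2) ≤ chi α (j + 1) y := by
      rw [← chi_half hα]; exact chi_mono hα _ (by norm_num) hy
    have hcz : X α (j + 2) ≤ chi α (j + 1) z := by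
      rw [← chi_half hα]; exact chi_mono hα _ (by norm_num) hz
    have h1 : |chi α (j + 1) y ^ α - chi α (j + 1) z ^ α| ≤
        α * K * (C / (j + 1)) ^ 2 * |y - z| := by
      refine (abs_rpow_sub_le hα hα1 hXp hcy hcz).trans ?_
      have h2 : dchi α (j + 1) (1/2) ≤ K * X α (j + 2) ^ (1 + α) := by
        refine (hd (j + 1)).trans ?_
        have := (X_pos hα (j + 1 + 2)).le
        have := (X_succ_lt hα (j + 2)).le
        gcongr
      have h3 : X α (j + 2) ^ (α - 1) * X α (j + 2) ^ (1 + α) = (X α (j + 2) ^ α) ^ 2 := by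
        rw [← rpow_add hXp, ← rpow_natCast, ← rpow_mul hXp.le]; congr 1; push_cast; ring
      have h4 : X α (j + 2) ^ α ≤ C / (j + 1) := by
        refine (hx (j + 2)).trans ?_
        push_cast
        gcongr
        linarith
      have h5 := chi_lip_half hα (j + 1) hy hz
      calc α * X α (j + 2) ^ (α - 1) * |chi α (j + 1) y - chi α (j + 1) z|
          ≤ α * X α (j + 2) ^ (α - 1) * (K * X α (j + 2) ^ (1 + α) * |y - z|) := by
            gcongr
            exact h5.trans (by gcongr)
        _ = α * K * (X α (j + 2) ^ α) ^ 2 * |y - z| := by rw [← h3]; ring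
        _ ≤ _ := by gcongr
    have hdy := one_le_dT hα (chi_pos hα (j + 1) hy0).le
    have hdz := one_le_dT hα (chi_pos hα (j + 1) hz0).le
    have h6 : dT α (chi α (j + 1) z) ≤ dT α (chi α (j + 1) y) + c j * |y - z| := by
      have h7 := (abs_le.1 h1).1
      have : (0:ℝ) ≤ (1 + α) * 2 ^ α := by positivity
      have h8 := mul_le_mul_of_nonneg_left h7 this
      simp only [dT, hc]
      linarith
    have h9 : 1 + c j * |y - z| ≤ rexp (c j * |y - z|) := by
      linarith [add_one_le_exp (c j * |y - z|)]
    have h10 : 0 ≤ c j * |y - z| := mul_nonneg (hc0 j) (abs_nonneg _)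
    rw [inv_eq_one_div, ← div_eq_mul_inv, div_le_div_iff₀ (by linarith) (by linarith), one_mul]
    calc dT α (chi α (j + 1) z) ≤ dT α (chi α (j + 1) y) + c j * |y - z| := h6
      _ ≤ (1 + c j * |y - z|) * dT α (chi α (j + 1) y) := by nlinarith
      _ ≤ _ := by gcongr
  refine ⟨∑' j, c j + 1, add_pos_of_nonneg_of_pos (tsum_nonneg hc0) one_pos, fun n y z hy hz => ?_⟩
  have hy0 : 0 < y := by linarith
  have hz0 : 0 < z := by linarith
  calc dchi α n y ≤ ∏ j ∈ Finset.range n,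
        (rexp (c j * |y - z|) * (dT α (chi α (j + 1) z))⁻¹) :=
        Finset.prod_le_prod (fun j _ => inv_nonneg.2
          (zero_le_one.trans (one_le_dT hα (chi_pos hα _ hy0).le))) fun j _ => hfac j y z hy hz
    _ = rexp ((∑ j ∈ Finset.range n, c j) * |y - z|) * dchi α n z := by
        rw [Finset.prod_mul_distrib, ← Real.exp_sum, Finset.sum_mul, dchi]
    _ ≤ _ := by
        have h1 := hs.sum_le_tsum (Finset.range n) fun j _ => hc0 j
        have h2 := (dchi_pos hα n hz0).le
        gcongr
        linarith

end LSV

namespace LSV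

/-! ### Transfer operators of full-branched expanding systems on `[1/2, 1]` -/

/-- The inducing interval. -/
abbrev Y : Set ℝ := Set.Icc (1/2) 1

/-- The inverse branches `ψ n` of a full-branched, uniformly expanding interval map of `[1/2, 1]`
whose Jacobians `J n` have bounded distortion and a summable first moment. The field `integ` says
that the associated transfer operator preserves Lebesgue integrals. -/
structure Sys where
  /-- The Hölder exponent. -/
  r : ℝ
  /-- The inverse branches. -/
  ψ : ℕ → ℝ → ℝ
  /-- The Jacobians of the inverse branches. -/
  J : ℕ → ℝ → ℝ
  /-- Upper bounds of the Jacobians. -/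
  j : ℕ → ℝ
  /-- The distortion constant. -/
  D : ℝ
  r_pos : 0 < r
  r_le : r ≤ 1
  D_pos : 0 < D
  ψ_mem : ∀ n, ∀ y ∈ Y, ψ n y ∈ Y
  ψ_contr : ∀ n, ∀ y ∈ Y, ∀ z ∈ Y, |ψ n y - ψ n z| ≤ 1/2 * |y - z|
  J_pos : ∀ n, ∀ y ∈ Y, 0 < J n y
  J_le : ∀ n, ∀ y ∈ Y, J n y ≤ j n
  J_dist : ∀ n, ∀ y ∈ Y, ∀ z ∈ Y, J n y ≤ rexp (D * |y - z| ^ r) * J n z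
  summ : Summable fun n : ℕ => ((n:ℝ) + 1) * j n
  integ : ∀ u : ℝ → ℂ, ContinuousOn u Y →
    ∫ y in Y, ∑' n, J n y • u (ψ n y) = ∫ y in Y, u y

namespace Sys

variable (S : Sys)

/-- The transfer operator. -/
noncomputable def L {E : Type*} [NormedAddCommGroup E] [NormedSpace ℝ E] (u : ℝ → E) (y : ℝ) : E :=
  ∑' n, S.J n y • u (S.ψ n y)

/-- `u` has supremum and Hölder seminorm at most `K` on `[1/2, 1]`. -/
def HB {E : Type*} [NormedAddCommGroup E] (u : ℝ → E) (K : ℝ) : Prop :=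
  (∀ y ∈ Y, ‖u y‖ ≤ K) ∧ ∀ y ∈ Y, ∀ z ∈ Y, ‖u y - u z‖ ≤ K * |y - z| ^ S.r

variable {S}

lemma one_mem : (1:ℝ) ∈ Y := ⟨by norm_num, le_rfl⟩

lemma rho_nonneg (y z : ℝ) : 0 ≤ |y - z| ^ S.r := rpow_nonneg (abs_nonneg _) _

lemma rho_le {y z : ℝ} (hy : y ∈ Y) (hz : z ∈ Y) : |y - z| ^ S.r ≤ 1 := by
  refine rpow_le_one (abs_nonneg _) ?_ S.r_pos.le
  rw [abs_le]
  constructor <;> linarith [hy.1, hy.2, hz.1, hz.2]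

lemma rho_psi (n : ℕ) {y z : ℝ} (hy : y ∈ Y) (hz : z ∈ Y) :
    |S.ψ n y - S.ψ n z| ^ S.r ≤ (1/2) ^ S.r * |y - z| ^ S.r := by
  rw [← mul_rpow (by norm_num) (abs_nonneg _)]
  exact rpow_le_rpow (abs_nonneg _) (S.ψ_contr n y hy z hz) S.r_pos.le

variable (S) in
lemma theta_lt : (1/2 : ℝ) ^ S.r < 1 := rpow_lt_one (by norm_num) (by norm_num) S.r_pos

lemma rho_psi' (n : ℕ) {y z : ℝ} (hy : y ∈ Y) (hz : z ∈ Y) :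
    |S.ψ n y - S.ψ n z| ^ S.r ≤ |y - z| ^ S.r :=
  (rho_psi n hy hz).trans (mul_le_of_le_one_left (rho_nonneg y z) (theta_lt S).le)

lemma j_pos (n : ℕ) : 0 < S.j n := (S.J_pos n 1 one_mem).trans_le (S.J_le n 1 one_mem)

variable (S) in
lemma summ_j : Summable S.j := by
  refine Summable.of_nonneg_of_le (fun n => (j_pos n).le) (fun n => ?_) S.summ
  have : (0:ℝ) ≤ n := n.cast_nonneg
  nlinarith [j_pos (S := S) n]

lemma exp_sub_one_le {x : ℝ} : rexp x - 1 ≤ x * rexp x := by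
  have h := add_one_le_exp (-x)
  have h2 : rexp x * rexp (-x) = 1 := by rw [← Real.exp_add]; simp
  nlinarith [Real.exp_pos x]

lemma J_holder (n : ℕ) {y z : ℝ} (hy : y ∈ Y) (hz : z ∈ Y) :
    |S.J n y - S.J n z| ≤ S.D * rexp S.D * S.j n * |y - z| ^ S.r := by
  have key : ∀ y ∈ Y, ∀ z ∈ Y, S.J n y - S.J n z ≤ S.D * rexp S.D * S.j n * |y - z| ^ S.r := by
    intro y hy z hz
    have h1 := S.J_dist n y hy z hz
    have h2 := exp_sub_one_le (x := S.D * |y - z| ^ S.r)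
    have h3 := S.J_le n z hz
    have h4 := (S.J_pos n z hz).le
    have h5 := rho_le (S := S) hy hz
    have h0 := rho_nonneg (S := S) y z
    have h6 : rexp (S.D * |y - z| ^ S.r) ≤ rexp S.D := by
      gcongr
      exact mul_le_of_le_one_right S.D_pos.le h5
    have hD := S.D_pos
    calc S.J n y - S.J n z ≤ (rexp (S.D * |y - z| ^ S.r) - 1) * S.J n z := by linarith
      _ ≤ (S.D * |y - z| ^ S.r * rexp (S.D * |y - z| ^ S.r)) * S.J n z := by gcongr
      _ ≤ (S.D * |y - z| ^ S.r * rexp S.D) * S.j n := by gcongr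
      _ = _ := by ring
  rw [abs_le]
  constructor
  · have := key z hz y hy
    rw [abs_sub_comm] at this
    linarith
  · exact key y hy z hz

section HBlemmas
variable {E : Type*} [NormedAddCommGroup E]

lemma HB.nonneg {u : ℝ → E} {K : ℝ} (h : S.HB u K) : 0 ≤ K :=
  (norm_nonneg _).trans (h.1 1 one_mem)

lemma HB.mono {u : ℝ → E} {K K' : ℝ} (h : S.HB u K) (hK : K ≤ K') : S.HB u K' :=
  ⟨fun y hy => (h.1 y hy).trans hK, fun y hy z hz => (h.2 y hy z hz).trans
    (mul_le_mul_of_nonneg_right hK (rho_nonneg y z))⟩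

lemma HB.congr {u v : ℝ → E} {K : ℝ} (h : S.HB u K) (huv : ∀ y ∈ Y, v y = u y) : S.HB v K :=
  ⟨fun y hy => by rw [huv y hy]; exact h.1 y hy,
    fun y hy z hz => by rw [huv y hy, huv z hz]; exact h.2 y hy z hz⟩

lemma HB.add {u v : ℝ → E} {K K' : ℝ} (h : S.HB u K) (h' : S.HB v K') :
    S.HB (fun y => u y + v y) (K + K') := by
  refine ⟨fun y hy => (norm_add_le _ _).trans (add_le_add (h.1 y hy) (h'.1 y hy)),
    fun y hy z hz => ?_⟩
  rw [add_sub_add_comm, add_mul]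
  exact (norm_add_le _ _).trans (add_le_add (h.2 y hy z hz) (h'.2 y hy z hz))

lemma HB.sub {u v : ℝ → E} {K K' : ℝ} (h : S.HB u K) (h' : S.HB v K') :
    S.HB (fun y => u y - v y) (K + K') := by
  refine ⟨fun y hy => (norm_sub_le _ _).trans (add_le_add (h.1 y hy) (h'.1 y hy)),
    fun y hy z hz => ?_⟩
  rw [sub_sub_sub_comm, add_mul]
  exact (norm_sub_le _ _).trans (add_le_add (h.2 y hy z hz) (h'.2 y hy z hz))

lemma HB.const (c : E) : S.HB (fun _ => c) ‖c‖ :=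
  ⟨fun _ _ => le_rfl, fun y _ z _ => by
    simpa using mul_nonneg (norm_nonneg c) (rho_nonneg (S := S) y z)⟩

lemma HB.continuousOn {u : ℝ → E} {K : ℝ} (h : S.HB u K) : ContinuousOn u Y := by
  intro z hz
  rw [ContinuousWithinAt, tendsto_iff_norm_sub_tendsto_zero]
  have h1 : Tendsto (fun y => K * |y - z| ^ S.r) (𝓝[Y] z) (𝓝 0) := by
    have : ContinuousAt (fun y => K * |y - z| ^ S.r) z :=
      (continuous_const.mul (((continuous_id.sub continuous_const).abs).rpow_const
        fun _ => Or.inr S.r_pos.le)).continuousAt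
    have h2 := this.continuousWithinAt (s := Y)
    simpa [ContinuousWithinAt, zero_rpow S.r_pos.ne'] using h2
  refine squeeze_zero' (Eventually.of_forall fun _ => norm_nonneg _) ?_ h1
  filter_upwards [self_mem_nhdsWithin] with y hy using h.2 y hy z hz

lemma HB.integrableOn {u : ℝ → E} {K : ℝ} (h : S.HB u K) : IntegrableOn u Y :=
  h.continuousOn.integrableOn_Icc

lemma vol_Y : volume.real Y = 1/2 := by
  simp [Y, Real.volume_real_Icc]; norm_num

lemma integrableOn_constY (c : E) : IntegrableOn (fun _ : ℝ => c) Y :=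
  continuousOn_const.integrableOn_Icc

lemma norm_setIntegral_le [NormedSpace ℝ E] {u : ℝ → E} {K : ℝ} (h : ∀ y ∈ Y, ‖u y‖ ≤ K) :
    ‖∫ y in Y, u y‖ ≤ K := by
  have hK : 0 ≤ K := (norm_nonneg _).trans (h 1 one_mem)
  have := norm_setIntegral_le_of_norm_le_const (μ := volume) (s := Y) (f := u) (C := K)
    (by simp [Y]) h
  rw [vol_Y] at this
  linarith

/-- A summable family of Hölder functions can be summed. -/
lemma HB.tsum [CompleteSpace E] {F : ℕ → ℝ → E} {b : ℕ → ℝ} (hb : Summable b)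
    (h : ∀ n, S.HB (F n) (b n)) : S.HB (fun y => ∑' n, F n y) (∑' n, b n) := by
  have hs : ∀ y ∈ Y, Summable fun n => F n y := fun y hy =>
    Summable.of_norm_bounded hb fun n => (h n).1 y hy
  refine ⟨fun y hy => tsum_of_norm_bounded hb.hasSum fun n => (h n).1 y hy, fun y hy z hz => ?_⟩
  rw [← (hs y hy).tsum_sub (hs z hz), ← tsum_mul_right]
  exact tsum_of_norm_bounded (hb.mul_right _).hasSum fun n => (h n).2 y hy z hz

lemma HB.comp_psi {u : ℝ → E} {K : ℝ} (h : S.HB u K) (n : ℕ) :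
    S.HB (fun y => u (S.ψ n y)) K :=
  ⟨fun y hy => h.1 _ (S.ψ_mem n y hy), fun y hy z hz =>
    (h.2 _ (S.ψ_mem n y hy) _ (S.ψ_mem n z hz)).trans
      (mul_le_mul_of_nonneg_left (rho_psi' n hy hz) h.nonneg)⟩

variable [NormedSpace ℝ E]

lemma HB.J_smul {u : ℝ → E} {K : ℝ} (h : S.HB u K) (n : ℕ) :
    S.HB (fun y => S.J n y • u y) ((1 + S.D * rexp S.D) * S.j n * K) := by
  have hD := S.D_pos
  have hj := (j_pos (S := S) n).le
  have hK := h.nonneg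
  have hJ : ∀ y ∈ Y, ‖S.J n y‖ ≤ S.j n := fun y hy => by
    rw [Real.norm_of_nonneg (S.J_pos n y hy).le]; exact S.J_le n y hy
  refine ⟨fun y hy => ?_, fun y hy z hz => ?_⟩
  · rw [norm_smul]
    calc ‖S.J n y‖ * ‖u y‖ ≤ S.j n * K := by
          gcongr
          exacts [hJ y hy, h.1 y hy]
      _ ≤ _ := by
          have : 0 ≤ S.D * rexp S.D * (S.j n * K) := by positivity
          linarith
  · have e : S.J n y • u y - S.J n z • u z =
        S.J n y • (u y - u z) + (S.J n y - S.J n z) • u z := by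
      rw [smul_sub, sub_smul]; abel
    rw [e]
    refine (norm_add_le _ _).trans ?_
    rw [norm_smul, norm_smul]
    have h0 := rho_nonneg (S := S) y z
    calc ‖S.J n y‖ * ‖u y - u z‖ + ‖S.J n y - S.J n z‖ * ‖u z‖
        ≤ S.j n * (K * |y - z| ^ S.r) + (S.D * rexp S.D * S.j n * |y - z| ^ S.r) * K := by
          gcongr
          exacts [hJ y hy, h.2 y hy z hz, J_holder n hy hz, h.1 z hz]
      _ = _ := by ring

variable (S) in
/-- The norm of the transfer operator on Hölder functions. -/
noncomputable def CL : ℝ := ∑' n, (1 + S.D * rexp S.D) * S.j n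

lemma CL_nonneg : 0 ≤ S.CL :=
  tsum_nonneg fun n => by have := (j_pos (S := S) n).le; have := S.D_pos; positivity

lemma HB.L [CompleteSpace E] {u : ℝ → E} {K : ℝ} (h : S.HB u K) : S.HB (S.L u) (S.CL * K) := by
  have := HB.tsum (((summ_j S).mul_left (1 + S.D * rexp S.D)).mul_right K)
    fun n => (h.comp_psi n).J_smul n
  rw [tsum_mul_right] at this
  exact this

lemma HB.L_iter [CompleteSpace E] {u : ℝ → E} {K : ℝ} (h : S.HB u K) (k : ℕ) :
    S.HB (S.L^[k] u) (S.CL ^ k * K) := by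
  induction k with
  | zero => simpa using h
  | succ k ih =>
    rw [Function.iterate_succ_apply']
    exact ih.L.mono (by rw [pow_succ]; linarith)

lemma summable_L [CompleteSpace E] {u : ℝ → E} {K : ℝ} (h : ∀ y ∈ Y, ‖u y‖ ≤ K) {y : ℝ}
    (hy : y ∈ Y) : Summable fun n => S.J n y • u (S.ψ n y) := by
  refine Summable.of_norm_bounded ((summ_j S).mul_right K) fun n => ?_
  rw [norm_smul, Real.norm_of_nonneg (S.J_pos n y hy).le]
  have := (S.J_pos n y hy).le
  have := h _ (S.ψ_mem n y hy)
  exact mul_le_mul (S.J_le n y hy) this (norm_nonneg _) (j_pos n).le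

lemma L_sub [CompleteSpace E] {u v : ℝ → E} {K K' : ℝ} (hu : ∀ y ∈ Y, ‖u y‖ ≤ K)
    (hv : ∀ y ∈ Y, ‖v y‖ ≤ K') {y : ℝ}
    (hy : y ∈ Y) : S.L (fun y => u y - v y) y = S.L u y - S.L v y := by
  simp only [Sys.L, smul_sub]
  exact (summable_L hu hy).tsum_sub (summable_L hv hy)

lemma L_add [CompleteSpace E] {u v : ℝ → E} {K K' : ℝ} (hu : ∀ y ∈ Y, ‖u y‖ ≤ K)
    (hv : ∀ y ∈ Y, ‖v y‖ ≤ K') {y : ℝ}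
    (hy : y ∈ Y) : S.L (fun y => u y + v y) y = S.L u y + S.L v y := by
  simp only [Sys.L, smul_add]
  exact (summable_L hu hy).tsum_add (summable_L hv hy)

lemma L_congr {u v : ℝ → E} (h : ∀ y ∈ Y, u y = v y) {y : ℝ} (hy : y ∈ Y) :
    S.L u y = S.L v y := by
  simp only [Sys.L]
  exact tsum_congr fun n => by rw [h _ (S.ψ_mem n y hy)]

lemma L_iter_congr {u v : ℝ → E} (h : ∀ y ∈ Y, u y = v y) (k : ℕ) :
    ∀ y ∈ Y, S.L^[k] u y = S.L^[k] v y := by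
  induction k with
  | zero => exact h
  | succ k ih =>
    intro y hy
    rw [Function.iterate_succ_apply', Function.iterate_succ_apply']
    exact L_congr ih hy

lemma L_iter_sub [CompleteSpace E] {u v : ℝ → E} {K K' : ℝ} (hu : S.HB u K) (hv : S.HB v K')
    (k : ℕ) : ∀ y ∈ Y, S.L^[k] (fun y => u y - v y) y = S.L^[k] u y - S.L^[k] v y := by
  induction k with
  | zero => intro y _; rfl
  | succ k ih =>
    intro y hy
    rw [Function.iterate_succ_apply', Function.iterate_succ_apply', Function.iterate_succ_apply',
      L_congr ih hy, L_sub (hu.L_iter k).1 (hv.L_iter k).1 hy]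

lemma L_iter_add [CompleteSpace E] {u v : ℝ → E} {K K' : ℝ} (hu : S.HB u K) (hv : S.HB v K')
    (k : ℕ) : ∀ y ∈ Y, S.L^[k] (fun y => u y + v y) y = S.L^[k] u y + S.L^[k] v y := by
  induction k with
  | zero => intro y _; rfl
  | succ k ih =>
    intro y hy
    rw [Function.iterate_succ_apply', Function.iterate_succ_apply', Function.iterate_succ_apply',
      L_congr ih hy, L_add (hu.L_iter k).1 (hv.L_iter k).1 hy]

end HBlemmas

lemma L_ofReal (u : ℝ → ℝ) (y : ℝ) : S.L (fun y => (u y : ℂ)) y = ((S.L u y : ℝ) : ℂ) := by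
  simp only [Sys.L, Complex.ofReal_tsum]
  exact tsum_congr fun n => by simp

lemma L_iter_ofReal (u : ℝ → ℝ) (k : ℕ) :
    ∀ y, S.L^[k] (fun y => (u y : ℂ)) y = ((S.L^[k] u y : ℝ) : ℂ) := by
  induction k with
  | zero => intro y; rfl
  | succ k ih =>
    intro y
    rw [Function.iterate_succ_apply', Function.iterate_succ_apply', ← L_ofReal]
    congr 1
    funext z
    exact ih z

lemma integral_L (u : ℝ → ℂ) (hu : ContinuousOn u Y) :
    ∫ y in Y, S.L u y = ∫ y in Y, u y := S.integ u hu

lemma integral_L_real (u : ℝ → ℝ) (hu : ContinuousOn u Y) :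
    ∫ y in Y, S.L u y = ∫ y in Y, u y := by
  have h := S.integ (fun y => (u y : ℂ)) (Complex.continuous_ofReal.comp_continuousOn hu)
  have hof : ∫ y in Y, ((S.L u y : ℝ) : ℂ) = ∫ y in Y, (u y : ℂ) := by
    rw [← h]
    exact integral_congr_ae (Eventually.of_forall fun y => (L_ofReal u y).symm)
  rw [integral_complex_ofReal, integral_complex_ofReal] at hof
  exact_mod_cast hof

/-! ### The cone of log-Hölder densities and exponential decay -/

variable (S) in
/-- The cone of positive functions whose logarithm is Hölder with constant `A`. -/
def Cone (A : ℝ) (u : ℝ → ℝ) : Prop :=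
  (∀ y ∈ Y, 0 < u y) ∧ ∀ y ∈ Y, ∀ z ∈ Y, u y ≤ rexp (A * |y - z| ^ S.r) * u z

lemma Cone.le {A : ℝ} (hA : 0 ≤ A) {u : ℝ → ℝ} (h : S.Cone A u) {y z : ℝ} (hy : y ∈ Y)
    (hz : z ∈ Y) : u y ≤ rexp A * u z := by
  refine (h.2 y hy z hz).trans ?_
  have := (h.1 z hz).le
  gcongr
  exact mul_le_of_le_one_right hA (rho_le hy hz)

lemma Cone.hb {A : ℝ} (hA : 0 ≤ A) {u : ℝ → ℝ} (h : S.Cone A u) :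
    S.HB u ((1 + A) * rexp A * rexp A * u 1) := by
  have h1 := h.1 1 one_mem
  have hle : ∀ y ∈ Y, u y ≤ rexp A * u 1 := fun y hy => h.le hA hy one_mem
  have hA1 : 1 ≤ rexp A := one_le_exp hA
  have key : ∀ y ∈ Y, ∀ z ∈ Y, u y - u z ≤ (1 + A) * rexp A * rexp A * u 1 * |y - z| ^ S.r := by
    intro y hy z hz
    have h0 := rho_nonneg (S := S) y z
    have h2 := exp_sub_one_le (x := A * |y - z| ^ S.r)
    have h3 : rexp (A * |y - z| ^ S.r) ≤ rexp A := by
      gcongr; exact mul_le_of_le_one_right hA (rho_le hy hz)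
    have h4 := (h.1 z hz).le
    calc u y - u z ≤ (rexp (A * |y - z| ^ S.r) - 1) * u z := by linarith [h.2 y hy z hz]
      _ ≤ (A * |y - z| ^ S.r * rexp (A * |y - z| ^ S.r)) * u z := by gcongr
      _ ≤ (A * |y - z| ^ S.r * rexp A) * (rexp A * u 1) := by gcongr; exact hle z hz
      _ ≤ ((1 + A) * |y - z| ^ S.r * rexp A) * (rexp A * u 1) := by gcongr; linarith
      _ = _ := by ring
  refine ⟨fun y hy => ?_, fun y hy z hz => ?_⟩
  · rw [Real.norm_of_nonneg (h.1 y hy).le]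
    refine (hle y hy).trans ?_
    have : 1 ≤ (1 + A) * rexp A := by nlinarith
    have h5 : 0 ≤ rexp A * u 1 := by positivity
    nlinarith
  · rw [Real.norm_eq_abs, abs_le]
    constructor
    · have := key z hz y hy
      rw [abs_sub_comm] at this
      linarith
    · exact key y hy z hz

lemma Cone.ge_integral {A : ℝ} (hA : 0 ≤ A) {u : ℝ → ℝ} (h : S.Cone A u) {z : ℝ} (hz : z ∈ Y) :
    2 * rexp (-A) * ∫ y in Y, u y ≤ u z := by
  have h1 : ∫ y in Y, u y ≤ ∫ y in Y, rexp A * u z :=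
    setIntegral_mono_on (h.hb hA).integrableOn (integrableOn_constY _) measurableSet_Icc
      fun y hy => h.le hA hy hz
  rw [setIntegral_const, vol_Y, smul_eq_mul] at h1
  have h2 : rexp (-A) * rexp A = 1 := by rw [← Real.exp_add]; simp
  have h3 := mul_le_mul_of_nonneg_left h1 (Real.exp_pos (-A)).le
  have e : rexp (-A) * (1 / 2 * (rexp A * u z)) = 1 / 2 * u z := by
    linear_combination (1 / 2 * u z) * h2
  linarith

lemma Cone.le_integral {A : ℝ} (hA : 0 ≤ A) {u : ℝ → ℝ} (h : S.Cone A u) {z : ℝ} (hz : z ∈ Y) :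
    u z ≤ 2 * rexp A * ∫ y in Y, u y := by
  have h1 : ∫ y in Y, rexp (-A) * u z ≤ ∫ y in Y, u y :=
    setIntegral_mono_on (integrableOn_constY _) (h.hb hA).integrableOn measurableSet_Icc
      fun y hy => by
        have := mul_le_mul_of_nonneg_left (h.le hA hz hy) (Real.exp_pos (-A)).le
        rwa [← mul_assoc, ← Real.exp_add, neg_add_cancel, Real.exp_zero, one_mul] at this
  rw [setIntegral_const, vol_Y, smul_eq_mul] at h1
  have h2 : rexp A * rexp (-A) = 1 := by rw [← Real.exp_add]; simp
  have h3 := mul_le_mul_of_nonneg_left h1 (Real.exp_pos A).le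
  have e : rexp A * (1 / 2 * (rexp (-A) * u z)) = 1 / 2 * u z := by
    linear_combination (1 / 2 * u z) * h2
  linarith

lemma Cone.L {A : ℝ} (hA : 0 ≤ A) {u : ℝ → ℝ} (h : S.Cone A u) :
    S.Cone ((1/2) ^ S.r * A + S.D) (S.L u) := by
  have hs := fun y (hy : y ∈ Y) => summable_L (S := S) (h.hb hA).1 hy
  refine ⟨fun y hy => ?_, fun y hy z hz => ?_⟩
  · exact (hs y hy).tsum_pos (fun n => (mul_pos (S.J_pos n y hy)
      (h.1 _ (S.ψ_mem n y hy))).le) 0 (mul_pos (S.J_pos 0 y hy) (h.1 _ (S.ψ_mem 0 y hy)))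
  · simp only [Sys.L]
    rw [← tsum_mul_left]
    refine (hs y hy).tsum_le_tsum (fun n => ?_) ((hs z hz).mul_left _)
    simp only [smul_eq_mul]
    have h1 := S.J_dist n y hy z hz
    have h2 := h.2 _ (S.ψ_mem n y hy) _ (S.ψ_mem n z hz)
    have h3 : u (S.ψ n y) ≤ rexp (A * ((1/2) ^ S.r * |y - z| ^ S.r)) * u (S.ψ n z) := by
      refine h2.trans ?_
      have := (h.1 _ (S.ψ_mem n z hz)).le
      gcongr
      exact rho_psi n hy hz
    have h4 := (S.J_pos n z hz).le
    have h5 := (h.1 _ (S.ψ_mem n y hy)).le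
    calc S.J n y * u (S.ψ n y) ≤ (rexp (S.D * |y - z| ^ S.r) * S.J n z) *
          (rexp (A * ((1/2) ^ S.r * |y - z| ^ S.r)) * u (S.ψ n z)) := by gcongr
      _ = _ := by
          rw [show ((1/2) ^ S.r * A + S.D) * |y - z| ^ S.r =
            S.D * |y - z| ^ S.r + A * ((1/2) ^ S.r * |y - z| ^ S.r) by ring, Real.exp_add]
          ring

lemma Cone.mono {A A' : ℝ} (hA : A ≤ A') {u : ℝ → ℝ} (h : S.Cone A u) : S.Cone A' u := by
  refine ⟨h.1, fun y hy z hz => (h.2 y hy z hz).trans ?_⟩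
  have := (h.1 z hz).le
  have := rho_nonneg (S := S) y z
  gcongr

/-- A density in a smaller cone stays in the larger cone after a definite part of its mass,
spread uniformly, is removed. -/
lemma Cone.sub_const {A A' c : ℝ} (hA' : 0 ≤ A') (hA : A' < A) {u : ℝ → ℝ} (h : S.Cone A' u)
    (hc : ∫ y in Y, u y = c) (hc0 : 0 < c) :
    S.Cone A (fun y => u y - rexp (-A) * ((A - A') / A * rexp (-A)) * c) := by
  have hAp : 0 < A := hA'.trans_lt hA
  have hd : 0 < A - A' := sub_pos.2 hA
  have he : rexp (-A) ≤ 1 := exp_le_one_iff.2 (by linarith)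
  have he0 := Real.exp_pos (-A)
  have hlow : ∀ z ∈ Y, 2 * rexp (-A) * c ≤ u z := fun z hz => by
    refine le_trans ?_ (h.ge_integral hA' hz)
    rw [hc]
    gcongr
  set κ := rexp (-A) * ((A - A') / A * rexp (-A)) with hκ
  have hκ0 : 0 ≤ κ := by positivity
  have hκ1 : κ ≤ rexp (-A) := by
    have : (A - A') / A ≤ 1 := by rw [div_le_one hAp]; linarith
    have : (A - A') / A * rexp (-A) ≤ 1 := mul_le_one₀ this he0.le he
    exact mul_le_of_le_one_right he0.le this
  refine ⟨fun y hy => ?_, fun y hy z hz => ?_⟩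
  · have h1 := hlow y hy
    have : κ * c ≤ rexp (-A) * c := by gcongr
    have : 0 < rexp (-A) * c := by positivity
    linarith
  · set ρ := |y - z| ^ S.r with hρ
    have hρ0 : 0 ≤ ρ := rho_nonneg y z
    have hρ1 : ρ ≤ 1 := rho_le hy hz
    have h1 := h.2 y hy z hz
    have h2 : (A - A') * ρ ≤ rexp (A * ρ) - rexp (A' * ρ) := by
      have e : rexp (A * ρ) = rexp (A' * ρ) * rexp ((A - A') * ρ) := by
        rw [← Real.exp_add]; ring_nf
      have h3 := add_one_le_exp ((A - A') * ρ)
      have h4 : 1 ≤ rexp (A' * ρ) := one_le_exp (by positivity)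
      have h5 : 0 ≤ (A - A') * ρ := by positivity
      rw [e]
      nlinarith
    have h3 : rexp (A * ρ) - 1 ≤ A * ρ * rexp A := by
      refine exp_sub_one_le.trans ?_
      gcongr
      exact mul_le_of_le_one_right hAp.le hρ1
    have h6 : rexp (-A) * rexp A = 1 := by rw [← Real.exp_add]; simp
    have h4 : κ * c * (rexp (A * ρ) - 1) ≤ u z * (rexp (A * ρ) - rexp (A' * ρ)) := by
      calc κ * c * (rexp (A * ρ) - 1) ≤ κ * c * (A * ρ * rexp A) := by gcongr
        _ = rexp (-A) * c * ((A - A') * ρ) * (rexp (-A) * rexp A) := by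
            rw [hκ]; field_simp
        _ = rexp (-A) * c * ((A - A') * ρ) := by rw [h6, mul_one]
        _ ≤ u z * ((A - A') * ρ) := by
            gcongr
            have := hlow z hz
            have : 0 ≤ rexp (-A) * c := by positivity
            linarith
        _ ≤ _ := by
            have := (h.1 z hz).le
            gcongr
    linarith

variable (S) in
/-- The aperture of the invariant cone. -/
noncomputable def A₀ : ℝ := 2 * S.D / (1 - (1/2) ^ S.r)

lemma A₀_pos : 0 < S.A₀ := div_pos (by linarith [S.D_pos]) (by linarith [theta_lt S])

variable (S) in
/-- The aperture of the image of the invariant cone. -/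
noncomputable def A₁ : ℝ := (1/2) ^ S.r * S.A₀ + S.D

lemma A₁_nonneg : 0 ≤ S.A₁ := by
  have := A₀_pos (S := S); have := S.D_pos
  unfold A₁; positivity

lemma A₁_lt : S.A₁ < S.A₀ := by
  have h : S.A₀ * (1 - (1/2) ^ S.r) = 2 * S.D :=
    div_mul_cancel₀ _ (by linarith [theta_lt S])
  unfold A₁
  linarith [S.D_pos]

variable (S) in
/-- The rate of convergence to equilibrium. -/
noncomputable def η : ℝ :=
  1 - rexp (-S.A₀) * ((S.A₀ - S.A₁) / S.A₀ * rexp (-S.A₀)) / 2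

lemma η_lt_one : S.η < 1 := by
  have := A₀_pos (S := S)
  have : 0 < S.A₀ - S.A₁ := sub_pos.2 A₁_lt
  have : 0 < rexp (-S.A₀) * ((S.A₀ - S.A₁) / S.A₀ * rexp (-S.A₀)) / 2 := by positivity
  unfold η
  linarith

lemma η_pos : 0 < S.η := by
  have hA := A₀_pos (S := S)
  have he : rexp (-S.A₀) ≤ 1 := exp_le_one_iff.2 (by linarith)
  have he0 := Real.exp_pos (-S.A₀)
  have : (S.A₀ - S.A₁) / S.A₀ ≤ 1 := by
    rw [div_le_one hA]; linarith [A₁_nonneg (S := S)]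
  have h2 : (S.A₀ - S.A₁) / S.A₀ * rexp (-S.A₀) ≤ 1 := mul_le_one₀ this he0.le he
  have h0 : 0 ≤ (S.A₀ - S.A₁) / S.A₀ * rexp (-S.A₀) := by
    have : 0 ≤ S.A₀ - S.A₁ := (sub_pos.2 A₁_lt).le
    positivity
  have := mul_le_one₀ he h0 h2
  unfold η
  linarith

lemma Cone.L₀ {u : ℝ → ℝ} (h : S.Cone S.A₀ u) : S.Cone S.A₀ (S.L u) :=
  (h.L A₀_pos.le).mono A₁_lt.le

/-- One step of coupling: two densities of equal mass share a definite proportion of mass after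
one application of the transfer operator. -/
lemma couple_step {u w : ℝ → ℝ} {c : ℝ} (hc : 0 < c) (hu : S.Cone S.A₀ u) (hw : S.Cone S.A₀ w)
    (hcu : ∫ y in Y, u y = c) (hcw : ∫ y in Y, w y = c) :
    ∃ u' w' : ℝ → ℝ, S.Cone S.A₀ u' ∧ S.Cone S.A₀ w' ∧ ∫ y in Y, u' y = S.η * c ∧
      ∫ y in Y, w' y = S.η * c ∧ ∀ y ∈ Y, S.L u y - S.L w y = u' y - w' y := by
  have key : ∀ u : ℝ → ℝ, S.Cone S.A₀ u → ∫ y in Y, u y = c →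
      S.Cone S.A₀ (fun y => S.L u y -
        rexp (-S.A₀) * ((S.A₀ - S.A₁) / S.A₀ * rexp (-S.A₀)) * c) ∧
      ∫ y in Y, (S.L u y -
        rexp (-S.A₀) * ((S.A₀ - S.A₁) / S.A₀ * rexp (-S.A₀)) * c) = S.η * c := by
    intro u hu hcu
    have h1 := hu.L A₀_pos.le
    have h2 : ∫ y in Y, S.L u y = c := by
      rw [integral_L_real u (hu.hb A₀_pos.le).continuousOn, hcu]
    refine ⟨Cone.sub_const A₁_nonneg A₁_lt h1 h2 hc, ?_⟩
    rw [integral_sub (hu.hb A₀_pos.le).L.integrableOn (integrableOn_constY _), h2, setIntegral_const, vol_Y,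
      smul_eq_mul, η]
    ring
  exact ⟨_, _, (key u hu hcu).1, (key w hw hcw).1, (key u hu hcu).2, (key w hw hcw).2,
    fun y _ => by ring⟩

/-- Iterating `couple_step`: after `k` steps only the mass `η ^ k * c` is left uncoupled. -/
lemma couple {u w : ℝ → ℝ} {c : ℝ} (hc : 0 < c) (hu : S.Cone S.A₀ u) (hw : S.Cone S.A₀ w)
    (hcu : ∫ y in Y, u y = c) (hcw : ∫ y in Y, w y = c) (k : ℕ) :
    ∃ u' w' : ℝ → ℝ, S.Cone S.A₀ u' ∧ S.Cone S.A₀ w' ∧ ∫ y in Y, u' y = S.η ^ k * c ∧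
      ∫ y in Y, w' y = S.η ^ k * c ∧ ∀ y ∈ Y, S.L^[k] u y - S.L^[k] w y = u' y - w' y := by
  induction k with
  | zero => exact ⟨u, w, hu, hw, by simpa using hcu, by simpa using hcw, fun _ _ => rfl⟩
  | succ k ih =>
    obtain ⟨u', w', hu', hw', hcu', hcw', h⟩ := ih
    have hη := η_pos (S := S)
    obtain ⟨u₂, w₂, hu₂, hw₂, hcu₂, hcw₂, h₂⟩ :=
      couple_step (mul_pos (pow_pos hη k) hc) hu' hw' hcu' hcw'
    refine ⟨u₂, w₂, hu₂, hw₂, by rw [hcu₂]; ring, by rw [hcw₂]; ring, fun y hy => ?_⟩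
    rw [← h₂ y hy, ← L_sub (hu'.hb A₀_pos.le).1 (hw'.hb A₀_pos.le).1 hy,
      ← L_congr h hy, L_sub ((hu.hb A₀_pos.le).L_iter k).1 ((hw.hb A₀_pos.le).L_iter k).1 hy,
      Function.iterate_succ_apply', Function.iterate_succ_apply']

variable (S) in
/-- A bound for the Hölder norm of a probability density in the invariant cone. -/
noncomputable def CA : ℝ := (1 + S.A₀) * rexp S.A₀ * rexp S.A₀ * (2 * rexp S.A₀)

lemma CA_nonneg : 0 ≤ S.CA := by
  have := A₀_pos (S := S)
  unfold CA; positivity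

lemma Cone.hb₀ {u : ℝ → ℝ} (h : S.Cone S.A₀ u) : S.HB u (S.CA * ∫ y in Y, u y) := by
  refine (h.hb A₀_pos.le).mono ?_
  have h1 := h.le_integral A₀_pos.le one_mem
  have := A₀_pos (S := S)
  unfold CA
  calc (1 + S.A₀) * rexp S.A₀ * rexp S.A₀ * u 1 ≤
      (1 + S.A₀) * rexp S.A₀ * rexp S.A₀ * (2 * rexp S.A₀ * ∫ y in Y, u y) := by gcongr
    _ = _ := by ring

variable (S) in
/-- The constant in the exponential decay estimate for real functions. -/
noncomputable def CD : ℝ := S.CA * (1 + 1 / S.A₀)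

lemma CD_nonneg : 0 ≤ S.CD := by
  have := A₀_pos (S := S); have := CA_nonneg (S := S)
  unfold CD; positivity

/-- Adding a constant puts a mean-zero Hölder function into the invariant cone, where it is coupled
with that constant. -/
lemma decay_real {v : ℝ → ℝ} {K : ℝ} (hv : S.HB v K) (h0 : ∫ y in Y, v y = 0) (k : ℕ) :
    S.HB (S.L^[k] v) (S.CD * S.η ^ k * K) := by
  have hA := A₀_pos (S := S)
  have hη := η_pos (S := S)
  rcases hv.nonneg.eq_or_lt with hK | hK
  · -- the function vanishes on `Y`
    have hz : ∀ y ∈ Y, v y = 0 := fun y hy => by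
      have := hv.1 y hy
      rw [← hK] at this
      exact norm_le_zero_iff.1 this
    have h1 := L_iter_congr (S := S) (v := fun _ => (0:ℝ)) hz k
    have h2 : S.L^[k] (fun _ => (0:ℝ)) = fun _ => 0 :=
      Function.iterate_fixed (by funext y; simp [Sys.L]) k
    rw [h2] at h1
    rw [← hK, mul_zero]
    have h3 := HB.const (S := S) (0:ℝ)
    rw [norm_zero] at h3
    exact h3.congr h1
  · set M := K * (1 + 1 / S.A₀) with hM
    have hM0 : 0 < M := by positivity
    have hMK : S.A₀ * (M - K) = K := by rw [hM]; field_simp; ring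
    have hMK' : K < M := by
      have : 0 < M - K := by
        by_contra h
        have := mul_nonpos_of_nonneg_of_nonpos hA.le (not_lt.1 h)
        linarith
      linarith
    have hbd : ∀ y ∈ Y, M - K ≤ v y + M := fun y hy => by
      have := (abs_le.1 (hv.1 y hy)).1
      linarith
    have hu : S.Cone S.A₀ (fun y => v y + M) := by
      refine ⟨fun y hy => by linarith [hbd y hy], fun y hy z hz => ?_⟩
      have h1 := (abs_le.1 (hv.2 y hy z hz)).2
      have h2 := add_one_le_exp (S.A₀ * |y - z| ^ S.r)
      have h3 := hbd z hz
      have h4 := rho_nonneg (S := S) y z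
      have h5 : 0 ≤ v z + M := by linarith
      calc v y + M ≤ v z + M + K * |y - z| ^ S.r := by linarith
        _ = v z + M + S.A₀ * |y - z| ^ S.r * (M - K) := by
            linear_combination (-|y - z| ^ S.r) * hMK
        _ ≤ v z + M + S.A₀ * |y - z| ^ S.r * (v z + M) := by gcongr
        _ = (S.A₀ * |y - z| ^ S.r + 1) * (v z + M) := by ring
        _ ≤ _ := by gcongr
    have hw : S.Cone S.A₀ (fun _ => M) := by
      refine ⟨fun _ _ => hM0, fun y _ z _ => ?_⟩
      have : 1 ≤ rexp (S.A₀ * |y - z| ^ S.r) :=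
        one_le_exp (mul_nonneg hA.le (rho_nonneg y z))
      nlinarith
    have hcw : ∫ _ in Y, M = M / 2 := by
      rw [setIntegral_const, vol_Y, smul_eq_mul]; ring
    have hcu : ∫ y in Y, (v y + M) = M / 2 := by
      rw [integral_add hv.integrableOn (integrableOn_constY _), h0, hcw, zero_add]
    obtain ⟨u', w', hu', hw', hcu', hcw', h⟩ := couple (by positivity) hu hw hcu hcw k
    have h1 : ∀ y ∈ Y, S.L^[k] v y = u' y - w' y := by
      intro y hy
      rw [← h y hy, ← L_iter_sub (hu.hb hA.le) (hw.hb hA.le) k y hy]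
      have e : (fun y => v y + M - M) = v := by funext z; ring
      rw [e]
    have h2 := (hu'.hb₀.sub hw'.hb₀).congr h1
    rw [hcu', hcw'] at h2
    refine h2.mono (le_of_eq ?_)
    rw [CD, hM]; ring

/-- Exponential decay of the iterates of the transfer operator on Hölder functions of mean zero. -/
lemma decay {v : ℝ → ℂ} {K : ℝ} (hv : S.HB v K) (h0 : ∫ y in Y, v y = 0) (k : ℕ) :
    S.HB (S.L^[k] v) (2 * S.CD * S.η ^ k * K) := by
  have hre : S.HB (fun y => (v y).re) K :=
    ⟨fun y hy => (Complex.abs_re_le_norm _).trans (hv.1 y hy), fun y hy z hz => by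
      rw [← Complex.sub_re]; exact (Complex.abs_re_le_norm _).trans (hv.2 y hy z hz)⟩
  have him : S.HB (fun y => (v y).im) K :=
    ⟨fun y hy => (Complex.abs_im_le_norm _).trans (hv.1 y hy), fun y hy z hz => by
      rw [← Complex.sub_im]; exact (Complex.abs_im_le_norm _).trans (hv.2 y hy z hz)⟩
  have hr0 : ∫ y in Y, (v y).re = 0 := by
    have h := integral_re (𝕜 := ℂ) (f := v) (μ := volume.restrict Y) hv.integrableOn
    have h' : ∫ y in Y, (v y).re = (∫ y in Y, v y).re := h
    rw [h', h0, Complex.zero_re]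
  have hi0 : ∫ y in Y, (v y).im = 0 := by
    have h := integral_im (𝕜 := ℂ) (f := v) (μ := volume.restrict Y) hv.integrableOn
    have h' : ∫ y in Y, (v y).im = (∫ y in Y, v y).im := h
    rw [h', h0, Complex.zero_im]
  have e : ∀ y ∈ Y, S.L^[k] v y = ((S.L^[k] (fun y => (v y).re) y : ℝ) : ℂ) +
      ((S.L^[k] (fun y => (v y).im) y : ℝ) : ℂ) * Complex.I := by
    -- `L` commutes with the decomposition into real and imaginary parts
    induction k with
    | zero => intro y _; exact (Complex.re_add_im (v y)).symm
    | succ k ih =>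
      intro y hy
      rw [Function.iterate_succ_apply', Function.iterate_succ_apply', Function.iterate_succ_apply',
        L_congr ih hy, ← L_ofReal, ← L_ofReal]
      have h1 := summable_L (S := S) (u := fun y => ((S.L^[k] (fun y => (v y).re) y : ℝ) : ℂ))
        (K := S.CL ^ k * K) (fun z hz => by
          rw [Complex.norm_real]; exact (hre.L_iter k).1 z hz) hy
      have h2 := summable_L (S := S) (u := fun y => ((S.L^[k] (fun y => (v y).im) y : ℝ) : ℂ))
        (K := S.CL ^ k * K) (fun z hz => by
          rw [Complex.norm_real]; exact (him.L_iter k).1 z hz) hy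
      simp only [Sys.L]
      rw [← h2.tsum_mul_right, ← h1.tsum_add (h2.mul_right _)]
      refine tsum_congr fun n => ?_
      simp only [smul_add, smul_mul_assoc]
  have h1 := decay_real hre hr0 k
  have h2 := decay_real him hi0 k
  have h3 : S.HB (fun y => ((S.L^[k] (fun y => (v y).re) y : ℝ) : ℂ)) (S.CD * S.η ^ k * K) :=
    ⟨fun y hy => by rw [Complex.norm_real]; exact h1.1 y hy, fun y hy z hz => by
      rw [← Complex.ofReal_sub, Complex.norm_real]; exact h1.2 y hy z hz⟩
  have h4 : S.HB (fun y => ((S.L^[k] (fun y => (v y).im) y : ℝ) : ℂ) * Complex.I)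
      (S.CD * S.η ^ k * K) :=
    ⟨fun y hy => by rw [norm_mul, Complex.norm_I, mul_one, Complex.norm_real]; exact h2.1 y hy,
      fun y hy z hz => by
      rw [← sub_mul, norm_mul, Complex.norm_I, mul_one, ← Complex.ofReal_sub, Complex.norm_real]
      exact h2.2 y hy z hz⟩
  exact ((h3.add h4).congr e).mono (le_of_eq (by ring))

end Sys
end LSV

namespace LSV
namespace Sys

variable {S : Sys}

/-! ### The invariant density of the induced system -/

/-- The invariant density is the limit of the iterates of the transfer operator on the uniform
density. -/
lemma exists_density : ∃ u : ℝ → ℝ, S.HB u S.CA ∧ (∀ y ∈ Y, 2 * rexp (-S.A₀) ≤ u y) ∧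
    (∫ y in Y, u y = 1) ∧ ∀ y ∈ Y, S.L u y = u y := by
  have hA := A₀_pos (S := S)
  set w : ℕ → ℝ → ℝ := fun k => S.L^[k] (fun _ => (2:ℝ)) with hw
  have hwS : ∀ k, w (k+1) = S.L (w k) := fun k => Function.iterate_succ_apply' _ _ _
  have hcone : ∀ k, S.Cone S.A₀ (w k) ∧ ∫ y in Y, w k y = 1 := by
    intro k
    induction k with
    | zero =>
      refine ⟨⟨fun _ _ => two_pos, fun y _ z _ => ?_⟩, ?_⟩
      · have : 1 ≤ rexp (S.A₀ * |y - z| ^ S.r) :=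
          one_le_exp (mul_nonneg hA.le (rho_nonneg y z))
        show (2:ℝ) ≤ _ * 2
        linarith
      · show ∫ y in Y, (2:ℝ) = 1
        rw [setIntegral_const, vol_Y, smul_eq_mul]; norm_num
    | succ k ih =>
      rw [hwS]
      exact ⟨ih.1.L₀, by rw [integral_L_real _ (ih.1.hb hA.le).continuousOn, ih.2]⟩
  have hHB : ∀ k, S.HB (w k) S.CA := fun k => by
    have := (hcone k).1.hb₀
    rwa [(hcone k).2, mul_one] at this
  have hd : ∀ k, ∀ y ∈ Y, w (k+1) y - w k y =
      S.L^[k] (fun y => S.L (fun _ => (2:ℝ)) y - 2) y := by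
    intro k y hy
    rw [L_iter_sub (S := S) (u := S.L (fun _ => (2:ℝ))) (v := fun _ => 2)
      (HB.const (2:ℝ)).L (HB.const (2:ℝ)) k y hy]
    rfl
  have hv := (HB.const (S := S) (2:ℝ)).L.sub (HB.const (S := S) (2:ℝ))
  have hv0 : ∫ y in Y, (S.L (fun _ => (2:ℝ)) y - 2) = 0 := by
    rw [integral_sub (HB.const (S := S) (2:ℝ)).L.integrableOn (integrableOn_constY _),
      integral_L_real _ continuousOn_const, sub_self]
  have hlim : ∀ y ∈ Y, ∃ a, Tendsto (fun k => w k y) atTop (𝓝 a) := by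
    intro y hy
    refine cauchySeq_tendsto_of_complete (cauchySeq_of_le_geometric S.η
      (S.CD * (S.CL * ‖(2:ℝ)‖ + ‖(2:ℝ)‖)) η_lt_one fun k => ?_)
    rw [dist_comm, dist_eq_norm, hd k y hy]
    refine ((decay_real hv hv0 k).1 y hy).trans (le_of_eq (by ring))
  choose! u hu using hlim
  have hb : S.HB u S.CA := by
    refine ⟨fun y hy => le_of_tendsto (hu y hy).norm (Eventually.of_forall fun k =>
      (hHB k).1 y hy), fun y hy z hz => le_of_tendsto ((hu y hy).sub (hu z hz)).norm
        (Eventually.of_forall fun k => (hHB k).2 y hy z hz)⟩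
  refine ⟨u, hb, fun y hy => ge_of_tendsto (hu y hy) (Eventually.of_forall fun k => ?_), ?_, ?_⟩
  · have := (hcone k).1.ge_integral hA.le hy
    rwa [(hcone k).2, mul_one] at this
  · have h1 : Tendsto (fun k => ∫ y in Y, w k y) atTop (𝓝 (∫ y in Y, u y)) := by
      refine tendsto_integral_of_dominated_convergence (fun _ => S.CA)
        (fun k => (hHB k).integrableOn.aestronglyMeasurable) (integrableOn_constY _)
        (fun k => ?_) ?_
      · filter_upwards [ae_restrict_mem measurableSet_Icc] with y hy using (hHB k).1 y hy
      · filter_upwards [ae_restrict_mem measurableSet_Icc] with y hy using hu y hy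
    simp only [(hcone _).2] at h1
    exact tendsto_nhds_unique h1 tendsto_const_nhds |>.symm ▸ rfl
  · intro y hy
    have h1 : Tendsto (fun k => S.L (w k) y) atTop (𝓝 (S.L u y)) := by
      refine tendsto_tsum_of_dominated_convergence (bound := fun n => S.j n * S.CA)
        ((summ_j S).mul_right _) (fun n => ?_) (Eventually.of_forall fun k n => ?_)
      · exact (hu _ (S.ψ_mem n y hy)).const_smul _
      · rw [norm_smul, Real.norm_of_nonneg (S.J_pos n y hy).le]
        exact mul_le_mul (S.J_le n y hy) ((hHB k).1 _ (S.ψ_mem n y hy)) (norm_nonneg _)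
          (j_pos n).le
    have h2 : Tendsto (fun k => w (k+1) y) atTop (𝓝 (u y)) :=
      (hu y hy).comp (tendsto_add_atTop_nat 1)
    simp only [hwS] at h2
    exact tendsto_nhds_unique h1 h2

variable (S) in
/-- The invariant density of the induced system. -/
noncomputable def h0 : ℝ → ℝ := (exists_density (S := S)).choose

lemma h0_hb_real : S.HB S.h0 S.CA := exists_density.choose_spec.1

lemma h0_ge {y : ℝ} (hy : y ∈ Y) : 2 * rexp (-S.A₀) ≤ S.h0 y :=
  exists_density.choose_spec.2.1 y hy

lemma integral_h0_real : ∫ y in Y, S.h0 y = 1 := exists_density.choose_spec.2.2.1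

lemma L_h0_real {y : ℝ} (hy : y ∈ Y) : S.L S.h0 y = S.h0 y :=
  exists_density.choose_spec.2.2.2 y hy

variable (S) in
/-- The invariant density, as a complex function. -/
noncomputable def H (y : ℝ) : ℂ := (S.h0 y : ℂ)

lemma H_hb : S.HB S.H S.CA :=
  ⟨fun y hy => by rw [H, Complex.norm_real]; exact h0_hb_real.1 y hy, fun y hy z hz => by
    rw [H, H, ← Complex.ofReal_sub, Complex.norm_real]; exact h0_hb_real.2 y hy z hz⟩

lemma integral_H : ∫ y in Y, S.H y = 1 := by
  have := integral_complex_ofReal (f := S.h0) (μ := volume.restrict Y)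
  rw [integral_h0_real] at this
  simpa [H] using this

lemma L_H {y : ℝ} (hy : y ∈ Y) : S.L S.H y = S.H y := by
  have := L_ofReal (S := S) S.h0 y
  rw [L_h0_real hy] at this
  exact this

lemma HB.mul {u v : ℝ → ℂ} {K K' : ℝ} (hu : S.HB u K) (hv : S.HB v K') :
    S.HB (fun y => u y * v y) (2 * K * K') := by
  have hK := hu.nonneg
  have hK' := hv.nonneg
  refine ⟨fun y hy => ?_, fun y hy z hz => ?_⟩
  · rw [norm_mul]
    have := mul_le_mul (hu.1 y hy) (hv.1 y hy) (norm_nonneg _) hK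
    have := mul_nonneg hK hK'
    linarith
  · have h0 := rho_nonneg (S := S) y z
    have e : u y * v y - u z * v z = u y * (v y - v z) + (u y - u z) * v z := by ring
    rw [e]
    refine (norm_add_le _ _).trans ?_
    rw [norm_mul, norm_mul]
    calc ‖u y‖ * ‖v y - v z‖ + ‖u y - u z‖ * ‖v z‖
        ≤ K * (K' * |y - z| ^ S.r) + (K * |y - z| ^ S.r) * K' := by
          gcongr
          exacts [hu.1 y hy, hv.2 y hy z hz, hu.2 y hy z hz, hv.1 z hz]
      _ = _ := by ring

lemma HB.const_mul {u : ℝ → ℂ} {K : ℝ} (hu : S.HB u K) (c : ℂ) :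
    S.HB (fun y => c * u y) (‖c‖ * K) := by
  refine ⟨fun y hy => ?_, fun y hy z hz => ?_⟩
  · rw [norm_mul]; gcongr; exact hu.1 y hy
  · rw [← mul_sub, norm_mul, mul_assoc]; gcongr; exact hu.2 y hy z hz

lemma L_const_mul (c : ℂ) (u : ℝ → ℂ) (y : ℝ) : S.L (fun y => c * u y) y = c * S.L u y := by
  simp only [Sys.L, ← tsum_mul_left]
  exact tsum_congr fun n => by rw [mul_smul_comm]

lemma HB.sub_mean {u : ℝ → ℂ} {K : ℝ} (hu : S.HB u K) :
    S.HB (fun y => u y - (∫ z in Y, u z) * S.H y) ((1 + S.CA) * K) ∧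
      ∫ y in Y, (u y - (∫ z in Y, u z) * S.H y) = 0 := by
  constructor
  · refine (hu.sub (H_hb.const_mul _)).mono ?_
    have := mul_le_mul_of_nonneg_right (norm_setIntegral_le hu.1) (CA_nonneg (S := S))
    linarith
  · rw [integral_sub hu.integrableOn (H_hb.const_mul _).integrableOn, integral_const_mul,
      integral_H, mul_one, sub_self]

/-! ### Perturbed transfer operators -/

variable (S) in
/-- Observables (given on each inverse branch) with at most linear growth of sup and Hölder norms
in the branch index. -/
def Obs (G : ℕ → ℝ → ℝ) (C : ℝ) : Prop :=
  (∀ n, ∀ y ∈ Y, |G n y| ≤ C * (n + 1)) ∧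
    ∀ n, ∀ y ∈ Y, ∀ z ∈ Y, |G n y - G n z| ≤ C * (n + 1) * |y - z| ^ S.r

variable (S) in
/-- The transfer operator twisted by `exp (i t G)`. -/
noncomputable def Lt (G : ℕ → ℝ → ℝ) (t : ℝ) (u : ℝ → ℂ) (y : ℝ) : ℂ :=
  ∑' n, S.J n y • (Complex.exp (Complex.I * (t * G n y : ℝ)) * u (S.ψ n y))

variable (S) in
/-- The difference between the twisted and the plain transfer operators. -/
noncomputable def Et (G : ℕ → ℝ → ℝ) (t : ℝ) (u : ℝ → ℂ) (y : ℝ) : ℂ :=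
  ∑' n, S.J n y • ((Complex.exp (Complex.I * (t * G n y : ℝ)) - 1) * u (S.ψ n y))

variable (S) in
/-- The leading eigenvalue of the twisted operator, to first order. -/
noncomputable def lam (G : ℕ → ℝ → ℝ) (t : ℝ) : ℂ := ∫ y in Y, S.Lt G t S.H y

lemma norm_exp_I_sub (x y : ℝ) :
    ‖Complex.exp (Complex.I * (x:ℝ)) - Complex.exp (Complex.I * (y:ℝ))‖ ≤ |x - y| := by
  have e : Complex.exp (Complex.I * (x:ℝ)) - Complex.exp (Complex.I * (y:ℝ)) =
      Complex.exp (Complex.I * (y:ℝ)) * (Complex.exp (Complex.I * ((x - y : ℝ))) - 1) := by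
    rw [mul_sub, ← Complex.exp_add]; push_cast; ring_nf
  rw [e, norm_mul, Complex.norm_exp_I_mul_ofReal, one_mul]
  exact Real.norm_exp_I_mul_ofReal_sub_one_le

lemma Obs.nonneg {G : ℕ → ℝ → ℝ} {C : ℝ} (hG : S.Obs G C)
    : 0 ≤ C := by
  have := (abs_nonneg _).trans (hG.1 0 1 one_mem)
  simpa using this

lemma Obs.exp_hb {G : ℕ → ℝ → ℝ} {C : ℝ} (hG : S.Obs G C) (t : ℝ)
    (n : ℕ) :
    S.HB (fun y => Complex.exp (Complex.I * (t * G n y : ℝ)) - 1) (|t| * (C * (n + 1))) := by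
  refine ⟨fun y hy => ?_, fun y hy z hz => ?_⟩
  · refine Real.norm_exp_I_mul_ofReal_sub_one_le.trans ?_
    rw [Real.norm_eq_abs, abs_mul]
    gcongr
    exact hG.1 n y hy
  · rw [sub_sub_sub_cancel_right]
    refine (norm_exp_I_sub _ _).trans ?_
    rw [← mul_sub, abs_mul, mul_assoc]
    gcongr
    exact hG.2 n y hy z hz

lemma Obs.Et_hb {G : ℕ → ℝ → ℝ} {C : ℝ} (hG : S.Obs G C)
    : ∃ B, 0 ≤ B ∧ ∀ t u K, S.HB u K → S.HB (S.Et G t u) (B * |t| * K) := by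
  have hC := hG.nonneg
  have hD := S.D_pos
  refine ⟨∑' n : ℕ, (1 + S.D * rexp S.D) * (2 * C) * (((n:ℝ) + 1) * S.j n),
    tsum_nonneg fun n => ?_, fun t u K hu => ?_⟩
  · have := (j_pos (S := S) n).le
    positivity
  · have h1 := HB.tsum (((S.summ.mul_left ((1 + S.D * rexp S.D) * (2 * C))).mul_right
      |t|).mul_right K) (F := fun n y => S.J n y • ((Complex.exp (Complex.I * (t * G n y : ℝ)) - 1)
        * u (S.ψ n y))) (S := S) fun n =>
        (((hG.exp_hb t n).mul (hu.comp_psi n)).J_smul n).mono (le_of_eq (by ring))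
    rw [tsum_mul_right, tsum_mul_right] at h1
    exact h1

lemma norm_tw (t x : ℝ) (z : ℂ) : ‖Complex.exp (Complex.I * (t * x : ℝ)) * z‖ = ‖z‖ := by
  rw [norm_mul, Complex.norm_exp_I_mul_ofReal, one_mul]

lemma summable_Lt (G : ℕ → ℝ → ℝ) (t : ℝ) {u : ℝ → ℂ} {K : ℝ} (h : ∀ y ∈ Y, ‖u y‖ ≤ K) {y : ℝ} (hy : y ∈ Y) :
    Summable fun n => S.J n y • (Complex.exp (Complex.I * (t * G n y : ℝ)) * u (S.ψ n y)) := by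
  refine Summable.of_norm_bounded ((summ_j S).mul_right K) fun n => ?_
  rw [norm_smul, Real.norm_of_nonneg (S.J_pos n y hy).le, norm_tw]
  exact mul_le_mul (S.J_le n y hy) (h _ (S.ψ_mem n y hy)) (norm_nonneg _) (j_pos n).le

lemma Lt_eq (G : ℕ → ℝ → ℝ) (t : ℝ) {u : ℝ → ℂ} {K : ℝ} (hu : S.HB u K) {y : ℝ} (hy : y ∈ Y) :
    S.Lt G t u y = S.L u y + S.Et G t u y := by
  have h1 := summable_L (S := S) hu.1 hy
  have h2 := (summable_Lt (S := S) G t hu.1 hy).sub h1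
  have h3 : S.Et G t u y = ∑' n, (S.J n y • (Complex.exp (Complex.I * (t * G n y : ℝ)) *
      u (S.ψ n y)) - S.J n y • u (S.ψ n y)) := by
    refine tsum_congr fun n => ?_
    rw [← smul_sub, sub_mul, one_mul]
  rw [h3, Sys.L, ← h1.tsum_add h2]
  exact tsum_congr fun n => by rw [add_sub_cancel]

lemma Lt_add (G : ℕ → ℝ → ℝ) (t : ℝ) {u v : ℝ → ℂ} {K K' : ℝ} (hu : S.HB u K) (hv : S.HB v K')
    {y : ℝ} (hy : y ∈ Y) : S.Lt G t (fun y => u y + v y) y = S.Lt G t u y + S.Lt G t v y := by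
  rw [Lt, Lt, Lt, ← (summable_Lt (S := S) G t hu.1 hy).tsum_add (summable_Lt (S := S) G t hv.1 hy)]
  exact tsum_congr fun n => by rw [mul_add, smul_add]

lemma Lt_const_mul (G : ℕ → ℝ → ℝ) (t : ℝ) (c : ℂ) (u : ℝ → ℂ) (y : ℝ) :
    S.Lt G t (fun y => c * u y) y = c * S.Lt G t u y := by
  rw [Lt, Lt, ← tsum_mul_left]
  exact tsum_congr fun n => by rw [mul_smul_comm, mul_left_comm]

lemma Lt_congr (G : ℕ → ℝ → ℝ) (t : ℝ) {u v : ℝ → ℂ} (h : ∀ y ∈ Y, u y = v y) {y : ℝ}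
    (hy : y ∈ Y) : S.Lt G t u y = S.Lt G t v y := by
  simp only [Lt]
  exact tsum_congr fun n => by rw [h _ (S.ψ_mem n y hy)]

lemma Obs.Lt_hb {G : ℕ → ℝ → ℝ} {C : ℝ} (hG : S.Obs G C)
    : ∃ B, 0 ≤ B ∧ ∀ t u K, S.HB u K → S.HB (S.Lt G t u) ((S.CL + B * |t|) * K) := by
  obtain ⟨B, hB, h⟩ := hG.Et_hb
  refine ⟨B, hB, fun t u K hu => ?_⟩
  refine ((hu.L.add (h t u K hu)).congr fun y hy => Lt_eq G t hu hy).mono (le_of_eq (by ring))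

lemma Obs.Lt_iter_hb {G : ℕ → ℝ → ℝ} {C : ℝ} (hG : S.Obs G C) (t : ℝ)
    {u : ℝ → ℂ} {K : ℝ} (hu : S.HB u K) (k : ℕ) :
    ∃ K', S.HB ((S.Lt G t)^[k] u) K' := by
  obtain ⟨B, hB, h⟩ := hG.Lt_hb
  induction k with
  | zero => exact ⟨K, hu⟩
  | succ k ih =>
    obtain ⟨K₁, hK₁⟩ := ih
    rw [Function.iterate_succ_apply']
    exact ⟨_, h t _ _ hK₁⟩

/-- The twisted operator does not increase the `L¹` norm. -/
lemma Obs.integral_norm_Lt_le {G : ℕ → ℝ → ℝ} {C : ℝ} (hG : S.Obs G C) (t : ℝ)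
    {u : ℝ → ℂ} {K : ℝ} (hu : S.HB u K) :
    ∫ y in Y, ‖S.Lt G t u y‖ ≤ ∫ y in Y, ‖u y‖ := by
  obtain ⟨B, hB, h⟩ := hG.Lt_hb
  have hn : S.HB (fun y => ‖u y‖) K := ⟨fun y hy => by simpa using hu.1 y hy, fun y hy z hz =>
    (abs_norm_sub_norm_le _ _).trans (hu.2 y hy z hz)⟩
  rw [← integral_L_real (S := S) (fun y => ‖u y‖) hn.continuousOn]
  refine setIntegral_mono_on (h t u K hu).integrableOn.norm hn.L.integrableOn measurableSet_Icc
    fun y hy => ?_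
  have h1 := summable_L (S := S) hn.1 hy
  refine tsum_of_norm_bounded h1.hasSum fun n => ?_
  rw [norm_smul, Real.norm_of_nonneg (S.J_pos n y hy).le, norm_tw, smul_eq_mul]

lemma Obs.integral_norm_Lt_iter_le {G : ℕ → ℝ → ℝ} {C : ℝ} (hG : S.Obs G C) (t : ℝ)
    {u : ℝ → ℂ} {K : ℝ} (hu : S.HB u K) (k : ℕ) :
    ∫ y in Y, ‖(S.Lt G t)^[k] u y‖ ≤ ∫ y in Y, ‖u y‖ := by
  induction k with
  | zero => exact le_rfl
  | succ k ih =>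
    obtain ⟨K', hK'⟩ := hG.Lt_iter_hb t hu k
    rw [Function.iterate_succ_apply']
    exact (hG.integral_norm_Lt_le t hK').trans ih

lemma Obs.norm_lam_le {G : ℕ → ℝ → ℝ} {C : ℝ} (hG : S.Obs G C) (t : ℝ)
    : ‖S.lam G t‖ ≤ 1 := by
  refine (norm_integral_le_integral_norm _).trans ((hG.integral_norm_Lt_le t H_hb).trans ?_)
  rw [← integral_h0_real (S := S)]
  refine le_of_eq (setIntegral_congr_fun measurableSet_Icc fun y hy => ?_)
  have := h0_ge (S := S) hy
  have := Real.exp_pos (-S.A₀)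
  rw [H, Complex.norm_real, Real.norm_of_nonneg (by linarith)]

variable (S) in
/-- A norm on mean-zero functions adapted to the transfer operator: `L` contracts it by `η`. -/
def HZ (v : ℝ → ℂ) (K : ℝ) : Prop := ∀ k, S.HB (S.L^[k] v) (S.η ^ k * K)

lemma HZ.hb {v : ℝ → ℂ} {K : ℝ} (h : S.HZ v K) : S.HB v K := by simpa using h 0

lemma HZ.L {v : ℝ → ℂ} {K : ℝ} (h : S.HZ v K) : S.HZ (S.L v) (S.η * K) := fun k => by
  have := h (k+1)
  rw [Function.iterate_succ_apply] at this
  exact this.mono (le_of_eq (by ring))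

lemma HZ.add {u v : ℝ → ℂ} {K K' : ℝ} (h : S.HZ u K) (h' : S.HZ v K') :
    S.HZ (fun y => u y + v y) (K + K') := fun k =>
  (((h k).add (h' k)).congr (L_iter_add h.hb h'.hb k)).mono (le_of_eq (by ring))

lemma HZ.mono {v : ℝ → ℂ} {K K' : ℝ} (h : S.HZ v K) (hK : K ≤ K') : S.HZ v K' := fun k =>
  (h k).mono (mul_le_mul_of_nonneg_left hK (pow_nonneg η_pos.le k))

lemma HZ.congr {u v : ℝ → ℂ} {K : ℝ} (h : S.HZ u K) (huv : ∀ y ∈ Y, v y = u y) : S.HZ v K :=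
  fun k => (h k).congr (L_iter_congr huv k)

lemma HB.hz {v : ℝ → ℂ} {K : ℝ} (h : S.HB v K) (h0 : ∫ y in Y, v y = 0) :
    S.HZ v (2 * S.CD * K) := fun k => (decay h h0 k).mono (le_of_eq (by ring))

lemma tendsto_pow_exp {k : ℕ → ℕ} {l : ℕ → ℂ} {z : ℂ} (hk : Tendsto k atTop atTop)
    (hz : Tendsto (fun n => k n * (l n - 1)) atTop (𝓝 z)) :
    Tendsto (fun n => l n ^ k n) atTop (𝓝 (Complex.exp z)) := by
  have hk' : Tendsto (fun n => ((k n : ℂ))⁻¹) atTop (𝓝 0) := by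
    have h1 : Tendsto (fun n => ((k n : ℝ))⁻¹) atTop (𝓝 0) :=
      tendsto_inv_atTop_zero.comp (tendsto_natCast_atTop_atTop.comp hk)
    have h2 := (Complex.continuous_ofReal.tendsto 0).comp h1
    simpa [Function.comp_def] using h2
  have hpos : ∀ᶠ n in atTop, 0 < k n := hk.eventually_gt_atTop 0
  have hw : Tendsto (fun n => l n - 1) atTop (𝓝 0) := by
    have := hz.mul hk'
    rw [mul_zero] at this
    refine this.congr' ?_
    filter_upwards [hpos] with n hn
    have : (k n : ℂ) ≠ 0 := by exact_mod_cast hn.ne'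
    field_simp
  have hsmall : ∀ᶠ n in atTop, ‖l n - 1‖ < 1/2 := by
    have := hw.norm
    rw [norm_zero] at this
    exact this.eventually (gt_mem_nhds (by norm_num))
  have hlog : Tendsto (fun n => k n * (Complex.log (1 + (l n - 1)) - (l n - 1))) atTop (𝓝 0) := by
    have hb : Tendsto (fun n => ‖k n * (l n - 1)‖ * ‖l n - 1‖) atTop (𝓝 0) := by
      have := hz.norm.mul hw.norm
      rwa [norm_zero, mul_zero] at this
    refine squeeze_zero_norm' ?_ hb
    filter_upwards [hsmall] with n hn
    have h1 := Complex.norm_log_one_add_sub_self_le (z := l n - 1) (by linarith)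
    rw [norm_mul, norm_mul, mul_assoc]
    gcongr
    refine h1.trans ?_
    have h2 : (1 - ‖l n - 1‖)⁻¹ ≤ 2 := by
      rw [inv_le_comm₀ (by linarith) (by norm_num)]
      linarith
    have := sq_nonneg ‖l n - 1‖
    nlinarith
  have h := (hlog.add hz).cexp
  rw [zero_add] at h
  refine h.congr' ?_
  filter_upwards [hsmall] with n hn
  have h1 : l n ≠ 0 := by
    intro h0
    rw [h0] at hn
    norm_num at hn
  rw [show (k n : ℂ) * (Complex.log (1 + (l n - 1)) - (l n - 1)) + k n * (l n - 1) =
    k n * Complex.log (1 + (l n - 1)) by ring, Complex.exp_nat_mul, add_sub_cancel,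
    Complex.exp_log h1]

/-- The perturbative estimate: for small `t`, the integrals of the iterates of the twisted
operator are governed by the powers of `lam`. -/
theorem Obs.perturb {G : ℕ → ℝ → ℝ} {C : ℝ} (hG : S.Obs G C) :
    ∃ C' t₀ : ℝ, 0 < t₀ ∧ ∀ t, |t| ≤ t₀ → ∀ (u : ℝ → ℂ) (K : ℝ), S.HB u K → ∀ k : ℕ,
      ‖(∫ y in Y, (S.Lt G t)^[k] u y) - S.lam G t ^ k * ∫ y in Y, u y‖ ≤
        C' * K * (|t| + k * t ^ 2) := by
  obtain ⟨BE, hBE, hE⟩ := hG.Et_hb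
  have hCA := CA_nonneg (S := S)
  have hCD := CD_nonneg (S := S)
  have hη0 := η_pos (S := S)
  have hη1 := η_lt_one (S := S)
  set B := 2 * S.CD * (1 + S.CA) * BE with hB
  have hB0 : 0 ≤ B := by positivity
  set η' := (1 + S.η) / 2 with hη'
  have hη'0 : 0 < η' := by positivity
  have hη'1 : η' < 1 := by rw [hη']; linarith
  have h1η' : 0 < 1 - η' := by linarith
  set C₁ := 2 * S.CD * (1 + S.CA) + B * S.CA / (1 - η') with hC₁
  have hC₁0 : 0 ≤ C₁ := by positivity
  have hC₁' : B * S.CA ≤ C₁ * (1 - η') := by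
    rw [hC₁, add_mul, div_mul_cancel₀ _ h1η'.ne']
    have : 0 ≤ 2 * S.CD * (1 + S.CA) * (1 - η') := by positivity
    linarith
  refine ⟨BE * C₁ * (1 / (1 - η') + 1), (1 - S.η) / 2 / (B + 1), by
    have : 0 < 1 - S.η := by linarith
    positivity, fun t ht u K hu => ?_⟩
  have hBt : S.η + B * |t| ≤ η' := by
    have h1 : |t| * (B + 1) ≤ (1 - S.η) / 2 := (le_div_iff₀ (by positivity)).1 ht
    have := abs_nonneg t
    rw [hη']
    linarith
  have hK := hu.nonneg
  have ht0 := abs_nonneg t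
  set U : ℕ → ℝ → ℂ := fun k => (S.Lt G t)^[k] u with hU
  have hUS : ∀ k, U (k+1) = S.Lt G t (U k) := fun k => Function.iterate_succ_apply' _ _ _
  have hUhb : ∀ k, ∃ K', S.HB (U k) K' := hG.Lt_iter_hb t hu
  -- Split `U k` into its mean `a k` times the invariant density and a mean-zero remainder `V k`.
  set a : ℕ → ℂ := fun k => ∫ y in Y, U k y with ha
  have haK : ∀ k, ‖a k‖ ≤ K := fun k => by
    refine (norm_integral_le_integral_norm _).trans ((hG.integral_norm_Lt_iter_le t hu k).trans ?_)
    have := norm_setIntegral_le (u := fun y => ‖u y‖) (K := K) (fun y hy => by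
      rw [norm_norm]; exact hu.1 y hy)
    exact (le_abs_self _).trans this
  set V : ℕ → ℝ → ℂ := fun k y => U k y - a k * S.H y with hV
  have hVU : ∀ k y, U k y = V k y + a k * S.H y := fun k y => by simp [hV]
  -- The remainder decays to size `O(|t|)`, since `L` contracts mean-zero functions and `Et` is
  -- `O(|t|)`.
  have hVhz : ∀ k, S.HZ (V k) (C₁ * K * (η' ^ k + |t|)) := by
    intro k
    induction k with
    | zero =>
      refine (HB.hz hu.sub_mean.1 hu.sub_mean.2).mono ?_
      rw [pow_zero]
      have h1 : 2 * S.CD * (1 + S.CA) ≤ C₁ := by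
        have : 0 ≤ B * S.CA / (1 - η') := by positivity
        linarith
      calc 2 * S.CD * ((1 + S.CA) * K) = 2 * S.CD * (1 + S.CA) * K * 1 := by ring
        _ ≤ C₁ * K * (1 + |t|) := by gcongr; linarith
    | succ k ih =>
      obtain ⟨K', hK'⟩ := hUhb k
      have hUk : S.HB (U k) (C₁ * K * (η' ^ k + |t|) + K * S.CA) :=
        ((ih.hb.add (H_hb.const_mul (a k))).congr fun y _ => hVU k y).mono (by
          gcongr; exact haK k)
      have hEk := hE t _ _ hUk
      have h1 := HB.hz hEk.sub_mean.1 hEk.sub_mean.2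
      refine ((ih.L.add h1).mono ?_).congr fun y hy => ?_
      · rw [show S.η * (C₁ * K * (η' ^ k + |t|)) + 2 * S.CD * ((1 + S.CA) *
          (BE * |t| * (C₁ * K * (η' ^ k + |t|) + K * S.CA))) =
            (S.η + B * |t|) * (C₁ * K * (η' ^ k + |t|)) + B * S.CA * (|t| * K) by rw [hB]; ring]
        calc (S.η + B * |t|) * (C₁ * K * (η' ^ k + |t|)) + B * S.CA * (|t| * K)
            ≤ η' * (C₁ * K * (η' ^ k + |t|)) + C₁ * (1 - η') * (|t| * K) := by gcongr
          _ = _ := by ring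
      · have e1 : S.L (V k) y = S.L (U k) y - a k * S.H y := by
          rw [← L_H hy, ← L_const_mul, ← L_sub hK'.1 (H_hb.const_mul (a k)).1 hy]
        have e2 : a (k+1) = a k + ∫ z in Y, S.Et G t (U k) z := by
          have h2 : a (k+1) = ∫ z in Y, (S.L (U k) z + S.Et G t (U k) z) := by
            rw [ha]
            simp only [hUS]
            exact setIntegral_congr_fun measurableSet_Icc fun z hz => Lt_eq G t hK' hz
          rw [h2, integral_add hK'.L.integrableOn hEk.integrableOn,
            integral_L _ hK'.continuousOn]
        show U (k+1) y - a (k+1) * S.H y = _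
        rw [e1, e2, hUS, Lt_eq G t hK' hy]
        ring
  -- Hence `a` satisfies `a (k+1) = lam * a k` up to `O(|t| (η' ^ k + |t|))`.
  have hrec : ∀ k, ‖a (k+1) - S.lam G t * a k‖ ≤ BE * |t| * (C₁ * K * (η' ^ k + |t|)) := by
    intro k
    have hEV := hE t _ _ (hVhz k).hb
    have e : a (k+1) - S.lam G t * a k = ∫ z in Y, S.Et G t (V k) z := by
      obtain ⟨BL, hBL, hL⟩ := hG.Lt_hb
      obtain ⟨K', hK'⟩ := hUhb k
      have hV0 : ∫ z in Y, V k z = 0 := hK'.sub_mean.2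
      have h2 : a (k+1) = ∫ z in Y, ((S.L (V k) z + S.Et G t (V k) z) +
          a k * S.Lt G t S.H z) := by
        change ∫ y in Y, U (k+1) y = _
        rw [hUS]
        refine setIntegral_congr_fun measurableSet_Icc fun z hz => ?_
        have : U k = fun y => V k y + a k * S.H y := funext (hVU k)
        rw [this, Lt_add G t (hVhz k).hb (H_hb.const_mul (a k)) hz, Lt_const_mul,
          Lt_eq G t (hVhz k).hb hz]
      rw [h2, integral_add ((hVhz k).hb.L.add hEV).integrableOn
        (hL t _ _ H_hb |>.const_mul (a k)).integrableOn,
        integral_add (hVhz k).hb.L.integrableOn hEV.integrableOn,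
        integral_L _ (hVhz k).hb.continuousOn, hV0, integral_const_mul]
      rw [lam]; ring
    rw [e]
    exact norm_setIntegral_le hEV.1
  have hsum : ∀ k : ℕ, ‖a k - S.lam G t ^ k * a 0‖ ≤
      BE * |t| * (C₁ * K) * (∑ i ∈ Finset.range k, η' ^ i + k * |t|) := by
    intro k
    induction k with
    | zero => simp
    | succ k ih =>
      have e : a (k+1) - S.lam G t ^ (k+1) * a 0 =
          (a (k+1) - S.lam G t * a k) + S.lam G t * (a k - S.lam G t ^ k * a 0) := by ring
      rw [e, Finset.sum_range_succ]
      refine (norm_add_le _ _).trans ?_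
      have h1 := hrec k
      have h2 : ‖S.lam G t * (a k - S.lam G t ^ k * a 0)‖ ≤ ‖a k - S.lam G t ^ k * a 0‖ := by
        rw [norm_mul]
        exact mul_le_of_le_one_left (norm_nonneg _) (hG.norm_lam_le t)
      push_cast
      linarith
  intro k
  refine (hsum k).trans ?_
  have hgeo : ∑ i ∈ Finset.range k, η' ^ i ≤ 1 / (1 - η') := by
    have := Summable.sum_le_tsum (Finset.range k) (fun i _ => pow_nonneg hη'0.le i)
      (summable_geometric_of_lt_one hη'0.le hη'1)
    rwa [tsum_geometric_of_lt_one hη'0.le hη'1, ← one_div] at this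
  have hk : (0:ℝ) ≤ k := k.cast_nonneg
  have ht2 : |t| * |t| = t ^ 2 := by rw [← sq, sq_abs]
  have h0 : 0 ≤ 1 / (1 - η') := by positivity
  calc BE * |t| * (C₁ * K) * (∑ i ∈ Finset.range k, η' ^ i + k * |t|)
      ≤ BE * |t| * (C₁ * K) * (1 / (1 - η') + k * |t|) := by gcongr
    _ = BE * C₁ * K * (1 / (1 - η') * |t| + k * (|t| * |t|)) := by ring
    _ ≤ BE * C₁ * K * ((1 / (1 - η') + 1) * (|t| + k * t ^ 2)) := by
        rw [ht2]
        gcongr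
        have : 0 ≤ k * t ^ 2 := by positivity
        have := mul_nonneg h0 this
        linarith
    _ = _ := by ring

/-- If `k (lam t - 1)` converges along `t → 0`, `k t² → 0`, then the characteristic functions
converge. -/
theorem Obs.limit {G : ℕ → ℝ → ℝ} {C : ℝ} (hG : S.Obs G C) {t : ℕ → ℝ} {k : ℕ → ℕ} {z : ℂ}
    (ht : Tendsto t atTop (𝓝 0)) (hk : Tendsto k atTop atTop)
    (hkt : Tendsto (fun n => k n * t n ^ 2) atTop (𝓝 0))
    (hz : Tendsto (fun n => k n * (S.lam G (t n) - 1)) atTop (𝓝 z)) {u : ℝ → ℂ} {K : ℝ}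
    (hu : S.HB u K) :
    Tendsto (fun n => ∫ y in Y, (S.Lt G (t n))^[k n] u y) atTop
      (𝓝 (Complex.exp z * ∫ y in Y, u y)) := by
  obtain ⟨C', t₀, ht₀, h⟩ := hG.perturb
  have h1 : Tendsto (fun n => (S.lam G (t n)) ^ k n * ∫ y in Y, u y) atTop
      (𝓝 (Complex.exp z * ∫ y in Y, u y)) := by
    refine Tendsto.mul_const _ ?_
    have := tendsto_pow_exp hk hz
    simpa using this
  have h2 : Tendsto (fun n => C' * K * (|t n| + k n * t n ^ 2)) atTop (𝓝 0) := by
    have := (ht.abs.add hkt).const_mul (C' * K)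
    simpa using this
  have h3 : Tendsto (fun n => (∫ y in Y, (S.Lt G (t n))^[k n] u y) -
      S.lam G (t n) ^ k n * ∫ y in Y, u y) atTop (𝓝 0) := by
    refine squeeze_zero_norm' ?_ h2
    have : ∀ᶠ n in atTop, |t n| < t₀ := by
      have := ht.abs
      rw [abs_zero] at this
      exact this.eventually (gt_mem_nhds ht₀)
    filter_upwards [this] with n hn using h (t n) hn.le u K hu (k n)
  simpa using h3.add h1

end Sys
end LSV

namespace LSV
variable {α : ℝ}

/-! ### First entrance and first return to `(1/2, 1]` -/

/-- The first entrance time into `(1/2, 1]`: the index `n` with `X (n+1) < x ≤ X n`. -/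
noncomputable def ent (α x : ℝ) : ℕ := sInf {n : ℕ | X α (n + 1) < x}

/-- The first return time to `(1/2, 1]`. -/
noncomputable def ret (α x : ℝ) : ℕ := ent α (lsv α x) + 1

/-- The point of first entrance into `(1/2, 1]`. -/
noncomputable def land (α x : ℝ) : ℝ := (lsv α)^[ent α x] x

/-- The first return map to `(1/2, 1]`. -/
noncomputable def Ret (α x : ℝ) : ℝ := (lsv α)^[ret α x] x

/-- The inverse branches of the first return map. -/
noncomputable def psi (α : ℝ) (n : ℕ) (y : ℝ) : ℝ := (1 + chi α n y) / 2

lemma X_le_one (hα : 0 < α) (n : ℕ) : X α n ≤ 1 := (X_anti hα).antitone n.zero_le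

lemma lsv_left {x : ℝ} (hx : x ≤ 1/2) : lsv α x = T0 α x := by rw [lsv, if_pos hx, T0]

lemma lsv_right {x : ℝ} (hx : 1/2 < x) : lsv α x = 2 * x - 1 := by rw [lsv, if_neg (not_le.2 hx)]

lemma measurable_lsv : Measurable (lsv α) := by
  unfold lsv
  refine Measurable.ite measurableSet_Iic ?_ ?_
  · fun_prop
  · fun_prop

lemma ent_spec (hα : 0 < α) {x : ℝ} (hx : 0 < x) : X α (ent α x + 1) < x := by
  have hne : {n : ℕ | X α (n + 1) < x}.Nonempty := by
    have h := ((tendsto_X hα).comp (tendsto_add_atTop_nat 1)).eventually (gt_mem_nhds hx)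
    exact h.exists
  exact Nat.sInf_mem hne

lemma ent_le {x : ℝ} {n : ℕ} (h : X α (n + 1) < x) : ent α x ≤ n := Nat.sInf_le h

lemma ent_eq (hα : 0 < α) {x : ℝ} {n : ℕ} (h : X α (n + 1) < x) (h' : x ≤ X α n) :
    ent α x = n := by
  refine le_antisymm (ent_le h) ?_
  by_contra hlt
  have h1 := ent_spec hα ((X_pos hα _).trans h)
  have h2 := (X_anti hα).antitone (show ent α x + 1 ≤ n by omega)
  linarith

lemma le_X_ent {x : ℝ} (hx1 : x ≤ 1) : x ≤ X α (ent α x) := by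
  rcases Nat.eq_zero_or_pos (ent α x) with h | h
  · rw [h]; exact hx1
  · by_contra hlt
    have := ent_le (n := ent α x - 1) (α := α) (x := x) (by
      rw [Nat.sub_add_cancel h]; exact not_le.1 hlt)
    omega

lemma ent_eq_zero {x : ℝ} (hx : x ≤ 0) (hα : 0 < α) : ent α x = 0 := by
  have : {n : ℕ | X α (n + 1) < x} = ∅ := by
    ext n
    simpa using hx.trans (X_pos hα (n+1)).le
  rw [ent, this, Nat.sInf_empty]

lemma measurable_ent (hα : 0 < α) : Measurable (ent α) := by
  refine measurable_to_countable' fun n => ?_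
  have : ent α ⁻¹' {n} = (Set.Iic 0 ∩ {_x | n = 0}) ∪
      (Set.Ioi 0 ∩ Set.Ioi (X α (n+1)) ∩ ({_x | n = 0} ∪ Set.Iic (X α n))) := by
    ext x
    simp only [Set.mem_preimage, Set.mem_singleton_iff, Set.mem_union, Set.mem_inter_iff,
      Set.mem_Iic, Set.mem_ofPred_eq, Set.mem_Ioi]
    constructor
    · rintro rfl
      rcases le_or_gt x 0 with h | h
      · exact Or.inl ⟨h, ent_eq_zero h hα⟩
      · refine Or.inr ⟨⟨h, ent_spec hα h⟩, ?_⟩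
        rcases Nat.eq_zero_or_pos (ent α x) with h0 | h0
        · exact Or.inl h0
        · right
          by_contra hlt
          have := ent_le (n := ent α x - 1) (α := α) (x := x) (by
            rw [Nat.sub_add_cancel h0]; exact not_le.1 hlt)
          omega
    · rintro (⟨h, rfl⟩ | ⟨⟨h, h1⟩, h2⟩)
      · exact ent_eq_zero h hα
      · rcases h2 with h2 | h2
        · subst h2
          have := ent_le h1
          omega
        · exact ent_eq hα h1 h2
  rw [this]
  exact (measurableSet_Iic.inter (MeasurableSet.const _)).union
    ((measurableSet_Ioi.inter measurableSet_Ioi).inter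
      ((MeasurableSet.const _).union measurableSet_Iic))

lemma measurable_ret (hα : 0 < α) : Measurable (ret α) :=
  ((measurable_ent hα).comp measurable_lsv).add_const 1

/-- Evaluation of a sequence of measurable functions at a measurable random index. -/
lemma measurable_eval_nat {β : Type*} [MeasurableSpace β] {F : ℕ → ℝ → β}
    (hF : ∀ n, Measurable (F n)) {N : ℝ → ℕ} (hN : Measurable N) :
    Measurable fun x => F (N x) x :=
  (measurable_from_prod_countable_right (f := fun p : ℕ × ℝ => F p.1 p.2) hF).comp
    (hN.prodMk measurable_id)

lemma measurable_iter (n : ℕ) : Measurable ((lsv α)^[n]) := measurable_lsv.iterate n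

lemma measurable_land (hα : 0 < α) : Measurable (land α) :=
  measurable_eval_nat (measurable_iter (α := α)) (measurable_ent hα)

lemma measurable_Ret (hα : 0 < α) : Measurable (Ret α) :=
  measurable_eval_nat (measurable_iter (α := α)) (measurable_ret hα)

lemma measurable_birkhoff {T f : ℝ → ℝ} (hT : Measurable T) (hf : Measurable f) (n : ℕ) :
    Measurable (birkhoffSum T f n) := by
  unfold birkhoffSum
  exact Finset.measurable_sum _ fun i _ => hf.comp (hT.iterate i)

/-! ### Inverse branches -/

lemma chi_mem (hα : 0 < α) (n : ℕ) {y : ℝ} (hy : y ∈ Set.Ioc (1/2 : ℝ) 1) :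
    X α (n + 1) < chi α n y ∧ chi α n y ≤ X α n := by
  constructor
  · rw [← chi_half hα]; exact chi_strictMono hα n (by norm_num) hy.1
  · exact chi_mono hα n (by linarith [hy.1]) hy.2

lemma chi_le_one (hα : 0 < α) (n : ℕ) {y : ℝ} (hy : y ∈ Y) : chi α n y ≤ 1 :=
  (chi_mono hα n (by linarith [hy.1]) hy.2).trans (X_le_one hα n)

lemma ent_chi (hα : 0 < α) (n : ℕ) {y : ℝ} (hy : y ∈ Set.Ioc (1/2 : ℝ) 1) :
    ent α (chi α n y) = n := ent_eq hα (chi_mem hα n hy).1 (chi_mem hα n hy).2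

lemma lsv_chi_succ (hα : 0 < α) (n : ℕ) {y : ℝ} (hy : y ∈ Set.Ioc (1/2 : ℝ) 1) :
    lsv α (chi α (n + 1) y) = chi α n y := by
  have h1 : chi α (n+1) y ≤ 1/2 := (chi_mem hα (n+1) hy).2.trans (by
    rw [← X_one hα]; exact (X_anti hα).antitone (by omega))
  rw [lsv_left h1, chi_succ, T0_q hα (chi_pos hα n (by linarith [hy.1])).le]

lemma iter_chi (hα : 0 < α) (n k : ℕ) {y : ℝ} (hy : y ∈ Set.Ioc (1/2 : ℝ) 1) :
    (lsv α)^[k] (chi α (n + k) y) = chi α n y := by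
  induction k with
  | zero => rfl
  | succ k ih => rw [Function.iterate_succ_apply, ← add_assoc, lsv_chi_succ hα _ hy, ih]

lemma iter_chi' (hα : 0 < α) (n : ℕ) {y : ℝ} (hy : y ∈ Set.Ioc (1/2 : ℝ) 1) :
    (lsv α)^[n] (chi α n y) = y := by
  have := iter_chi hα 0 n hy
  rwa [zero_add, chi_zero] at this

lemma land_chi (hα : 0 < α) (n : ℕ) {y : ℝ} (hy : y ∈ Set.Ioc (1/2 : ℝ) 1) :
    land α (chi α n y) = y := by rw [land, ent_chi hα n hy, iter_chi' hα n hy]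

/-- Every point of `(0, 1]` is `chi α n y` with `n` its entrance time and `y` its landing point. -/
lemma chi_land (hα : 0 < α) {x : ℝ} (hx : x ∈ Set.Ioc (0:ℝ) 1) :
    land α x ∈ Set.Ioc (1/2 : ℝ) 1 ∧ chi α (ent α x) (land α x) = x := by
  have key : ∀ n : ℕ, ∀ x : ℝ, X α (n+1) < x → x ≤ X α n →
      (lsv α)^[n] x ∈ Set.Ioc (1/2 : ℝ) 1 ∧ chi α n ((lsv α)^[n] x) = x := by
    intro n
    induction n with
    | zero =>
      intro x h1 h2
      rw [zero_add, X_one hα] at h1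
      exact ⟨⟨h1, h2⟩, rfl⟩
    | succ n ih =>
      intro x h1 h2
      have hx0 : 0 < x := (X_pos hα _).trans h1
      have hxh : x ≤ 1/2 := h2.trans (by rw [← X_one hα]; exact (X_anti hα).antitone (by omega))
      have h3 : X α (n+1) < T0 α x := by
        rw [← T0_X hα]
        exact T0_strictMonoOn hα (X_pos hα _).le hx0.le h1
      have h4 : T0 α x ≤ X α n := by
        rw [← T0_X hα]
        exact (T0_strictMonoOn hα).monotoneOn hx0.le (X_pos hα _).le h2
      have := ih _ h3 h4
      rw [Function.iterate_succ_apply, lsv_left hxh]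
      refine ⟨this.1, ?_⟩
      rw [chi_succ, this.2, q_T0 hα hx0.le]
  exact key _ x (ent_spec hα hx.1) (le_X_ent hx.2)

lemma psi_mem (hα : 0 < α) (n : ℕ) {y : ℝ} (hy : y ∈ Y) : psi α n y ∈ Set.Ioc (1/2 : ℝ) 1 := by
  have h1 := chi_pos hα n (show 0 < y by linarith [hy.1])
  have h2 := chi_le_one hα n hy
  constructor <;> rw [psi] <;> linarith

lemma lsv_psi (hα : 0 < α) (n : ℕ) {y : ℝ} (hy : y ∈ Y) : lsv α (psi α n y) = chi α n y := by
  rw [lsv_right (psi_mem hα n hy).1, psi]; ring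

lemma ret_psi (hα : 0 < α) (n : ℕ) {y : ℝ} (hy : y ∈ Set.Ioc (1/2 : ℝ) 1) :
    ret α (psi α n y) = n + 1 := by
  rw [ret, lsv_psi hα n (Set.Ioc_subset_Icc_self hy), ent_chi hα n hy]

lemma Ret_psi (hα : 0 < α) (n : ℕ) {y : ℝ} (hy : y ∈ Set.Ioc (1/2 : ℝ) 1) :
    Ret α (psi α n y) = y := by
  rw [Ret, ret_psi hα n hy, Function.iterate_succ_apply,
    lsv_psi hα n (Set.Ioc_subset_Icc_self hy), iter_chi' hα n hy]

/-- The image of `(1/2, 1]` under the `n`-th inverse branch. -/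
lemma psi_image (hα : 0 < α) (n : ℕ) :
    psi α n '' Set.Ioc (1/2) 1 = Set.Ioc ((1 + X α (n+1)) / 2) ((1 + X α n) / 2) := by
  ext x
  constructor
  · rintro ⟨y, hy, rfl⟩
    have := chi_mem hα n hy
    constructor <;> rw [psi] <;> linarith
  · rintro ⟨h1, h2⟩
    have h3 : 2 * x - 1 ∈ Set.Ioc (0:ℝ) 1 := by
      constructor
      · linarith [X_pos hα (n+1)]
      · linarith [X_le_one hα n]
    have h4 : ent α (2 * x - 1) = n := ent_eq hα (by linarith) (by linarith)
    obtain ⟨h5, h6⟩ := chi_land hα h3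
    rw [h4] at h6
    exact ⟨_, h5, by rw [psi, h6]; ring⟩

lemma psi_image_union (hα : 0 < α) :
    ⋃ n, psi α n '' Set.Ioc (1/2) 1 = Set.Ioc (1/2 : ℝ) 1 := by
  ext x
  simp only [Set.mem_iUnion]
  constructor
  · rintro ⟨n, y, hy, rfl⟩
    exact psi_mem hα n (Set.Ioc_subset_Icc_self hy)
  · intro hx
    have h3 : 2 * x - 1 ∈ Set.Ioc (0:ℝ) 1 := ⟨by linarith [hx.1], by linarith [hx.2]⟩
    obtain ⟨h5, h6⟩ := chi_land hα h3
    exact ⟨_, _, h5, by rw [psi, h6]; ring⟩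

lemma psi_disjoint (hα : 0 < α) :
    Pairwise (Function.onFun Disjoint fun n => psi α n '' Set.Ioc (1/2) 1) := by
  intro a b hab
  rw [Function.onFun, Set.disjoint_left]
  rintro _ ⟨y, hy, rfl⟩ ⟨z, hz, h⟩
  apply hab
  have := ret_psi hα a hy
  rw [← h, ret_psi hα b hz] at this
  omega

lemma psi_injOn (hα : 0 < α) (n : ℕ) : Set.InjOn (psi α n) (Set.Ioc (1/2) 1) := by
  intro y hy z hz h
  rw [← Ret_psi hα n hy, h, Ret_psi hα n hz]

lemma hasDerivAt_psi (hα : 0 < α) (n : ℕ) {y : ℝ} (hy : 0 < y) :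
    HasDerivAt (psi α n) (dchi α n y / 2) y :=
  ((hasDerivAt_chi hα n hy).const_add 1).div_const 2

lemma restrict_Y : volume.restrict Y = volume.restrict (Set.Ioc (1/2 : ℝ) 1) :=
  (restrict_Ioc_eq_restrict_Icc).symm

lemma hasDerivWithinAt_psi (hα : 0 < α) (n : ℕ) : ∀ y ∈ Set.Ioc (1/2 : ℝ) 1,
    HasDerivWithinAt (psi α n) (dchi α n y / 2) (Set.Ioc (1/2) 1) y := fun y hy =>
  (hasDerivAt_psi hα n (by linarith [hy.1])).hasDerivWithinAt

lemma abs_dchi_half (hα : 0 < α) (n : ℕ) {y : ℝ} (hy : y ∈ Set.Ioc (1/2 : ℝ) 1) :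
    |dchi α n y / 2| = dchi α n y / 2 :=
  abs_of_pos (half_pos (dchi_pos hα n (by linarith [hy.1])))

lemma cov_hasSum {E : Type*} [NormedAddCommGroup E] [NormedSpace ℝ E] (hα : 0 < α) {v : ℝ → E}
    (hv : IntegrableOn v (Set.Ioc (1/2) 1)) :
    HasSum (fun n => ∫ y in Set.Ioc (1/2 : ℝ) 1, (dchi α n y / 2) • v (psi α n y))
      (∫ y in Set.Ioc (1/2 : ℝ) 1, v y) := by
  have hm : ∀ n, MeasurableSet (psi α n '' Set.Ioc (1/2) 1) := fun n => by
    rw [psi_image hα]; exact measurableSet_Ioc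
  have himg : ∀ n : ℕ, ∫ y in psi α n '' Set.Ioc (1/2) 1, v y =
      ∫ y in Set.Ioc (1/2 : ℝ) 1, (dchi α n y / 2) • v (psi α n y) := by
    intro n
    rw [integral_image_eq_integral_abs_deriv_smul measurableSet_Ioc (hasDerivWithinAt_psi hα n)
      (psi_injOn hα n)]
    exact setIntegral_congr_fun measurableSet_Ioc fun y hy => by simp only [abs_dchi_half hα n hy]
  have := hasSum_integral_iUnion hm (psi_disjoint hα) (f := v) (μ := volume) (by
    rw [psi_image_union hα]; exact hv)
  rw [psi_image_union hα] at this
  rwa [funext himg] at this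

/-- Change of variables along the inverse branches of the first return map. -/
lemma cov {E : Type*} [NormedAddCommGroup E] [NormedSpace ℝ E] [CompleteSpace E] (hα : 0 < α)
    {w : ℝ → E} (hw : IntegrableOn w Y) :
    ∫ y in Y, ∑' n, (dchi α n y / 2) • w (psi α n y) = ∫ y in Y, w y := by
  rw [restrict_Y]
  have hw' : IntegrableOn w (Set.Ioc (1/2) 1) := hw.mono_set Set.Ioc_subset_Icc_self
  have h1 := cov_hasSum hα hw'
  have h2 := cov_hasSum hα (v := fun y => ‖w y‖) hw'.norm
  refine HasSum.unique (hasSum_integral_of_summable_integral_norm (F := fun n y =>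
    (dchi α n y / 2) • w (psi α n y)) (μ := volume.restrict (Set.Ioc (1/2) 1)) (fun n => ?_) ?_) h1
  · have := (integrableOn_image_iff_integrableOn_abs_deriv_smul measurableSet_Ioc
      (hasDerivWithinAt_psi hα n) (psi_injOn hα n) w).1 (hw'.mono_set
        ((Set.subset_iUnion (fun n => psi α n '' Set.Ioc (1/2) 1) n).trans
          (psi_image_union hα).subset))
    exact this.congr_fun (fun y hy => by simp only [abs_dchi_half hα n hy]) measurableSet_Ioc
  · refine h2.summable.congr fun n => ?_
    refine setIntegral_congr_fun measurableSet_Ioc fun y hy => ?_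
    simp only [smul_eq_mul]
    rw [norm_smul, Real.norm_eq_abs, abs_dchi_half hα n hy]

/-! ### The induced system -/

/-- The first return map to `[1/2, 1]` as a full-branched expanding system, acting on functions of
Hölder exponent `r`. -/
noncomputable def sys (hα : 0 < α) (hα1 : α < 1) (r : ℝ) (hr : 0 < r) (hr1 : r ≤ 1) : Sys where
  r := r
  ψ := psi α
  J := fun n y => dchi α n y / 2
  j := fun n => dchi α n (1/2) / 2
  D := (dchi_distortion hα hα1).choose
  r_pos := hr
  r_le := hr1
  D_pos := (dchi_distortion hα hα1).choose_spec.1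
  ψ_mem := fun n y hy => Set.Ioc_subset_Icc_self (psi_mem hα n hy)
  ψ_contr := fun n y hy z hz => by
    have := chi_lip hα n (show 0 < y by linarith [hy.1]) (show 0 < z by linarith [hz.1])
    rw [psi, psi, ← sub_div, add_sub_add_left_eq_sub, abs_div, abs_two]
    linarith
  J_pos := fun n y hy => half_pos (dchi_pos hα n (by linarith [hy.1]))
  J_le := fun n y hy => by
    have := dchi_le_half hα n hy.1
    linarith
  J_dist := fun n y hy z hz => by
    obtain ⟨h0, h⟩ := (dchi_distortion hα hα1).choose_spec
    have h1 := h n y z hy.1 hz.1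
    set D := (dchi_distortion hα hα1).choose
    have h2 : |y - z| ≤ |y - z| ^ r := by
      have h3 : |y - z| ≤ 1 := by
        rw [abs_le]
        constructor <;> linarith [hy.1, hy.2, hz.1, hz.2]
      calc |y - z| = |y - z| ^ (1:ℝ) := (rpow_one _).symm
        _ ≤ _ := rpow_le_rpow_of_exponent_ge' (abs_nonneg _) h3 hr.le hr1
    have h3 : rexp (D * |y - z|) ≤ rexp (D * |y - z| ^ r) := by gcongr
    have h4 := (dchi_pos hα n (show 0 < z by linarith [hz.1])).le
    have h5 := mul_le_mul_of_nonneg_right h3 h4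
    linarith
  summ := by
    refine ((summable_dchi hα hα1).div_const 2).congr fun n => ?_
    ring
  integ := fun u hu => cov hα hu.integrableOn_Icc

end LSV

namespace LSV
variable {α : ℝ}

/-! ### Limit theorems for the first return map -/

namespace Sys

/-- Hölder functions are dense in `L¹([1/2, 1])`. -/
lemma exists_hb_approx (S : Sys) {w : ℝ → ℂ} (hw : IntegrableOn w Y) {ε : ℝ} (hε : 0 < ε) :
    ∃ u K, S.HB u K ∧ ∫ y in Y, ‖w y - u y‖ ≤ ε := by
  obtain ⟨u, hu1, hu2, hu3⟩ := MemLp.exist_eLpNorm_sub_le (μ := volume.restrict Y)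
    ENNReal.one_ne_top le_rfl (memLp_one_iff_integrable.2 hw) hε
  obtain ⟨C, hC⟩ := hu2.lipschitzWith_of_hasCompactSupport hu1 (by simp)
  obtain ⟨B, hB⟩ := hu1.exists_bound_of_continuous hu2.continuous
  refine ⟨u, max B C, ⟨fun y _ => (hB y).trans (le_max_left _ _), fun y hy z hz => ?_⟩, ?_⟩
  · have h1 := hC.dist_le_mul y z
    rw [dist_eq_norm, Real.dist_eq] at h1
    have h2 : |y - z| ≤ |y - z| ^ S.r := by
      have h3 : |y - z| ≤ 1 := by
        rw [abs_le]
        constructor <;> linarith [hy.1, hy.2, hz.1, hz.2]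
      calc |y - z| = |y - z| ^ (1:ℝ) := (rpow_one _).symm
        _ ≤ _ := rpow_le_rpow_of_exponent_ge' (abs_nonneg _) h3 S.r_pos.le S.r_le
    refine h1.trans (mul_le_mul (le_max_right _ _) h2 (abs_nonneg _) ?_)
    exact C.2.trans (le_max_right _ _)
  · rw [eLpNorm_one_eq_lintegral_enorm] at hu3
    have hi : IntegrableOn (fun y => w y - u y) Y :=
      hw.sub (hu2.continuous.continuousOn.integrableOn_Icc)
    rw [integral_norm_eq_lintegral_enorm hi.aestronglyMeasurable]
    exact ENNReal.toReal_le_of_le_ofReal hε.le hu3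

lemma integrableOn_bdd_mul {Φ : ℝ → ℂ} (hm : Measurable Φ) {B : ℝ} (hB : ∀ x, ‖Φ x‖ ≤ B)
    {w : ℝ → ℂ} {s : Set ℝ} (hw : IntegrableOn w s) : IntegrableOn (fun x => Φ x * w x) s :=
  Integrable.bdd_mul (c := B) hw hm.aestronglyMeasurable (Eventually.of_forall hB)

/-- By density in `L¹`, a limit known against all Hölder densities holds against all integrable
ones. -/
lemma tendsto_of_hb (S : Sys) {Φ : ℕ → ℝ → ℂ} (hm : ∀ n, Measurable (Φ n)) {B : ℝ}
    (hB : ∀ n x, ‖Φ n x‖ ≤ B) {c : ℂ}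
    (h : ∀ u K, S.HB u K → Tendsto (fun n => ∫ y in Y, Φ n y * u y) atTop (𝓝 (c * ∫ y in Y, u y)))
    {w : ℝ → ℂ} (hw : IntegrableOn w Y) :
    Tendsto (fun n => ∫ y in Y, Φ n y * w y) atTop (𝓝 (c * ∫ y in Y, w y)) := by
  have hB0 : 0 ≤ B := (norm_nonneg _).trans (hB 0 0)
  rw [Metric.tendsto_atTop]
  intro ε hε
  set δ := ε / (2 * (B + ‖c‖ + 1)) with hδ
  have hden : 0 < 2 * (B + ‖c‖ + 1) := by positivity
  have hδ0 : 0 < δ := by positivity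
  obtain ⟨u, K, hu, hwu⟩ := S.exists_hb_approx hw hδ0
  obtain ⟨N, hN⟩ := Metric.tendsto_atTop.1 (h u K hu) (ε/2) (by positivity)
  refine ⟨N, fun n hn => ?_⟩
  have h1 := hN n hn
  rw [dist_eq_norm] at h1 ⊢
  have hd : IntegrableOn (fun y => w y - u y) Y := hw.sub hu.integrableOn
  have e1 : ∫ y in Y, Φ n y * w y = (∫ y in Y, Φ n y * (w y - u y)) + ∫ y in Y, Φ n y * u y := by
    rw [← integral_add (integrableOn_bdd_mul (hm n) (hB n) hd)
      (integrableOn_bdd_mul (hm n) (hB n) hu.integrableOn)]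
    congr 1; funext y; ring
  have e2 : ∫ y in Y, w y = (∫ y in Y, (w y - u y)) + ∫ y in Y, u y := by
    rw [integral_sub hw hu.integrableOn]; ring
  have b1 : ‖∫ y in Y, Φ n y * (w y - u y)‖ ≤ B * δ := by
    refine (norm_integral_le_integral_norm _).trans ?_
    calc ∫ y in Y, ‖Φ n y * (w y - u y)‖ ≤ ∫ y in Y, B * ‖w y - u y‖ := by
          refine integral_mono (integrableOn_bdd_mul (hm n) (hB n) hd).norm
            (hd.norm.const_mul B) fun y => ?_
          simp only [norm_mul]
          exact mul_le_mul_of_nonneg_right (hB n y) (norm_nonneg _)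
      _ = B * ∫ y in Y, ‖w y - u y‖ := integral_const_mul _ _
      _ ≤ _ := by gcongr
  have b2 : ‖∫ y in Y, (w y - u y)‖ ≤ δ := (norm_integral_le_integral_norm _).trans hwu
  have e3 : (∫ y in Y, Φ n y * w y) - c * ∫ y in Y, w y = (∫ y in Y, Φ n y * (w y - u y)) -
      c * (∫ y in Y, (w y - u y)) + ((∫ y in Y, Φ n y * u y) - c * ∫ y in Y, u y) := by
    rw [e1, e2]; ring
  rw [e3]
  have b3 : ‖c * ∫ y in Y, (w y - u y)‖ ≤ ‖c‖ * δ := by rw [norm_mul]; gcongr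
  have hfin : (B + ‖c‖) * δ ≤ ε / 2 := by
    rw [hδ, mul_div_assoc', div_le_div_iff₀ hden (by norm_num)]
    nlinarith [norm_nonneg c]
  calc _ ≤ ‖∫ y in Y, Φ n y * (w y - u y)‖ + ‖c * ∫ y in Y, (w y - u y)‖ +
        ‖(∫ y in Y, Φ n y * u y) - c * ∫ y in Y, u y‖ :=
        (norm_add_le _ _).trans (by gcongr; exact norm_sub_le _ _)
    _ < B * δ + ‖c‖ * δ + ε / 2 := by linarith
    _ ≤ ε := by linarith

end Sys

section induced
variable {r : ℝ} (hα : 0 < α) (hα1 : α < 1) (hr : 0 < r) (hr1 : r ≤ 1)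

lemma ae_Y_of_Ioc {P : ℝ → Prop} (h : ∀ y ∈ Set.Ioc (1/2 : ℝ) 1, P y) :
    ∀ᵐ y ∂(volume.restrict Y), P y := by
  rw [restrict_Y]
  exact (ae_restrict_iff' measurableSet_Ioc).2 (Eventually.of_forall h)

lemma measurable_cexp_I {g : ℝ → ℝ} (hg : Measurable g) (t : ℝ) :
    Measurable fun x => Complex.exp (Complex.I * (t * g x : ℝ)) := by fun_prop

/-- Duality between the twisted transfer operator and composition with the first return map. -/
lemma dual {g : ℝ → ℝ} (hg : Measurable g) {G : ℕ → ℝ → ℝ}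
    (hgG : ∀ n, ∀ y ∈ Set.Ioc (1/2 : ℝ) 1, g (psi α n y) = G n y) {F : ℝ → ℂ} (hF : Measurable F)
    {B : ℝ} (hB : ∀ x, ‖F x‖ ≤ B) (t : ℝ) {w : ℝ → ℂ} (hw : IntegrableOn w Y) :
    ∫ x in Y, (Complex.exp (Complex.I * (t * g x : ℝ)) * F (Ret α x)) * w x =
      ∫ y in Y, F y * (sys hα hα1 r hr hr1).Lt G t w y := by
  have hm : Measurable fun x => Complex.exp (Complex.I * (t * g x : ℝ)) * F (Ret α x) :=
    (measurable_cexp_I hg t).mul (hF.comp (measurable_Ret hα))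
  rw [← cov hα (Sys.integrableOn_bdd_mul hm (B := B) (fun x => by
    rw [Sys.norm_tw]; exact hB _) hw)]
  refine integral_congr_ae (ae_Y_of_Ioc fun y hy => ?_)
  simp only [Sys.Lt]
  rw [← tsum_mul_left]
  refine tsum_congr fun n => ?_
  rw [hgG n y hy, Ret_psi hα n hy]
  simp only [sys]
  rw [mul_smul_comm]
  congr 1
  ring

lemma measurable_birkhoff_Ret {g : ℝ → ℝ} (hα : 0 < α) (hg : Measurable g) (k : ℕ) :
    Measurable (birkhoffSum (Ret α) g k) := by
  unfold birkhoffSum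
  exact Finset.measurable_sum _ fun i _ => hg.comp ((measurable_Ret hα).iterate i)

lemma dual_iter {g : ℝ → ℝ} (hg : Measurable g) {G : ℕ → ℝ → ℝ}
    (hgG : ∀ n, ∀ y ∈ Set.Ioc (1/2 : ℝ) 1, g (psi α n y) = G n y) {C : ℝ}
    (hG : (sys hα hα1 r hr hr1).Obs G C) {F : ℝ → ℂ} (hF : Measurable F)
    {B : ℝ} (hB : ∀ x, ‖F x‖ ≤ B) (t : ℝ) (k : ℕ) : ∀ {u : ℝ → ℂ} {K : ℝ},
    (sys hα hα1 r hr hr1).HB u K →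
    ∫ x in Y, (Complex.exp (Complex.I * (t * birkhoffSum (Ret α) g k x : ℝ)) *
      F ((Ret α)^[k] x)) * u x =
      ∫ y in Y, F y * ((sys hα hα1 r hr hr1).Lt G t)^[k] u y := by
  induction k with
  | zero => intro u K hu; simp
  | succ k ih =>
    intro u K hu
    obtain ⟨B', hB', h⟩ := hG.Lt_hb
    rw [Function.iterate_succ_apply, ← ih (h t u K hu), ← dual hα hα1 hr hr1 hg hgG
      (F := fun x => Complex.exp (Complex.I * (t * birkhoffSum (Ret α) g k x : ℝ)) *
      F ((Ret α)^[k] x)) ((measurable_cexp_I (measurable_birkhoff_Ret hα hg k) t).mul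
        (hF.comp ((measurable_Ret hα).iterate k))) (B := B) (fun x => by
        rw [Sys.norm_tw]; exact hB _) t hu.integrableOn]
    congr 1
    funext x
    rw [birkhoffSum_succ', Function.iterate_succ_apply, ← mul_assoc (Complex.exp _),
      ← Complex.exp_add]
    push_cast
    ring_nf

/-- The characteristic functions of the Birkhoff sums of the first return map, against an arbitrary
integrable density. -/
theorem induced_limit {g : ℝ → ℝ} (hg : Measurable g) {G : ℕ → ℝ → ℝ}
    (hgG : ∀ n, ∀ y ∈ Set.Ioc (1/2 : ℝ) 1, g (psi α n y) = G n y) {C : ℝ}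
    (hG : (sys hα hα1 r hr hr1).Obs G C) {t : ℕ → ℝ} {k : ℕ → ℕ} {z : ℂ}
    (ht : Tendsto t atTop (𝓝 0)) (hk : Tendsto k atTop atTop)
    (hkt : Tendsto (fun n => k n * t n ^ 2) atTop (𝓝 0))
    (hz : Tendsto (fun n => k n * ((sys hα hα1 r hr hr1).lam G (t n) - 1)) atTop (𝓝 z))
    {w : ℝ → ℂ} (hw : IntegrableOn w Y) :
    Tendsto (fun n => ∫ x in Y, Complex.exp (Complex.I *
      (t n * birkhoffSum (Ret α) g (k n) x : ℝ)) * w x) atTop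
      (𝓝 (Complex.exp z * ∫ y in Y, w y)) := by
  refine (sys hα hα1 r hr hr1).tendsto_of_hb (B := 1) (fun n => ?_) (fun n x => ?_)
    (fun u K hu => ?_) hw
  · exact measurable_cexp_I (measurable_birkhoff_Ret hα hg _) _
  · rw [Complex.norm_exp_I_mul_ofReal]
  · refine (hG.limit ht hk hkt hz hu).congr fun n => ?_
    have := dual_iter hα hα1 hr hr1 hg hgG hG (F := fun _ => 1) measurable_const (B := 1)
      (by simp) (t n) (k n) hu
    simpa using this.symm

lemma Obs_zero (S : Sys) : S.Obs (fun _ _ => 0) 0 := ⟨by simp, by simp⟩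

lemma Lt_zero (S : Sys) : S.Lt (fun _ _ => 0) 0 = S.L := by
  funext u y
  simp [Sys.Lt, Sys.L]

/-- Convergence to equilibrium of the first return map. -/
theorem equidist {F : ℝ → ℂ} (hF : Measurable F) {B : ℝ} (hB : ∀ x, ‖F x‖ ≤ B)
    {w : ℝ → ℂ} (hw : IntegrableOn w Y) :
    Tendsto (fun k => ∫ x in Y, F ((Ret α)^[k] x) * w x) atTop
      (𝓝 ((∫ y in Y, F y * (sys hα hα1 r hr hr1).H y) * ∫ y in Y, w y)) := by
  set S := sys hα hα1 r hr hr1 with hS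
  have hB0 : 0 ≤ B := (norm_nonneg _).trans (hB 0)
  refine S.tendsto_of_hb (B := B) (fun k => hF.comp ((measurable_Ret hα).iterate k))
    (fun k x => hB _) (fun u K hu => ?_) hw
  have key : ∀ k, ∀ u K, S.HB u K → ∫ x in Y, F ((Ret α)^[k] x) * u x =
      ∫ y in Y, F y * S.L^[k] u y := fun k u K hu => by
    have := dual_iter hα hα1 hr hr1 (g := fun _ => 0) (G := fun _ _ => 0) measurable_const
      (fun _ _ _ => rfl) (Obs_zero _) hF hB 0 k hu
    rw [Lt_zero] at this
    simpa using this
  obtain ⟨hv, hv0⟩ := hu.sub_mean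
  set v := fun y => u y - (∫ y in Y, u y) * S.H y with hvdef
  have hHk : ∀ k, ∀ y ∈ Y, S.L^[k] S.H y = S.H y := by
    intro k
    induction k with
    | zero => intro y hy; rfl
    | succ k ih =>
      intro y hy
      rw [Function.iterate_succ_apply', Sys.L_congr ih hy, Sys.L_H hy]
  have e : ∀ k, ∫ x in Y, F ((Ret α)^[k] x) * u x = (∫ y in Y, F y * S.L^[k] v y) +
      (∫ y in Y, F y * S.H y) * ∫ y in Y, u y := by
    intro k
    have i1 := Sys.integrableOn_bdd_mul (hF.comp ((measurable_Ret hα).iterate k)) (B := B)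
      (fun x => hB _) hv.integrableOn
    have i2 := Sys.integrableOn_bdd_mul (hF.comp ((measurable_Ret hα).iterate k)) (B := B)
      (fun x => hB _) (Sys.H_hb (S := S)).integrableOn
    simp only [Function.comp_def] at i1 i2
    have h1 := key k v _ hv
    have h2 : ∫ x in Y, F ((Ret α)^[k] x) * S.H x = ∫ y in Y, F y * S.H y := by
      rw [key k _ _ Sys.H_hb]
      exact setIntegral_congr_fun measurableSet_Icc fun y hy => by simp only [hHk k y hy]
    rw [← h1, ← h2, mul_comm, ← integral_const_mul,
      ← integral_add i1 (i2.const_mul _)]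
    congr 1; funext x
    simp only [hvdef]
    ring
  have hz : Tendsto (fun k => ∫ y in Y, F y * S.L^[k] v y) atTop (𝓝 0) := by
    have hb : Tendsto (fun k => B * (2 * S.CD * S.η ^ k * ((1 + S.CA) * K)) *
        (volume Y).toReal) atTop (𝓝 0) := by
      have := tendsto_pow_atTop_nhds_zero_of_lt_one (S.η_pos).le S.η_lt_one
      have := ((((this.const_mul (2 * S.CD)).mul_const ((1 + S.CA) * K)).const_mul B).mul_const
        (volume Y).toReal)
      simpa using this
    refine squeeze_zero_norm (fun k => ?_) hb
    have hd := (Sys.decay hv hv0 k).1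
    refine norm_setIntegral_le_of_norm_le_const (by simp [Y]) fun y hy => ?_
    rw [norm_mul]
    exact mul_le_mul (hB y) (hd y hy) (norm_nonneg _) hB0
  have := hz.add_const ((∫ y in Y, F y * S.H y) * ∫ y in Y, u y)
  rw [zero_add] at this
  exact this.congr fun k => (e k).symm

end induced
end LSV

namespace LSV
variable {α : ℝ}

/-! ### Induced observables -/

/-- The observable induced by `f` on `(1/2, 1]`: its sum along an excursion. -/
noncomputable def gs (α : ℝ) (f : ℝ → ℝ) (x : ℝ) : ℝ := birkhoffSum (lsv α) f (ret α x) x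

/-- The induced observable on the `n`-th inverse branch. -/
noncomputable def Gs (α : ℝ) (f : ℝ → ℝ) (n : ℕ) (y : ℝ) : ℝ :=
  f (psi α n y) + ∑ i ∈ Finset.range n, f (chi α (i + 1) y)

lemma measurable_gs (hα : 0 < α) {f : ℝ → ℝ} (hf : Measurable f) : Measurable (gs α f) :=
  measurable_eval_nat (measurable_birkhoff measurable_lsv hf) (measurable_ret hα)

lemma gs_psi (hα : 0 < α) (f : ℝ → ℝ) (n : ℕ) : ∀ y ∈ Set.Ioc (1/2 : ℝ) 1,
    gs α f (psi α n y) = Gs α f n y := by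
  intro y hy
  rw [gs, ret_psi hα n hy, birkhoffSum_succ', lsv_psi hα n (Set.Ioc_subset_Icc_self hy), Gs]
  congr 1
  rw [birkhoffSum, ← Finset.sum_range_reflect]
  refine Finset.sum_congr rfl fun i hi => ?_
  have hi' := Finset.mem_range.1 hi
  have := iter_chi hα (i+1) (n - 1 - i) hy
  rw [show i + 1 + (n - 1 - i) = n by omega] at this
  rw [this]

/-- A bounded measurable function that is `r`-Hölder on `[0, 1]`. -/
structure Nice (f : ℝ → ℝ) (B C r : ℝ) : Prop where
  meas : Measurable f
  bdd : ∀ x, |f x| ≤ B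
  r_pos : 0 < r
  r_le : r ≤ 1
  C_nonneg : 0 ≤ C
  holder : ∀ x ∈ Set.Icc (0:ℝ) 1, ∀ y ∈ Set.Icc (0:ℝ) 1, |f x - f y| ≤ C * |x - y| ^ r

lemma chi_mem_unit (hα : 0 < α) (n : ℕ) {y : ℝ} (hy : y ∈ Y) : chi α n y ∈ Set.Icc (0:ℝ) 1 :=
  ⟨(chi_pos hα n (by linarith [hy.1])).le, chi_le_one hα n hy⟩

lemma psi_mem_unit (hα : 0 < α) (n : ℕ) {y : ℝ} (hy : y ∈ Y) : psi α n y ∈ Set.Icc (0:ℝ) 1 :=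
  ⟨by linarith [(psi_mem hα n hy).1], (psi_mem hα n hy).2⟩

lemma psi_lip (hα : 0 < α) (n : ℕ) {y z : ℝ} (hy : y ∈ Y) (hz : z ∈ Y) :
    |psi α n y - psi α n z| ≤ |y - z| := by
  have := chi_lip hα n (show 0 < y by linarith [hy.1]) (show 0 < z by linarith [hz.1])
  rw [psi, psi, ← sub_div, add_sub_add_left_eq_sub, abs_div, abs_two]
  linarith [abs_nonneg (y - z)]

lemma Nice.obs {f : ℝ → ℝ} {B C r : ℝ} (hf : Nice f B C r) (hα : 0 < α) (hα1 : α < 1) :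
    (sys hα hα1 r hf.r_pos hf.r_le).Obs (Gs α f) (max B C) := by
  constructor
  · intro n y hy
    have h1 : |Gs α f n y| ≤ B * (n + 1) := by
      rw [Gs]
      refine (abs_add_le _ _).trans ?_
      have h2 := Finset.abs_sum_le_sum_abs (fun i => f (chi α (i + 1) y)) (Finset.range n)
      have h3 : ∑ i ∈ Finset.range n, |f (chi α (i + 1) y)| ≤ ∑ i ∈ Finset.range n, B :=
        Finset.sum_le_sum fun i _ => hf.bdd _
      rw [Finset.sum_const, Finset.card_range, nsmul_eq_mul] at h3
      linarith [hf.bdd (psi α n y)]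
    exact h1.trans (by gcongr; exact le_max_left _ _)
  · intro n y hy z hz
    have hrr : (sys hα hα1 r hf.r_pos hf.r_le).r = r := rfl
    rw [hrr]
    have hC := hf.C_nonneg
    have key : ∀ a b : ℝ, a ∈ Set.Icc (0:ℝ) 1 → b ∈ Set.Icc (0:ℝ) 1 → |a - b| ≤ |y - z| →
        |f a - f b| ≤ C * |y - z| ^ r := fun a b ha hb hab =>
      (hf.holder a ha b hb).trans (by
        gcongr
        exact hf.r_pos.le)
    have h1 : |Gs α f n y - Gs α f n z| ≤ C * (n + 1) * |y - z| ^ r := by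
      rw [Gs, Gs, add_sub_add_comm, ← Finset.sum_sub_distrib]
      refine (abs_add_le _ _).trans ?_
      have h2 := Finset.abs_sum_le_sum_abs (fun i => f (chi α (i + 1) y) - f (chi α (i + 1) z))
        (Finset.range n)
      have h3 : ∑ i ∈ Finset.range n, |f (chi α (i + 1) y) - f (chi α (i + 1) z)| ≤
          ∑ i ∈ Finset.range n, C * |y - z| ^ r :=
        Finset.sum_le_sum fun i _ => key _ _ (chi_mem_unit hα _ hy) (chi_mem_unit hα _ hz)
          (chi_lip hα _ (by linarith [hy.1]) (by linarith [hz.1]))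
      rw [Finset.sum_const, Finset.card_range, nsmul_eq_mul] at h3
      have h4 := key _ _ (psi_mem_unit hα n hy) (psi_mem_unit hα n hz) (psi_lip hα n hy hz)
      linarith
    exact h1.trans (by gcongr; exact le_max_right _ _)

/-- `G` is asymptotically `c` times the return time `n + 1`, uniformly on the `n`-th branch. -/
def Asymp (G : ℕ → ℝ → ℝ) (c : ℝ) : Prop :=
  ∀ ε > 0, ∃ N : ℕ, ∀ n ≥ N, ∀ y ∈ Y, |G n y - c * (n + 1)| ≤ ε * (n + 1)

lemma Nice.asymp {f : ℝ → ℝ} {B C r : ℝ} (hf : Nice f B C r) (hα : 0 < α) :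
    Asymp (Gs α f) (f 0) := by
  intro ε hε
  have hC := hf.C_nonneg
  have h1 : Tendsto (fun i : ℕ => C * X α (i+1) ^ r) atTop (𝓝 0) := by
    have := ((tendsto_X hα).comp (tendsto_add_atTop_nat 1)).rpow_const (p := r)
      (Or.inr hf.r_pos.le)
    rw [zero_rpow hf.r_pos.ne'] at this
    simpa using this.const_mul C
  have h2 := h1.cesaro
  have h3 : Tendsto (fun n : ℕ => (n:ℝ)⁻¹ * (2 * B)) atTop (𝓝 0) := by
    simpa using tendsto_inv_atTop_nhds_zero_nat.mul_const (2 * B)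
  have h4 := h2.add h3
  rw [add_zero] at h4
  obtain ⟨N, hN⟩ := (h4.eventually (gt_mem_nhds hε)).exists_forall_of_atTop
  refine ⟨max N 1, fun n hn y hy => ?_⟩
  have h5 := hN n ((le_max_left _ _).trans hn)
  have hn1 : (0:ℝ) < n := by
    have := (le_max_right _ _).trans hn
    exact_mod_cast this
  rw [← mul_add, inv_mul_lt_iff₀ hn1] at h5
  have e : Gs α f n y - f 0 * (n + 1) = (f (psi α n y) - f 0) +
      ∑ i ∈ Finset.range n, (f (chi α (i+1) y) - f 0) := by
    rw [Gs, Finset.sum_sub_distrib, Finset.sum_const, Finset.card_range, nsmul_eq_mul]; ring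
  rw [e]
  have h6 := Finset.abs_sum_le_sum_abs (fun i => f (chi α (i + 1) y) - f 0) (Finset.range n)
  have h7 : ∑ i ∈ Finset.range n, |f (chi α (i + 1) y) - f 0| ≤
      ∑ i ∈ Finset.range n, C * X α (i+1) ^ r := by
    refine Finset.sum_le_sum fun i _ => ?_
    have hp := chi_pos hα (i+1) (show 0 < y by linarith [hy.1])
    refine (hf.holder _ (chi_mem_unit hα _ hy) 0 (by simp)).trans ?_
    rw [sub_zero, abs_of_pos hp]
    have : chi α (i+1) y ≤ X α (i+1) := chi_mono hα _ (by linarith [hy.1]) hy.2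
    gcongr
    exact hf.r_pos.le
  have h8 : |f (psi α n y) - f 0| ≤ 2 * B := (abs_sub _ _).trans (by
    linarith [hf.bdd (psi α n y), hf.bdd 0])
  have := abs_add_le (f (psi α n y) - f 0) (∑ i ∈ Finset.range n, (f (chi α (i+1) y) - f 0))
  linarith

/-! ### Size of the return time near `1/2` -/

lemma lsv_half_add {s : ℝ} (hs : 0 < s) : lsv α (1/2 + s) = 2 * s := by
  rw [lsv_right (by linarith)]; ring

lemma ret_half_add_le (hα : 0 < α) : ∃ C > 0, ∀ s ∈ Set.Ioc (0:ℝ) (1/2),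
    s ^ α * ret α (1/2 + s) ≤ C := by
  obtain ⟨C, hC, h⟩ := X_rpow_le hα
  refine ⟨C, hC, fun s hs => ?_⟩
  rw [ret, lsv_half_add hs.1]
  set n := ent α (2 * s)
  have h1 : 2 * s ≤ X α n := le_X_ent (by linarith [hs.2])
  have h2 := h n
  rw [le_div_iff₀ (by positivity)] at h2
  push_cast
  refine le_trans ?_ h2
  gcongr
  · exact hs.1.le
  · linarith [hs.1]

lemma tendsto_ent (hα : 0 < α) : Tendsto (ent α) (𝓝[>] 0) atTop := by
  rw [tendsto_atTop]
  intro N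
  have : Set.Ioo (0:ℝ) (X α N) ∈ 𝓝[>] (0:ℝ) := Ioo_mem_nhdsGT (X_pos hα N)
  filter_upwards [this] with x hx
  by_contra hlt
  have h1 := ent_spec hα hx.1
  have h2 := (X_anti hα).antitone (show ent α x + 1 ≤ N by omega)
  linarith [hx.2]

lemma tendsto_X_mul (hα : 0 < α) :
    Tendsto (fun n : ℕ => X α n ^ α * n) atTop (𝓝 (α * 2 ^ α)⁻¹) := by
  have := (tendsto_X_rpow hα).inv₀ (by positivity)
  refine this.congr fun n => ?_
  rw [inv_div, div_inv_eq_mul, mul_comm]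

/-- The return time of `1/2 + s` is asymptotic to `(α * 4 ^ α)⁻¹ * s ^ (-α)`, because `2 * s` lies
between consecutive points `X n` and these are of order `n ^ (-1/α)`. -/
lemma tendsto_ret_half_add (hα : 0 < α) :
    Tendsto (fun s => s ^ α * ret α (1/2 + s)) (𝓝[>] 0) (𝓝 (α * 4 ^ α)⁻¹) := by
  have hX := tendsto_X_mul hα
  have hX0 : Tendsto (fun n : ℕ => X α n ^ α) atTop (𝓝 0) := by
    have := (tendsto_X hα).rpow_const (p := α) (Or.inr hα.le)
    rwa [zero_rpow hα.ne'] at this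
  have hlow : Tendsto (fun n : ℕ => X α (n+1) ^ α * ((n:ℝ) + 1)) atTop (𝓝 (α * 2 ^ α)⁻¹) := by
    have := hX.comp (tendsto_add_atTop_nat 1)
    refine this.congr fun n => ?_
    simp
  have hup : Tendsto (fun n : ℕ => X α n ^ α * ((n:ℝ) + 1)) atTop (𝓝 (α * 2 ^ α)⁻¹) := by
    have := hX.add hX0
    rw [add_zero] at this
    exact this.congr fun n => by ring
  have h2s : Tendsto (fun s : ℝ => 2 * s) (𝓝[>] 0) (𝓝[>] 0) := by
    refine tendsto_nhdsWithin_iff.2 ⟨?_, ?_⟩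
    · have : Tendsto (fun s : ℝ => 2 * s) (𝓝 0) (𝓝 (2 * 0)) :=
        (continuous_const_mul (2:ℝ)).tendsto 0
      rw [mul_zero] at this
      exact this.mono_left nhdsWithin_le_nhds
    · filter_upwards [self_mem_nhdsWithin] with s hs
      exact mul_pos two_pos (Set.mem_Ioi.1 hs)
  have he := (tendsto_ent hα).comp h2s
  have e : (α * 4 ^ α)⁻¹ = (2 ^ α)⁻¹ * (α * 2 ^ α)⁻¹ := by
    rw [show (4:ℝ) = 2 * 2 by norm_num, mul_rpow (by norm_num) (by norm_num)]
    rw [← mul_inv]; ring_nf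
  rw [e]
  have h1 : Set.Ioc (0:ℝ) (1/2) ∈ 𝓝[>] (0:ℝ) := Ioc_mem_nhdsGT (by norm_num)
  refine tendsto_of_tendsto_of_tendsto_of_le_of_le' ((hlow.comp he).const_mul _)
    ((hup.comp he).const_mul _) ?_ ?_
  · filter_upwards [h1] with s hs
    rw [ret, lsv_half_add hs.1, inv_mul_le_iff₀ (by positivity)]
    simp only [Function.comp]
    have h3 := ent_spec hα (show 0 < 2 * s by linarith [hs.1])
    rw [← mul_assoc, ← mul_rpow (by norm_num) hs.1.le]
    push_cast
    have := (X_pos hα (ent α (2*s) + 1)).le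
    gcongr
  · filter_upwards [h1] with s hs
    rw [ret, lsv_half_add hs.1, le_inv_mul_iff₀ (by positivity)]
    simp only [Function.comp]
    have h3 : 2 * s ≤ X α (ent α (2 * s)) := le_X_ent (by linarith [hs.2])
    rw [← mul_assoc, ← mul_rpow (by norm_num) hs.1.le]
    push_cast
    have := hs.1
    gcongr

section
variable {g : ℝ → ℝ} {G : ℕ → ℝ → ℝ} {r C c : ℝ}

lemma exists_psi (hα : 0 < α) {x : ℝ} (hx : x ∈ Set.Ioc (1/2 : ℝ) 1) :
    ∃ n, ∃ y ∈ Set.Ioc (1/2 : ℝ) 1, psi α n y = x ∧ ret α x = n + 1 := by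
  have : x ∈ ⋃ n, psi α n '' Set.Ioc (1/2) 1 := by rw [psi_image_union hα]; exact hx
  obtain ⟨n, y, hy, rfl⟩ := Set.mem_iUnion.1 this
  exact ⟨n, y, hy, rfl, ret_psi hα n hy⟩

lemma abs_le_ret (hα : 0 < α)
    (hgG : ∀ n, ∀ y ∈ Set.Ioc (1/2 : ℝ) 1, g (psi α n y) = G n y)
    (hG : ∀ n : ℕ, ∀ y ∈ Y, |G n y| ≤ C * (n + 1)) {x : ℝ} (hx : x ∈ Set.Ioc (1/2 : ℝ) 1) :
    |g x| ≤ C * ret α x := by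
  obtain ⟨n, y, hy, rfl, hr⟩ := exists_psi hα hx
  rw [hgG n y hy, hr]
  push_cast
  exact hG n y (Set.Ioc_subset_Icc_self hy)

/-- The induced observable is bounded by a multiple of `s ^ (-α)` at `1/2 + s`. -/
lemma abs_half_add_le (hα : 0 < α)
    (hgG : ∀ n, ∀ y ∈ Set.Ioc (1/2 : ℝ) 1, g (psi α n y) = G n y)
    (hG : ∀ n : ℕ, ∀ y ∈ Y, |G n y| ≤ C * (n + 1)) (hC : 0 ≤ C) :
    ∃ C' ≥ 0, ∀ s ∈ Set.Ioc (0:ℝ) (1/2), |g (1/2 + s)| ≤ C' * s ^ (-α) := by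
  obtain ⟨D, hD, h⟩ := ret_half_add_le hα
  refine ⟨C * D, by positivity, fun s hs => ?_⟩
  have h1 := abs_le_ret hα hgG hG (x := 1/2 + s) ⟨by linarith [hs.1], by linarith [hs.2]⟩
  have h2 := h s hs
  have hs0 : 0 < s ^ α := rpow_pos_of_pos hs.1 _
  rw [mul_comm, ← le_div_iff₀ hs0, div_eq_mul_inv D, ← rpow_neg hs.1.le] at h2
  calc _ ≤ _ := h1
    _ ≤ C * (D * s ^ (-α)) := by gcongr
    _ = _ := by ring

/-- The exact behaviour of the induced observable at `1/2`. -/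
lemma tendsto_half_add (hα : 0 < α)
    (hgG : ∀ n, ∀ y ∈ Set.Ioc (1/2 : ℝ) 1, g (psi α n y) = G n y) (hc : Asymp G c) :
    Tendsto (fun s => s ^ α * g (1/2 + s)) (𝓝[>] 0) (𝓝 (c * (α * 4 ^ α)⁻¹)) := by
  obtain ⟨D, hD, hDb⟩ := ret_half_add_le hα
  have h1 := (tendsto_ret_half_add hα).const_mul c
  have h2 : Tendsto (fun s => s ^ α * g (1/2 + s) - c * (s ^ α * ret α (1/2 + s))) (𝓝[>] 0)
      (𝓝 0) := by
    rw [Metric.tendsto_nhds]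
    intro ε hε
    obtain ⟨N, hN⟩ := hc (ε / (2 * D)) (by positivity)
    have h3 : Set.Ioc (0:ℝ) (1/2) ∈ 𝓝[>] (0:ℝ) := Ioc_mem_nhdsGT (by norm_num)
    have h4 : Set.Ioo (0:ℝ) (X α N / 2) ∈ 𝓝[>] (0:ℝ) := Ioo_mem_nhdsGT (half_pos (X_pos hα N))
    filter_upwards [h3, h4] with s hs hs'
    obtain ⟨n, y, hy, hxy, hr⟩ := exists_psi hα (x := 1/2 + s)
      ⟨by linarith [hs.1], by linarith [hs.2]⟩
    have hn : N ≤ n := by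
      by_contra hlt
      have h5 := ent_spec hα (show 0 < 2 * s by linarith [hs.1])
      rw [ret, lsv_half_add hs.1] at hr
      have h6 := (X_anti hα).antitone (show ent α (2*s) + 1 ≤ N by omega)
      linarith [hs'.2]
    have h5 := hN n hn y (Set.Ioc_subset_Icc_self hy)
    have h6 := hDb s hs
    rw [dist_zero_right, Real.norm_eq_abs]
    rw [← hxy, hgG n y hy, hxy, hr]
    rw [hr] at h6
    push_cast at h6 ⊢
    have hs0 : 0 < s ^ α := rpow_pos_of_pos hs.1 _
    have e : s ^ α * G n y - c * (s ^ α * (n + 1)) = s ^ α * (G n y - c * (n + 1)) := by ring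
    rw [e, abs_mul, abs_of_pos hs0]
    calc s ^ α * |G n y - c * (n + 1)| ≤ s ^ α * (ε / (2 * D) * (n + 1)) := by gcongr
      _ = ε / (2 * D) * (s ^ α * (n + 1)) := by ring
      _ ≤ ε / (2 * D) * D := by gcongr
      _ = ε / 2 := by field_simp
      _ < ε := by linarith
  have := h2.add h1
  rw [zero_add] at this
  exact this.congr fun s => by ring

end
end LSV

namespace LSV

/-! ### The stable integral -/

/-- The Gamma integral with complex rate, obtained from the real one by analytic continuation. -/
lemma integral_rpow_cexp {a : ℝ} (ha : 0 < a) {r : ℂ} (hr : 0 < r.re) :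
    ∫ x in Set.Ioi (0:ℝ), (x ^ (a - 1)) • Complex.exp (-(r * x)) = Gamma a * r ^ (-a : ℂ) := by
  set ν : Measure ℝ := (volume.restrict (Set.Ioi (0:ℝ))).withDensity
    fun x => ENNReal.ofReal (x ^ (a - 1)) with hν
  have hmeas : Measurable fun x : ℝ => ENNReal.ofReal (x ^ (a - 1)) := by fun_prop
  have hM : ∀ z : ℂ, ProbabilityTheory.complexMGF id ν z =
      ∫ x in Set.Ioi (0:ℝ), (x ^ (a - 1)) • Complex.exp (z * x) := by
    intro z
    rw [ProbabilityTheory.complexMGF, hν,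
      integral_withDensity_eq_integral_toReal_smul hmeas (by simp)]
    refine setIntegral_congr_fun measurableSet_Ioi fun x hx => ?_
    simp only [id]
    rw [ENNReal.toReal_ofReal (rpow_nonneg (Set.mem_Ioi.1 hx).le _)]
  have hset : Set.Iio 0 ⊆ interior (ProbabilityTheory.integrableExpSet id ν) := by
    refine interior_maximal ?_ isOpen_Iio
    intro t ht
    have h1 := integrableOn_rpow_mul_exp_neg_mul_rpow (p := 1) (s := a - 1) (b := -t)
      (by linarith) one_pos (by linarith [Set.mem_Iio.1 ht])
    change Integrable _ _
    rw [hν, integrable_withDensity_iff_integrable_smul' hmeas (by simp)]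
    refine IntegrableOn.congr_fun h1 (fun x hx => ?_) measurableSet_Ioi
    simp only [id, rpow_one, neg_neg, smul_eq_mul]
    rw [ENNReal.toReal_ofReal (rpow_nonneg (Set.mem_Ioi.1 hx).le _)]
  have hU : IsPreconnected {z : ℂ | z.re < 0} := (convex_halfSpace_re_lt 0).isPreconnected
  have han : AnalyticOnNhd ℂ (ProbabilityTheory.complexMGF id ν) {z : ℂ | z.re < 0} :=
    ProbabilityTheory.analyticOnNhd_complexMGF.mono fun z hz => hset hz
  have han2 : AnalyticOnNhd ℂ (fun z : ℂ => (Gamma a : ℂ) * (-z) ^ (-a : ℂ)) {z : ℂ | z.re < 0} := by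
    intro z hz
    refine analyticAt_const.mul (AnalyticAt.cpow analyticAt_id.neg analyticAt_const ?_)
    left
    simpa using hz
  have heq := han.eqOn_of_preconnected_of_frequently_eq han2 hU (z₀ := ((-1 : ℝ) : ℂ))
    (by simp) (by
      have h1 : ∀ᶠ t : ℝ in 𝓝[≠] (-1), ProbabilityTheory.complexMGF id ν (t:ℂ) =
          (Gamma a : ℂ) * (-(t:ℂ)) ^ (-a : ℂ) := by
        have : Set.Iio (0:ℝ) ∈ 𝓝[≠] (-1:ℝ) :=
          mem_nhdsWithin_of_mem_nhds (Iio_mem_nhds (by norm_num))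
        filter_upwards [this] with t ht
        have ht' : 0 < -t := by linarith [Set.mem_Iio.1 ht]
        have h2 := integral_rpow_mul_exp_neg_mul_Ioi ha ht'
        rw [hM]
        have h3 : ∫ x in Set.Ioi (0:ℝ), (x ^ (a - 1)) • Complex.exp (t * x) =
            ((∫ x in Set.Ioi (0:ℝ), x ^ (a-1) * rexp (-(-t * x)) : ℝ) : ℂ) := by
          rw [← integral_complex_ofReal]
          congr 1; funext x
          push_cast
          rw [Complex.real_smul]
          ring_nf
        rw [h3, h2, one_div, inv_rpow ht'.le, ← rpow_neg ht'.le, mul_comm]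
        push_cast
        rw [Complex.ofReal_cpow ht'.le]
        push_cast
        rfl
      have hcont : Tendsto (fun t : ℝ => (t:ℂ)) (𝓝[≠] (-1)) (𝓝[≠] ((-1:ℝ):ℂ)) := by
        refine tendsto_nhdsWithin_iff.2 ⟨?_, ?_⟩
        · exact (Complex.continuous_ofReal.tendsto (-1)).mono_left nhdsWithin_le_nhds
        · filter_upwards [self_mem_nhdsWithin] with t ht
          intro h
          exact ht (Complex.ofReal_injective h)
      exact hcont.frequently h1.frequently)
  have := heq (show (-r) ∈ {z : ℂ | z.re < 0} by simpa using hr)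
  rw [hM] at this
  simpa using this

lemma norm_E1_le {z : ℂ} (hz : 0 ≤ z.re) : ‖1 - Complex.exp (-z)‖ ≤ 2 := by
  refine (norm_sub_le _ _).trans ?_
  rw [norm_one, Complex.norm_exp, Complex.neg_re]
  have : rexp (-z.re) ≤ 1 := by simpa using hz
  linarith

lemma norm_E1_le' {z : ℂ} (hz : 0 ≤ z.re) : ‖1 - Complex.exp (-z)‖ ≤ 2 * ‖z‖ := by
  rcases le_or_gt ‖z‖ 1 with h | h
  · have := Complex.norm_exp_sub_one_le (x := -z) (by simpa using h)
    rwa [norm_neg, norm_sub_rev] at this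
  · exact (norm_E1_le hz).trans (by linarith)

lemma norm_E2_le {z : ℂ} (hz : 0 ≤ z.re) : ‖Complex.exp (-z) - 1 + z‖ ≤ 3 * ‖z‖ := by
  have e : Complex.exp (-z) - 1 + z = z - (1 - Complex.exp (-z)) := by ring
  rw [e]
  refine (norm_sub_le _ _).trans ?_
  linarith [norm_E1_le' hz]

lemma norm_E2_le' {z : ℂ} (hz : 0 ≤ z.re) : ‖Complex.exp (-z) - 1 + z‖ ≤ 3 * ‖z‖ ^ 2 := by
  rcases le_or_gt ‖z‖ 1 with h | h
  · have := Complex.norm_exp_sub_one_sub_id_le (x := -z) (by simpa using h)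
    rw [norm_neg, sub_neg_eq_add] at this
    nlinarith [sq_nonneg ‖z‖]
  · refine (norm_E2_le hz).trans ?_
    nlinarith

lemma norm_E2_le_min {z : ℂ} (hz : 0 ≤ z.re) {R : ℝ} (hR : ‖z‖ ≤ R) :
    ‖Complex.exp (-z) - 1 + z‖ ≤ 3 * min R (R ^ 2) := by
  have h0 := norm_nonneg z
  rw [mul_min_of_nonneg _ _ (by norm_num), le_min_iff]
  exact ⟨(norm_E2_le hz).trans (by gcongr), (norm_E2_le' hz).trans (by gcongr)⟩

/-- Integrability of `min` of two powers. -/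
lemma integrableOn_min_rpow {a b : ℝ} (ha : -1 < a) (hb : b < -1) :
    IntegrableOn (fun x : ℝ => min (x ^ a) (x ^ b)) (Set.Ioi 0) := by
  rw [← Set.Ioc_union_Ioi_eq_Ioi zero_le_one]
  have hm : ∀ s : Set ℝ, AEStronglyMeasurable (fun x : ℝ => min (x ^ a) (x ^ b))
      (volume.restrict s) := fun s => (by fun_prop : Measurable fun x : ℝ =>
        min (x ^ a) (x ^ b)).aestronglyMeasurable
  refine IntegrableOn.union ?_ ?_
  · have h1 : IntegrableOn (fun x : ℝ => x ^ a) (Set.Ioc 0 1) :=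
      (intervalIntegrable_iff_integrableOn_Ioc_of_le zero_le_one).1
        (intervalIntegral.intervalIntegrable_rpow' ha)
    refine Integrable.mono' h1 (hm _) ?_
    refine (ae_restrict_iff' measurableSet_Ioc).2 (Eventually.of_forall fun x hx => ?_)
    rw [Real.norm_of_nonneg (le_min (rpow_nonneg hx.1.le _) (rpow_nonneg hx.1.le _))]
    exact min_le_left _ _
  · refine Integrable.mono' (integrableOn_Ioi_rpow_of_lt hb one_pos) (hm _) ?_
    refine (ae_restrict_iff' measurableSet_Ioi).2 (Eventually.of_forall fun x hx => ?_)
    have hx0 : 0 ≤ x := zero_le_one.trans (Set.mem_Ioi.1 hx).le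
    rw [Real.norm_of_nonneg (le_min (rpow_nonneg hx0 _) (rpow_nonneg hx0 _))]
    exact min_le_right _ _

variable {p : ℝ}

lemma norm_stable_le {r : ℂ} (hr : 0 ≤ r.re) {R : ℝ} (hR : ‖r‖ ≤ R) {x : ℝ}
    (hx : 0 < x) : ‖(x ^ (-p - 1)) • (Complex.exp (-(r * x)) - 1 + r * x)‖ ≤
      3 * (R + R ^ 2) * min (x ^ (1 - p)) (x ^ (-p)) := by
  have hR0 : 0 ≤ R := (norm_nonneg _).trans hR
  have hz : 0 ≤ (r * (x:ℂ)).re := by rw [Complex.re_mul_ofReal]; positivity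
  have hn : ‖r * (x:ℂ)‖ ≤ R * x := by
    rw [norm_mul, Complex.norm_of_nonneg hx.le]; gcongr
  rw [norm_smul, Real.norm_of_nonneg (rpow_nonneg hx.le _)]
  have h1 := norm_E2_le_min hz hn
  have hxp : 0 < x ^ (-p - 1) := rpow_pos_of_pos hx _
  have e1 : x ^ (1 - p) = x ^ (-p - 1) * x ^ 2 := by
    rw [← rpow_natCast x 2, ← rpow_add hx]; congr 1; push_cast; ring
  have e2 : x ^ (-p) = x ^ (-p - 1) * x := by
    nth_rewrite 3 [← rpow_one x]
    rw [← rpow_add hx]; congr 1; ring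
  rw [e1, e2, ← mul_min_of_nonneg _ _ hxp.le]
  calc _ ≤ x ^ (-p - 1) * (3 * min (R * x) ((R * x) ^ 2)) := by gcongr
    _ ≤ x ^ (-p - 1) * (3 * ((R + R ^ 2) * min (x ^ 2) x)) := by
        gcongr
        rw [mul_min_of_nonneg _ _ (by positivity), le_min_iff]
        constructor
        · refine (min_le_right _ _).trans ?_
          nlinarith [mul_nonneg hR0 (sq_nonneg x)]
        · refine (min_le_left _ _).trans ?_
          nlinarith [mul_nonneg (sq_nonneg R) hx.le]
    _ = _ := by ring

lemma integrableOn_stable (hp : 1 < p) (hp2 : p < 2) {r : ℂ} (hr : 0 ≤ r.re) :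
    IntegrableOn (fun x : ℝ => (x ^ (-p - 1)) • (Complex.exp (-(r * x)) - 1 + r * x))
      (Set.Ioi 0) := by
  refine Integrable.mono' ((integrableOn_min_rpow (a := 1 - p) (b := -p) (by linarith)
    (by linarith)).const_mul (3 * (‖r‖ + ‖r‖ ^ 2))) (by fun_prop) ?_
  refine (ae_restrict_iff' measurableSet_Ioi).2 (Eventually.of_forall fun x hx => ?_)
  exact norm_stable_le hr le_rfl hx

/-- Two integrations by parts reduce the stable integral to the Gamma integral. -/
lemma stable_integral_re_pos (hp : 1 < p) (hp2 : p < 2) {r : ℂ} (hr : 0 < r.re) :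
    p * ∫ x in Set.Ioi (0:ℝ), (x ^ (-p - 1)) • (Complex.exp (-(r * x)) - 1 + r * x) =
      -(Gamma (1 - p) : ℂ) * r ^ (p : ℂ) := by
  have hr0 : r ≠ 0 := fun h => by simp [h] at hr
  have hpc : (p:ℂ) ≠ 0 := by exact_mod_cast (by linarith : p ≠ 0)
  have hpc1 : (1 - p:ℂ) ≠ 0 := by
    have : (1 - p : ℝ) ≠ 0 := by linarith
    exact_mod_cast this
  set c : ℂ := r / (p * (1 - p)) with hc
  set W : ℝ → ℂ := fun x => -(1 / p : ℂ) * ((x ^ (-p)) • (Complex.exp (-(r * x)) - 1 + r * x)) +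
    c * ((x ^ (1 - p)) • (1 - Complex.exp (-(r * x)))) with hW
  set W' : ℝ → ℂ := fun x => (x ^ (-p - 1)) • (Complex.exp (-(r * x)) - 1 + r * x) +
    (c * r) * ((x ^ ((2 - p) - 1)) • Complex.exp (-(r * x))) with hW'
  have hre : ∀ {x : ℝ}, 0 ≤ x → 0 ≤ (r * (x:ℂ)).re := fun hx => by
    rw [Complex.re_mul_ofReal]; positivity
  have hnr : ∀ {x : ℝ}, 0 ≤ x → ‖r * (x:ℂ)‖ = ‖r‖ * x := fun hx => by
    rw [norm_mul, Complex.norm_of_nonneg hx]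
  have hW0 : W 0 = 0 := by
    simp only [hW]
    rw [zero_rpow (by linarith), zero_rpow (by linarith)]
    simp
  have hderiv : ∀ x ∈ Set.Ioi (0:ℝ), HasDerivAt W (W' x) x := by
    intro x hx
    have hx0 : (0:ℝ) < x := hx
    have hE : HasDerivAt (fun x : ℝ => Complex.exp (-(r * x))) (Complex.exp (-(r * x)) * -(r * 1)) x :=
      ((((hasDerivAt_id x).ofReal_comp).const_mul r).neg).cexp
    have hL : HasDerivAt (fun x : ℝ => r * (x:ℂ)) (r * 1) x :=
      ((hasDerivAt_id x).ofReal_comp).const_mul r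
    have h1 := (hasDerivAt_rpow_const (x := x) (p := -p) (Or.inl hx0.ne')).smul
      ((hE.sub_const 1).add hL)
    have h2 := (hasDerivAt_rpow_const (x := x) (p := 1 - p) (Or.inl hx0.ne')).smul
      ((hasDerivAt_const x (1:ℂ)).sub hE)
    have h3 := (h1.const_mul (-(1 / p : ℂ))).add (h2.const_mul c)
    refine h3.congr_deriv ?_
    simp only [hW', Complex.real_smul, Pi.add_apply, Pi.sub_apply]
    rw [show (1 - p) - 1 = -p by ring, show (2 - p) - 1 = 1 - p by ring, hc]
    push_cast
    field_simp
    ring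
  have hint1 := integrableOn_stable hp hp2 hr.le
  have hint2 : IntegrableOn (fun x : ℝ => (x ^ ((2 - p) - 1)) • Complex.exp (-(r * x)))
      (Set.Ioi 0) := by
    have h1 := integrableOn_rpow_mul_exp_neg_mul_rpow (p := 1) (s := 2 - p - 1) (b := r.re)
      (by linarith) one_pos hr
    refine Integrable.mono' h1 (by fun_prop) ?_
    refine (ae_restrict_iff' measurableSet_Ioi).2 (Eventually.of_forall fun x hx => ?_)
    rw [norm_smul, Complex.norm_exp, Real.norm_of_nonneg (rpow_nonneg (Set.mem_Ioi.1 hx).le _),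
      Complex.neg_re, Complex.re_mul_ofReal, rpow_one, neg_mul]
  have hWint : IntegrableOn W' (Set.Ioi 0) := hint1.add (hint2.const_mul _)
  -- bounds for the boundary terms
  have hb0 : ∀ x ∈ Set.Ioi (0:ℝ), ‖W x‖ ≤
      (‖(1 / p : ℂ)‖ * (3 * ‖r‖ ^ 2) + ‖c‖ * (2 * ‖r‖)) * x ^ (2 - p) := by
    intro x hx
    have hx0 : (0:ℝ) < x := hx
    have h1 := norm_E2_le' (hre hx0.le)
    have h2 := norm_E1_le' (hre hx0.le)
    rw [hnr hx0.le] at h1 h2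
    have e1 : x ^ (2 - p) = x ^ (-p) * x ^ 2 := by
      rw [← rpow_natCast x 2, ← rpow_add hx0]; congr 1; push_cast; ring
    have e2 : x ^ (2 - p) = x ^ (1 - p) * x := by
      nth_rewrite 3 [← rpow_one x]
      rw [← rpow_add hx0]; congr 1; ring
    simp only [hW]
    refine (norm_add_le _ _).trans ?_
    rw [norm_mul, norm_mul, norm_neg, norm_smul, norm_smul,
      Real.norm_of_nonneg (rpow_nonneg hx0.le _), Real.norm_of_nonneg (rpow_nonneg hx0.le _),
      add_mul]
    have hp1 := rpow_nonneg hx0.le (-p)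
    have hp2 := rpow_nonneg hx0.le (1-p)
    refine add_le_add ?_ ?_
    · rw [e1]
      calc _ ≤ ‖(1 / p : ℂ)‖ * (x ^ (-p) * (3 * (‖r‖ * x) ^ 2)) := by gcongr
        _ = _ := by ring
    · rw [e2]
      calc _ ≤ ‖c‖ * (x ^ (1-p) * (2 * (‖r‖ * x))) := by gcongr
        _ = _ := by ring
  have hbi : ∀ x ∈ Set.Ioi (0:ℝ), ‖W x‖ ≤
      (‖(1 / p : ℂ)‖ * (3 * ‖r‖) + ‖c‖ * 2) * x ^ (-(p - 1)) := by
    intro x hx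
    have hx0 : (0:ℝ) < x := hx
    have h1 := norm_E2_le (hre hx0.le)
    have h2 := norm_E1_le (hre hx0.le)
    rw [hnr hx0.le] at h1
    have e1 : x ^ (-(p - 1)) = x ^ (-p) * x := by
      nth_rewrite 3 [← rpow_one x]
      rw [← rpow_add hx0]; congr 1; ring
    have e2 : x ^ (-(p - 1)) = x ^ (1 - p) := by congr 1; ring
    simp only [hW]
    refine (norm_add_le _ _).trans ?_
    rw [norm_mul, norm_mul, norm_neg, norm_smul, norm_smul,
      Real.norm_of_nonneg (rpow_nonneg hx0.le _), Real.norm_of_nonneg (rpow_nonneg hx0.le _),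
      add_mul]
    have hp1 := rpow_nonneg hx0.le (-p)
    have hp2 := rpow_nonneg hx0.le (1-p)
    refine add_le_add ?_ ?_
    · rw [e1]
      calc _ ≤ ‖(1 / p : ℂ)‖ * (x ^ (-p) * (3 * (‖r‖ * x))) := by gcongr
        _ = _ := by ring
    · rw [e2]
      calc _ ≤ ‖c‖ * (x ^ (1-p) * 2) := by gcongr
        _ = _ := by ring
  have hcont : ContinuousWithinAt W (Set.Ici 0) 0 := by
    rw [← continuousWithinAt_Ioi_iff_Ici, ContinuousWithinAt, hW0]
    refine squeeze_zero_norm' (eventually_mem_nhdsWithin.mono hb0) ?_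
    have : Tendsto (fun x : ℝ => x ^ (2 - p)) (𝓝[>] 0) (𝓝 (0 ^ (2-p))) :=
      ((continuousAt_rpow_const 0 (2 - p) (Or.inr (by linarith))).tendsto).mono_left
        nhdsWithin_le_nhds
    rw [zero_rpow (by linarith)] at this
    simpa using this.const_mul _
  have hlim : Tendsto W atTop (𝓝 0) := by
    refine squeeze_zero_norm' ((eventually_gt_atTop 0).mono hbi) ?_
    simpa using (tendsto_rpow_neg_atTop (y := p - 1) (by linarith)).const_mul _
  have hfin := integral_Ioi_of_hasDerivAt_of_tendsto hcont hderiv hWint hlim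
  rw [hW0, sub_zero, hW', integral_add hint1 (hint2.const_mul _), integral_const_mul,
    integral_rpow_cexp (a := 2 - p) (by linarith) hr] at hfin
  have hG : Gamma (2 - p) = (1 - p) * Gamma (1 - p) := by
    rw [← Real.Gamma_add_one (by linarith)]; congr 1; ring
  rw [eq_neg_of_add_eq_zero_left hfin, hG, hc]
  have e : r ^ (p : ℂ) = r ^ 2 * r ^ (-((2 - p : ℝ):ℂ)) := by
    rw [← Complex.cpow_natCast, ← Complex.cpow_add _ _ hr0]
    congr 1; push_cast; ring
  rw [e]
  push_cast
  field_simp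

lemma stable_integral (hp : 1 < p) (hp2 : p < 2) {b : ℝ} (hb : b ≠ 0) :
    p * ∫ x in Set.Ioi (0:ℝ), (x ^ (-p - 1)) •
      (Complex.exp (-((-(Complex.I * b)) * x)) - 1 + (-(Complex.I * b)) * x) =
      -(Gamma (1 - p) : ℂ) * (-(Complex.I * b)) ^ (p : ℂ) := by
  set r : ℝ → ℂ := fun ε => ε - Complex.I * b with hr
  have hre : ∀ ε, (r ε).re = ε := fun ε => by simp [hr]
  have hlim : Tendsto r (𝓝[>] 0) (𝓝 (-(Complex.I * b))) := by
    have : Tendsto r (𝓝 0) (𝓝 (r 0)) := (by fun_prop : Continuous r).tendsto 0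
    simp only [hr, Complex.ofReal_zero, zero_sub] at this
    exact this.mono_left nhdsWithin_le_nhds
  have hs : -(Complex.I * (b:ℂ)) ∈ Complex.slitPlane := Or.inr (by simpa using hb)
  have h1 : Tendsto (fun ε => -(Gamma (1 - p) : ℂ) * (r ε) ^ (p:ℂ)) (𝓝[>] 0)
      (𝓝 (-(Gamma (1 - p) : ℂ) * (-(Complex.I * b)) ^ (p : ℂ))) :=
    ((continuousAt_cpow_const hs).tendsto.comp hlim).const_mul _
  have h2 : Tendsto (fun ε => p * ∫ x in Set.Ioi (0:ℝ), (x ^ (-p - 1)) •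
      (Complex.exp (-(r ε * x)) - 1 + r ε * x)) (𝓝[>] 0)
      (𝓝 (p * ∫ x in Set.Ioi (0:ℝ), (x ^ (-p - 1)) •
      (Complex.exp (-((-(Complex.I * b)) * x)) - 1 + (-(Complex.I * b)) * x))) := by
    refine Tendsto.const_mul _ ?_
    refine tendsto_integral_filter_of_dominated_convergence
      (fun x => 3 * ((1 + |b|) + (1 + |b|) ^ 2) * min (x ^ (1 - p)) (x ^ (-p)))
      (Eventually.of_forall fun ε => by fun_prop) ?_
      ((integrableOn_min_rpow (a := 1 - p) (b := -p) (by linarith) (by linarith)).const_mul _) ?_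
    · filter_upwards [Ioc_mem_nhdsGT one_pos] with ε hε
      refine (ae_restrict_iff' measurableSet_Ioi).2 (Eventually.of_forall fun x hx => ?_)
      refine norm_stable_le (by rw [hre]; exact hε.1.le) ?_ hx
      refine (norm_sub_le _ _).trans ?_
      rw [Complex.norm_of_nonneg hε.1.le, norm_mul, Complex.norm_I, one_mul, Complex.norm_real,
        Real.norm_eq_abs]
      linarith [hε.2]
    · refine Eventually.of_forall fun x => ?_
      have : Continuous fun z : ℂ => (x ^ (-p - 1)) • (Complex.exp (-(z * x)) - 1 + z * x) := by
        fun_prop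
      exact (this.tendsto _).comp hlim
  refine tendsto_nhds_unique h2 (h1.congr' ?_)
  filter_upwards [self_mem_nhdsWithin] with ε hε
  exact (stable_integral_re_pos hp hp2 (by rw [hre]; exact hε)).symm

lemma neg_I_cpow (hp : 1 < p) (hp2 : p < 2) (b : ℝ) :
    (-(Complex.I * b)) ^ (p : ℂ) = ((|b| ^ p * Real.cos (π * p / 2) : ℝ) : ℂ) *
      (1 - Complex.I * (Real.sign b : ℝ) * (Real.tan (π * p / 2) : ℝ)) := by
  have hp0 : p ≠ 0 := by linarith
  have hpc : (p:ℂ) ≠ 0 := by exact_mod_cast hp0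
  have hcos : Real.cos (π * p / 2) ≠ 0 := by
    apply ne_of_lt
    apply Real.cos_neg_of_pi_div_two_lt_of_lt <;> nlinarith [Real.pi_pos]
  have hct : Real.cos (π * p / 2) * Real.tan (π * p / 2) = Real.sin (π * p / 2) := by
    rw [mul_comm]; exact Real.tan_mul_cos hcos
  have hct' : ((Real.cos (π * p / 2) : ℝ) : ℂ) * ((Real.tan (π * p / 2) : ℝ) : ℂ) =
      ((Real.sin (π * p / 2) : ℝ) : ℂ) := by exact_mod_cast hct
  have hpow : ∀ c : ℝ, 0 < c → Complex.exp (Real.log c * p) = ((c ^ p : ℝ) : ℂ) := by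
    intro c hc
    rw [Real.rpow_def_of_pos hc, Complex.ofReal_exp, Complex.ofReal_mul]
  rcases lt_trichotomy b 0 with hb | hb | hb
  · have h1 : -(Complex.I * b) = ((-b : ℝ) : ℂ) * Complex.I := by push_cast; ring
    rw [h1, Complex.cpow_def_of_ne_zero (mul_ne_zero (by exact_mod_cast (neg_pos.2 hb).ne')
      Complex.I_ne_zero), Complex.log_ofReal_mul (neg_pos.2 hb) Complex.I_ne_zero, Complex.log_I,
      add_mul, Complex.exp_add, hpow _ (neg_pos.2 hb),
      show (π / 2 * Complex.I * p : ℂ) = ((π * p / 2 : ℝ) : ℂ) * Complex.I by push_cast; ring,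
      Complex.exp_mul_I, Real.sign_of_neg hb, abs_of_neg hb, ← Complex.ofReal_cos,
      ← Complex.ofReal_sin, ← hct']
    push_cast; ring
  · subst hb
    simp [hpc, hp0]
  · have h1 : -(Complex.I * b) = ((b : ℝ) : ℂ) * (-Complex.I) := by ring
    have hI : -Complex.I ≠ 0 := neg_ne_zero.2 Complex.I_ne_zero
    rw [h1, Complex.cpow_def_of_ne_zero (mul_ne_zero (by exact_mod_cast hb.ne')
      hI), Complex.log_ofReal_mul hb hI, Complex.log_neg_I,
      add_mul, Complex.exp_add, hpow _ hb,
      show (-(π / 2) * Complex.I * p : ℂ) = ((-(π * p / 2) : ℝ) : ℂ) * Complex.I by push_cast; ring,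
      Complex.exp_mul_I, Real.sign_of_pos hb, abs_of_pos hb, ← Complex.ofReal_cos,
      ← Complex.ofReal_sin, Real.cos_neg, Real.sin_neg, Complex.ofReal_neg, ← hct']
    push_cast; ring

/-- The compensated exponential `e^{iw} - 1 - iw`. -/
noncomputable def Psi (w : ℝ) : ℂ := Complex.exp (Complex.I * w) - 1 - Complex.I * w

lemma norm_Psi_le {w R : ℝ} (h : |w| ≤ R) : ‖Psi w‖ ≤ 3 * min R (R ^ 2) := by
  have := norm_E2_le_min (z := -(Complex.I * w)) (R := R) (by simp) (by simpa using h)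
  rw [neg_neg] at this
  rwa [Psi, show Complex.exp (Complex.I * w) - 1 - Complex.I * w =
    Complex.exp (Complex.I * w) - 1 + -(Complex.I * w) by ring]

lemma continuous_Psi : Continuous Psi := by unfold Psi; fun_prop

lemma Psi_zero : Psi 0 = 0 := by simp [Psi]

/-- The Lévy integral of the stable law, in the variable `σ = x^{-1/α}`. -/
lemma integral_Psi {α : ℝ} (hα : 1/2 < α) (hα1 : α < 1) (b : ℝ) :
    ∫ σ in Set.Ioi (0:ℝ), Psi (b * σ ^ (-α)) =
      -(Gamma (1 - 1/α) : ℂ) * (((|b| ^ (1/α) * Real.cos (π * (1/α) / 2) : ℝ) : ℂ) *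
      (1 - Complex.I * (Real.sign b : ℝ) * (Real.tan (π * (1/α) / 2) : ℝ))) := by
  have hα0 : 0 < α := by linarith
  have hp : 1 < 1/α := by rw [lt_div_iff₀ hα0]; linarith
  have hp2 : 1/α < 2 := by rw [div_lt_iff₀ hα0]; linarith
  rcases eq_or_ne b 0 with rfl | hb
  · simp [Psi_zero, hα0.ne']
  rw [← neg_I_cpow hp hp2, ← stable_integral hp hp2 hb,
    ← integral_comp_rpow_Ioi (fun σ => Psi (b * σ ^ (-α))) (show -(1/α) ≠ 0 by
      have : 0 < 1/α := by positivity
      linarith), ← integral_const_mul]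
  refine setIntegral_congr_fun measurableSet_Ioi fun x hx => ?_
  have hx0 : 0 < x := hx
  have h1 : (x ^ (-(1/α))) ^ (-α) = x := by
    rw [← Real.rpow_mul hx0.le]
    have : -(1/α) * -α = 1 := by field_simp
    rw [this, Real.rpow_one]
  simp only [h1, abs_neg, abs_of_pos (show 0 < 1/α by positivity), Psi, Complex.real_smul]
  push_cast
  have h2 : Complex.exp (-(-(Complex.I * b) * x)) = Complex.exp (Complex.I * (b * x)) := by
    congr 1; ring
  rw [h2]
  ring

end LSV

namespace LSV
variable {α : ℝ}

/-! ### Asymptotics of the leading eigenvalue -/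

section
variable {g : ℝ → ℝ} {G : ℕ → ℝ → ℝ} {r C c : ℝ}

lemma setIntegral_Y_shift {E : Type*} [NormedAddCommGroup E] [NormedSpace ℝ E] (F : ℝ → E) :
    ∫ x in Y, F x = ∫ s in Set.Ioc (0:ℝ) (1/2), F (1/2 + s) := by
  rw [restrict_Y, ← intervalIntegral.integral_of_le (by norm_num),
    ← intervalIntegral.integral_of_le (by norm_num), intervalIntegral.integral_comp_add_left]
  norm_num

lemma integrableOn_obs (hα : 0 < α) (hα1 : α < 1) (hg : Measurable g)
    (hgG : ∀ n, ∀ y ∈ Set.Ioc (1/2 : ℝ) 1, g (psi α n y) = G n y)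
    (hG : ∀ n : ℕ, ∀ y ∈ Y, |G n y| ≤ C * (n + 1)) (hC : 0 ≤ C) : IntegrableOn g Y := by
  obtain ⟨C', hC', h⟩ := abs_half_add_le hα hgG hG hC
  rw [IntegrableOn, restrict_Y]
  have h1 : IntegrableOn (fun x : ℝ => C' * (x - 1/2) ^ (-α)) (Set.Ioc (1/2) 1) := by
    have := (intervalIntegral.intervalIntegrable_rpow' (a := 0) (b := 1/2)
      (show -1 < -α by linarith)).comp_sub_right (1/2)
    norm_num at this
    rw [intervalIntegrable_iff_integrableOn_Ioc_of_le (by norm_num)] at this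
    norm_num
    exact this.const_mul C'
  refine h1.mono' hg.aestronglyMeasurable ?_
  refine (ae_restrict_iff' measurableSet_Ioc).2 (Eventually.of_forall fun x hx => ?_)
  have := h (x - 1/2) ⟨by linarith [hx.1], by linarith [hx.2]⟩
  rwa [add_sub_cancel] at this

variable (hα : 0 < α) (hα1 : α < 1) (hr : 0 < r) (hr1 : r ≤ 1)

lemma lam_eq (hg : Measurable g)
    (hgG : ∀ n, ∀ y ∈ Set.Ioc (1/2 : ℝ) 1, g (psi α n y) = G n y) (t : ℝ) :
    (sys hα hα1 r hr hr1).lam G t = ∫ x in Y, Complex.exp (Complex.I * (t * g x : ℝ)) *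
      (sys hα hα1 r hr hr1).H x := by
  have := dual hα hα1 hr hr1 hg hgG (F := fun _ => 1) measurable_const (B := 1) (by simp) t
    ((sys hα hα1 r hr hr1).H_hb.integrableOn)
  simp only [mul_one, one_mul] at this
  rw [this, Sys.lam]

lemma lam_sub_one (hg : Measurable g)
    (hgG : ∀ n, ∀ y ∈ Set.Ioc (1/2 : ℝ) 1, g (psi α n y) = G n y)
    (hG : ∀ n : ℕ, ∀ y ∈ Y, |G n y| ≤ C * (n + 1)) (hC : 0 ≤ C)
    (h0 : ∫ x in Y, g x * (sys hα hα1 r hr hr1).h0 x = 0) (t : ℝ) :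
    (sys hα hα1 r hr hr1).lam G t - 1 = ∫ x in Y, Psi (t * g x) *
      (sys hα hα1 r hr hr1).H x := by
  set S := sys hα hα1 r hr hr1
  have hgi := integrableOn_obs hα hα1 hg hgG hG hC
  have hH := S.H_hb.integrableOn
  have hgH : IntegrableOn (fun x => g x * S.h0 x) Y := by
    refine hgi.mul_bdd (c := S.CA) S.h0_hb_real.integrableOn.aestronglyMeasurable ?_
    refine (ae_restrict_iff' measurableSet_Icc).2 (Eventually.of_forall fun x hx => ?_)
    exact S.h0_hb_real.1 x hx
  have i1 : IntegrableOn (fun x => Complex.exp (Complex.I * (t * g x : ℝ)) * S.H x) Y :=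
    Sys.integrableOn_bdd_mul (measurable_cexp_I hg t) (B := 1) (fun x => by
      rw [mul_comm, Complex.norm_exp_ofReal_mul_I]) hH
  have i2 : IntegrableOn (fun x => Complex.I * t * ((g x * S.h0 x : ℝ) : ℂ)) Y :=
    (Integrable.ofReal hgH).const_mul _
  have e : ∀ x, Psi (t * g x) * S.H x = Complex.exp (Complex.I * (t * g x : ℝ)) * S.H x - S.H x -
      Complex.I * t * ((g x * S.h0 x : ℝ) : ℂ) := by
    intro x
    rw [Psi, Sys.H]; push_cast; ring
  simp_rw [e]
  have i3 : IntegrableOn (fun x => Complex.exp (Complex.I * (t * g x : ℝ)) * S.H x - S.H x) Y :=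
    i1.sub hH
  rw [integral_sub i3 i2, integral_sub i1 hH, integral_const_mul, integral_complex_ofReal, h0,
    ← lam_eq hα hα1 hr hr1 hg hgG, S.integral_H]
  simp only [Complex.ofReal_zero, mul_zero, sub_zero]
  rfl

/-- The leading eigenvalue of the twisted transfer operator behaves like the characteristic
exponent of a stable law. The tail of the observable comes from the points close to `1/2`, which
are sent close to the neutral fixed point; after the substitution `s = σ / n` around `1/2` the limit
follows by dominated convergence. -/
theorem lam_asymp (hα2 : 1/2 < α) (hg : Measurable g)
    (hgG : ∀ n, ∀ y ∈ Set.Ioc (1/2 : ℝ) 1, g (psi α n y) = G n y)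
    (hG : ∀ n : ℕ, ∀ y ∈ Y, |G n y| ≤ C * (n + 1)) (hC : 0 ≤ C) (hc : Asymp G c)
    (h0 : ∫ x in Y, g x * (sys hα hα1 r hr hr1).h0 x = 0) (t : ℝ) :
    Tendsto (fun n : ℕ => (n:ℂ) * ((sys hα hα1 r hr hr1).lam G (t / (n:ℝ) ^ α) - 1)) atTop
      (𝓝 ((sys hα hα1 r hr hr1).H (1/2) *
        ∫ σ in Set.Ioi (0:ℝ), Psi (t * (c * (α * 4 ^ α)⁻¹) * σ ^ (-α)))) := by
  set S := sys hα hα1 r hr hr1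
  set κ := c * (α * 4 ^ α)⁻¹ with hκ
  obtain ⟨C', hC', hb⟩ := abs_half_add_le hα hgG hG hC
  set R := |t| * C' with hR
  have hR0 : 0 ≤ R := by positivity
  set F : ℕ → ℝ → ℂ := fun n => Set.indicator (Set.Ioc (0:ℝ) (1/2)) (fun s =>
    Psi (t / (n:ℝ) ^ α * g (1/2 + s)) * S.H (1/2 + s)) with hF
  have hYm : ∀ s ∈ Set.Ioc (0:ℝ) (1/2), 1/2 + s ∈ Y := fun s hs =>
    ⟨by linarith [hs.1], by linarith [hs.2]⟩
  have step1 : ∀ n : ℕ, 1 ≤ n → (n:ℂ) * (S.lam G (t / (n:ℝ) ^ α) - 1) =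
      ∫ σ in Set.Ioi (0:ℝ), F n ((n:ℝ)⁻¹ * σ) := by
    intro n hn
    have hn0 : (0:ℝ) < n := by exact_mod_cast hn
    rw [integral_comp_mul_left_Ioi _ _ (inv_pos.2 hn0), mul_zero, inv_inv, hF]
    simp only
    rw [setIntegral_indicator measurableSet_Ioc, lam_sub_one hα hα1 hr hr1 hg hgG hG hC h0,
      setIntegral_Y_shift, Set.inter_eq_right.2 (fun x hx => hx.1), Complex.real_smul]
    rw [Complex.ofReal_natCast]
  have hlim : Tendsto (fun n : ℕ => ∫ σ in Set.Ioi (0:ℝ), F n ((n:ℝ)⁻¹ * σ)) atTop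
      (𝓝 (∫ σ in Set.Ioi (0:ℝ), Psi (t * κ * σ ^ (-α)) * S.H (1/2))) := by
    refine tendsto_integral_filter_of_dominated_convergence
      (fun σ => 3 * (max R (R^2) * min (σ ^ (-α)) (σ ^ (-(2*α)))) * S.CA) ?_ ?_ ?_ ?_
    · refine Eventually.of_forall fun n => ?_
      have h1 : Measurable (Set.indicator (Set.Ioc (0:ℝ) (1/2)) (fun s => S.H (1/2 + s))) := by
        rw [← Set.piecewise_eq_indicator]
        refine ContinuousOn.measurable_piecewise ?_ continuousOn_const measurableSet_Ioc
        exact S.H_hb.continuousOn.comp (by fun_prop) hYm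
      have h2 : F n = fun s => Psi (t / (n:ℝ) ^ α * g (1/2 + s)) *
          Set.indicator (Set.Ioc (0:ℝ) (1/2)) (fun s => S.H (1/2 + s)) s := by
        funext s
        simp only [hF, Set.indicator]
        split_ifs <;> simp
      have h3 : Measurable (F n) := by
        rw [h2]
        exact (continuous_Psi.measurable.comp (by fun_prop)).mul h1
      exact (h3.comp (by fun_prop)).aestronglyMeasurable
    · filter_upwards [eventually_ge_atTop 1] with n hn
      refine (ae_restrict_iff' measurableSet_Ioi).2 (Eventually.of_forall fun σ hσ => ?_)
      have hσ0 : 0 < σ := hσ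
      have hn0 : (0:ℝ) < n := by exact_mod_cast hn
      have hCA := S.h0_hb_real.nonneg
      have hmax : 0 ≤ max R (R^2) := hR0.trans (le_max_left _ _)
      simp only [hF]
      by_cases hs : (n:ℝ)⁻¹ * σ ∈ Set.Ioc (0:ℝ) (1/2)
      · rw [Set.indicator_of_mem hs, norm_mul]
        have h1 := hb _ hs
        have h2 : |t / (n:ℝ) ^ α * g (1/2 + (n:ℝ)⁻¹ * σ)| ≤ R * σ ^ (-α) := by
          rw [abs_mul, abs_div, abs_of_pos (rpow_pos_of_pos hn0 α)]
          calc _ ≤ |t| / (n:ℝ) ^ α * (C' * ((n:ℝ)⁻¹ * σ) ^ (-α)) := by gcongr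
            _ = R * σ ^ (-α) := by
              rw [mul_rpow (by positivity) hσ0.le, inv_rpow hn0.le, rpow_neg hn0.le, inv_inv, hR]
              field_simp
        have h3 := norm_Psi_le h2
        have h4 : ‖S.H (1/2 + (n:ℝ)⁻¹ * σ)‖ ≤ S.CA := S.H_hb.1 _ (hYm _ hs)
        have h5 : min (R * σ ^ (-α)) ((R * σ ^ (-α))^2) ≤
            max R (R^2) * min (σ ^ (-α)) (σ ^ (-(2*α))) := by
          rw [mul_min_of_nonneg _ _ hmax]
          have : σ ^ (-(2*α)) = (σ ^ (-α))^2 := by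
            rw [← rpow_natCast, ← rpow_mul hσ0.le]; congr 1; push_cast; ring
          rw [this, mul_pow]
          have h6 := rpow_pos_of_pos hσ0 (-α)
          exact min_le_min (by gcongr; exact le_max_left _ _) (by gcongr; exact le_max_right _ _)
        calc _ ≤ (3 * min (R * σ ^ (-α)) ((R * σ ^ (-α))^2)) * S.CA := by gcongr
          _ ≤ _ := by gcongr
      · rw [Set.indicator_of_notMem hs, norm_zero]
        have := rpow_pos_of_pos hσ0 (-α)
        have := rpow_pos_of_pos hσ0 (-(2*α))
        positivity
    · exact (((integrableOn_min_rpow (by linarith) (by linarith)).const_mul _).const_mul 3).mul_const _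
    · refine (ae_restrict_iff' measurableSet_Ioi).2 (Eventually.of_forall fun σ hσ => ?_)
      have hσ0 : 0 < σ := hσ
      have hs0 : Tendsto (fun n : ℕ => (n:ℝ)⁻¹ * σ) atTop (𝓝 0) := by
        simpa using tendsto_inv_atTop_nhds_zero_nat.mul_const σ
      have hs : Tendsto (fun n : ℕ => (n:ℝ)⁻¹ * σ) atTop (𝓝[>] 0) := by
        refine tendsto_nhdsWithin_iff.2 ⟨hs0, ?_⟩
        filter_upwards [eventually_ge_atTop 1] with n hn
        have hn0 : (0:ℝ) < n := by exact_mod_cast hn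
        exact Set.mem_Ioi.2 (by positivity)
      have hmem : ∀ᶠ n : ℕ in atTop, (n:ℝ)⁻¹ * σ ∈ Set.Ioc (0:ℝ) (1/2) :=
        hs.eventually (Ioc_mem_nhdsGT (by norm_num))
      have h1 := ((tendsto_half_add hα hgG hc).comp hs).const_mul (t * σ ^ (-α))
      have h2 : Tendsto (fun n : ℕ => S.H (1/2 + (n:ℝ)⁻¹ * σ)) atTop (𝓝 (S.H (1/2))) := by
        have h3 : ContinuousWithinAt S.H Y (1/2) :=
          S.H_hb.continuousOn (1/2) ⟨le_rfl, by norm_num⟩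
        refine h3.tendsto.comp (tendsto_nhdsWithin_iff.2 ⟨?_, ?_⟩)
        · have := hs0.const_add (1/2)
          rwa [add_zero] at this
        · filter_upwards [hmem] with n hn using hYm _ hn
      have h3 := ((continuous_Psi.tendsto _).comp h1).mul h2
      rw [show t * σ ^ (-α) * (c * (α * 4 ^ α)⁻¹) = t * κ * σ ^ (-α) by rw [hκ]; ring] at h3
      refine h3.congr' ?_
      filter_upwards [hmem, eventually_ge_atTop 1] with n hn hn1
      have hn0 : (0:ℝ) < n := by exact_mod_cast hn1
      simp only [hF, Set.indicator_of_mem hn, Function.comp]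
      congr 2
      rw [mul_rpow (by positivity) hσ0.le, inv_rpow hn0.le, rpow_neg hσ0.le]
      have := rpow_pos_of_pos hσ0 α
      field_simp
  rw [integral_mul_const, mul_comm] at hlim
  refine hlim.congr' ?_
  filter_upwards [eventually_ge_atTop 1] with n hn using (step1 n hn).symm

lemma tendsto_floor_div {μ : ℝ} (hμ : 0 < μ) :
    Tendsto (fun n : ℕ => (⌊n * μ⌋₊ : ℝ) / n) atTop (𝓝 μ) := by
  have h := (tendsto_nat_floor_mul_div_atTop hμ.le).comp tendsto_natCast_atTop_atTop
  refine h.congr fun n => ?_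
  simp [mul_comm]

/-- Stable limit theorem for the first return map, with respect to any absolutely continuous
initial law. -/
theorem induced_stable (hα2 : 1/2 < α) (hg : Measurable g)
    (hgG : ∀ n, ∀ y ∈ Set.Ioc (1/2 : ℝ) 1, g (psi α n y) = G n y)
    (hG : (sys hα hα1 r hr hr1).Obs G C) (hC : 0 ≤ C) (hc : Asymp G c)
    (h0 : ∫ x in Y, g x * (sys hα hα1 r hr hr1).h0 x = 0) {μ : ℝ} (hμ : 0 < μ) (t : ℝ)
    {w : ℝ → ℂ} (hw : IntegrableOn w Y) :
    Tendsto (fun n : ℕ => ∫ x in Y, Complex.exp (Complex.I *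
      (t / (n:ℝ) ^ α * birkhoffSum (Ret α) g ⌊n * μ⌋₊ x : ℝ)) * w x) atTop
      (𝓝 (Complex.exp (μ * ((sys hα hα1 r hr hr1).H (1/2) *
        ∫ σ in Set.Ioi (0:ℝ), Psi (t * (c * (α * 4 ^ α)⁻¹) * σ ^ (-α)))) * ∫ y in Y, w y)) := by
  have hfl := tendsto_floor_div hμ
  have hnα : Tendsto (fun n : ℕ => ((n:ℝ) ^ α)⁻¹) atTop (𝓝 0) :=
    ((tendsto_rpow_atTop hα).comp tendsto_natCast_atTop_atTop).inv_tendsto_atTop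
  refine induced_limit hα hα1 hr hr1 hg hgG hG (t := fun n => t / (n:ℝ) ^ α)
    (k := fun n => ⌊n * μ⌋₊) ?_ ?_ ?_ ?_ hw
  · simpa [div_eq_mul_inv] using hnα.const_mul t
  · exact tendsto_nat_floor_atTop.comp
      (tendsto_natCast_atTop_atTop.atTop_mul_const hμ)
  · have h1 : Tendsto (fun n : ℕ => (n:ℝ) ^ (-(2 * α - 1))) atTop (𝓝 0) :=
      (tendsto_rpow_neg_atTop (by linarith)).comp tendsto_natCast_atTop_atTop
    have h2 := (hfl.mul h1).const_mul (t ^ 2)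
    rw [mul_zero, mul_zero] at h2
    refine h2.congr' ?_
    filter_upwards [eventually_ge_atTop 1] with n hn
    have hn0 : (0:ℝ) < n := by exact_mod_cast hn
    have e : (n:ℝ) ^ (-(2 * α - 1)) = n / ((n:ℝ) ^ α) ^ 2 := by
      rw [show -(2 * α - 1) = 1 - (α + α) by ring, rpow_sub hn0, rpow_one, rpow_add hn0, sq]
    rw [e]
    have := rpow_pos_of_pos hn0 α
    field_simp
  · have h1 := lam_asymp hα hα1 hr hr1 hα2 hg hgG hG.1 hC hc h0 t
    have h2 : Tendsto (fun n : ℕ => (((⌊n * μ⌋₊ : ℝ) / n : ℝ) : ℂ)) atTop (𝓝 (μ:ℂ)) :=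
      (Complex.continuous_ofReal.tendsto μ).comp hfl
    refine (h2.mul h1).congr' ?_
    filter_upwards [eventually_ge_atTop 1] with n hn
    have hn0 : (n:ℂ) ≠ 0 := by exact_mod_cast (by omega : n ≠ 0)
    push_cast
    field_simp

end
end LSV

namespace LSV
variable {α : ℝ}

/-! ### The invariant measure and the first return map -/

/-- The set `(1/2, 1]` on which the first return map is defined. -/
def A : Set ℝ := Set.Ioc (1/2) 1

lemma measurableSet_A : MeasurableSet A := measurableSet_Ioc

lemma ent_of_mem_A (hα : 0 < α) {x : ℝ} (hx : x ∈ A) : ent α x = 0 :=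
  ent_eq hα (by rw [zero_add, X_one hα]; exact hx.1) (by rw [X_zero]; exact hx.2)

lemma land_of_mem_A (hα : 0 < α) {x : ℝ} (hx : x ∈ A) : land α x = x := by
  rw [land, ent_of_mem_A hα hx]; rfl

lemma ent_of_le (hα : 0 < α) {x : ℝ} (hx0 : 0 < x) (hx : x ≤ 1/2) :
    ent α x = ent α (lsv α x) + 1 := by
  obtain ⟨h1, h2⟩ := chi_land hα (x := x) ⟨hx0, by linarith⟩
  rcases h : ent α x with _ | n
  · rw [h, chi_zero] at h2
    rw [← h2] at hx
    linarith [h1.1]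
  · rw [h] at h2
    rw [← h2, lsv_chi_succ hα n h1, ent_chi hα n h1]

lemma land_of_le (hα : 0 < α) {x : ℝ} (hx0 : 0 < x) (hx : x ≤ 1/2) :
    land α (lsv α x) = land α x := by
  rw [land, land, ent_of_le hα hx0 hx, Function.iterate_succ_apply]

lemma Ret_eq_land (x : ℝ) : Ret α x = land α (lsv α x) := by
  rw [Ret, land, ret, Function.iterate_succ_apply]

/-- The invariant measure under study, with the properties used below. -/
structure Inv (α : ℝ) (m : Measure ℝ) : Prop where
  prob : IsProbabilityMeasure m
  mp : MeasurePreserving (lsv α) m m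
  ac : m ≪ volume
  supp : ∀ᵐ x ∂m, x ∈ Set.Ioc (0:ℝ) 1

variable {m : Measure ℝ}

namespace Inv

/-- The Kac tower decomposition, truncated. -/
lemma tower_fin (hm : Inv α m) (hα : 0 < α) {F : ℝ → ENNReal} (hF : Measurable F) (N : ℕ) :
    ∫⁻ x, F x ∂m = ∑ j ∈ Finset.range (N + 1), ∫⁻ x,
      (A ∩ {x | j < ret α x}).indicator (fun x => F ((lsv α)^[j] x)) x ∂m +
      ∫⁻ x, {x | N < ent α x}.indicator (fun x => F ((lsv α)^[N] x)) x ∂m := by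
  have hA := measurableSet_A
  have hret : ∀ j, MeasurableSet {x | j < ret α x} := fun j =>
    measurableSet_lt measurable_const (measurable_ret hα)
  have hent : ∀ j, MeasurableSet {x | j < ent α x} := fun j =>
    measurableSet_lt measurable_const (measurable_ent hα)
  have hFj : ∀ j, Measurable fun x => F ((lsv α)^[j] x) := fun j => hF.comp (measurable_iter j)
  induction N with
  | zero =>
    rw [zero_add, Finset.sum_range_one, ← lintegral_add_left ((hFj 0).indicator (hA.inter (hret 0)))]
    refine lintegral_congr_ae ?_
    filter_upwards [hm.supp] with x hx
    by_cases hxA : x ∈ A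
    · have h1 : x ∈ A ∩ {x | 0 < ret α x} := ⟨hxA, Nat.succ_pos _⟩
      have h2 : x ∉ {x | 0 < ent α x} := by simp [ent_of_mem_A hα hxA]
      rw [Set.indicator_of_mem h1, Set.indicator_of_notMem h2]; simp
    · have h1 : x ∉ A ∩ {x | 0 < ret α x} := fun h => hxA h.1
      have hx2 : x ≤ 1/2 := by by_contra h; exact hxA ⟨not_le.1 h, hx.2⟩
      have h2 : x ∈ {x | 0 < ent α x} := by simp [ent_of_le hα hx.1 hx2]
      rw [Set.indicator_of_mem h2, Set.indicator_of_notMem h1]; simp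
  | succ N ih =>
    rw [ih, Finset.sum_range_succ _ (N+1), add_assoc]
    congr 1
    rw [← lintegral_add_left ((hFj (N+1)).indicator (hA.inter (hret (N+1)))),
      ← hm.mp.lintegral_comp ((hFj N).indicator (hent N))]
    refine lintegral_congr_ae ?_
    filter_upwards [hm.supp] with x hx
    by_cases hN : N < ent α (lsv α x)
    · rw [Set.indicator_of_mem (show lsv α x ∈ {x | N < ent α x} from hN)]
      by_cases hxA : x ∈ A
      · rw [Set.indicator_of_mem (show x ∈ A ∩ {x | N + 1 < ret α x} from
          ⟨hxA, Nat.succ_lt_succ hN⟩), Set.indicator_of_notMem (show x ∉ {x | N + 1 < ent α x} from by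
            rw [Set.mem_ofPred_eq, ent_of_mem_A hα hxA]; omega), add_zero, Function.iterate_succ_apply]
      · have hx2 : x ≤ 1/2 := by by_contra h; exact hxA ⟨not_le.1 h, hx.2⟩
        rw [Set.indicator_of_notMem (fun h => hxA h.1), zero_add,
          Set.indicator_of_mem (show x ∈ {x | N + 1 < ent α x} from by
            rw [Set.mem_ofPred_eq, ent_of_le hα hx.1 hx2]; omega), Function.iterate_succ_apply]
    · rw [Set.indicator_of_notMem (show lsv α x ∉ {x | N < ent α x} from hN),
        Set.indicator_of_notMem (fun h => hN (Nat.lt_of_succ_lt_succ h.2)),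
        Set.indicator_of_notMem (show x ∉ {x | N + 1 < ent α x} from ?_), add_zero]
      rw [Set.mem_ofPred_eq]
      by_cases hxA : x ∈ A
      · rw [ent_of_mem_A hα hxA]; omega
      · have hx2 : x ≤ 1/2 := by by_contra h; exact hxA ⟨not_le.1 h, hx.2⟩
        rw [ent_of_le hα hx.1 hx2]; omega

lemma tendsto_ent_gt (hm : Inv α m) (hα : 0 < α) :
    Tendsto (fun N : ℕ => m {x | N < ent α x}) atTop (𝓝 0) := by
  have := hm.prob
  have h := tendsto_measure_iInter_atTop (μ := m) (s := fun N : ℕ => {x | N < ent α x})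
    (fun N => (measurableSet_lt measurable_const (measurable_ent hα)).nullMeasurableSet)
    (fun a b hab x hx => lt_of_le_of_lt hab hx) ⟨0, measure_ne_top _ _⟩
  have e : ⋂ N : ℕ, {x | N < ent α x} = ∅ := by
    ext x
    simp only [Set.mem_iInter, Set.mem_ofPred_eq, Set.mem_empty_iff_false, iff_false]
    exact fun h => lt_irrefl _ (h (ent α x))
  rwa [e, measure_empty] at h

/-- Kac's formula for a bounded function. -/
lemma tower (hm : Inv α m) (hα : 0 < α) {F : ℝ → ENNReal} (hF : Measurable F) {K : NNReal}
    (hK : ∀ x, F x ≤ K) :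
    ∫⁻ x, F x ∂m = ∫⁻ x in A, ∑ j ∈ Finset.range (ret α x), F ((lsv α)^[j] x) ∂m := by
  have := hm.prob
  have hA := measurableSet_A
  have hret : ∀ j, MeasurableSet {x | j < ret α x} := fun j =>
    measurableSet_lt measurable_const (measurable_ret hα)
  have hFj : ∀ j, Measurable fun x => F ((lsv α)^[j] x) := fun j => hF.comp (measurable_iter j)
  have e : ∫⁻ x in A, ∑ j ∈ Finset.range (ret α x), F ((lsv α)^[j] x) ∂m =
      ∑' j, ∫⁻ x, (A ∩ {x | j < ret α x}).indicator (fun x => F ((lsv α)^[j] x)) x ∂m := by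
    rw [← lintegral_tsum fun j => ((hFj j).indicator (hA.inter (hret j))).aemeasurable,
      ← lintegral_indicator hA]
    refine lintegral_congr fun x => ?_
    by_cases hx : x ∈ A
    · rw [Set.indicator_of_mem hx, tsum_eq_sum (s := Finset.range (ret α x))]
      · refine Finset.sum_congr rfl fun j hj => ?_
        rw [Set.indicator_of_mem (show x ∈ A ∩ {x | j < ret α x} from
          ⟨hx, Finset.mem_range.1 hj⟩)]
      · intro j hj
        rw [Set.indicator_of_notMem fun h => hj (Finset.mem_range.2 h.2)]
    · rw [Set.indicator_of_notMem hx]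
      symm
      refine ENNReal.tsum_eq_zero.2 fun j => Set.indicator_of_notMem (fun h => hx h.1) _
  rw [e]
  have h1 := (ENNReal.summable (f := fun j => ∫⁻ x, (A ∩ {x | j < ret α x}).indicator
    (fun x => F ((lsv α)^[j] x)) x ∂m)).hasSum.tendsto_sum_nat.comp (tendsto_add_atTop_nat 1)
  have h2 : Tendsto (fun N : ℕ => ∫⁻ x, {x | N < ent α x}.indicator
      (fun x => F ((lsv α)^[N] x)) x ∂m) atTop (𝓝 0) := by
    have h3 : Tendsto (fun N : ℕ => (K : ENNReal) * m {x | N < ent α x}) atTop (𝓝 0) := by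
      have := ENNReal.Tendsto.const_mul (hm.tendsto_ent_gt hα) (a := (K:ENNReal))
        (Or.inr ENNReal.coe_ne_top)
      rwa [mul_zero] at this
    refine tendsto_of_tendsto_of_tendsto_of_le_of_le tendsto_const_nhds h3 (fun _ => zero_le) ?_
    intro N
    have hent : MeasurableSet {x | N < ent α x} :=
      measurableSet_lt measurable_const (measurable_ent hα)
    simp only
    rw [lintegral_indicator hent, ← setLIntegral_const]
    exact lintegral_mono fun x => hK _
  have h3 := h1.add h2
  rw [add_zero] at h3
  refine tendsto_nhds_unique (tendsto_const_nhds.congr fun N => ?_) h3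
  exact hm.tower_fin hα hF N

lemma kac (hm : Inv α m) (hα : 0 < α) : ∫⁻ x in A, (ret α x : ENNReal) ∂m = 1 := by
  have := hm.prob
  have h := hm.tower hα (F := fun _ => 1) measurable_const (K := 1) (by simp)
  simp only [lintegral_const, measure_univ, mul_one, Finset.sum_const, Finset.card_range,
    nsmul_eq_mul] at h
  exact h.symm

lemma A_pos (hm : Inv α m) (hα : 0 < α) : 0 < m.real A := by
  have := hm.prob
  refine ENNReal.toReal_pos (fun h => ?_) (measure_ne_top _ _)
  have h1 := hm.kac hα
  rw [Measure.restrict_eq_zero.2 h, lintegral_zero_measure] at h1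
  exact zero_ne_one h1

lemma integrableOn_ret (hm : Inv α m) (hα : 0 < α) : IntegrableOn (fun x => (ret α x : ℝ)) A m := by
  have hme : Measurable fun x => (ret α x : ℝ) := measurable_from_nat.comp (measurable_ret hα)
  refine ⟨hme.aestronglyMeasurable, ?_⟩
  rw [hasFiniteIntegral_iff_enorm]
  have e : ∀ x, ‖(ret α x : ℝ)‖ₑ = (ret α x : ENNReal) := fun x => by
    rw [Real.enorm_eq_ofReal (by positivity), ENNReal.ofReal_natCast]
  simp_rw [e, hm.kac hα]
  exact ENNReal.one_lt_top

lemma integral_ret (hm : Inv α m) (hα : 0 < α) : ∫ x in A, (ret α x : ℝ) ∂m = 1 := by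
  have hme : Measurable fun x => (ret α x : ℝ) := measurable_from_nat.comp (measurable_ret hα)
  rw [integral_eq_lintegral_of_nonneg_ae (Eventually.of_forall fun x => by positivity)
    hme.aestronglyMeasurable]
  simp_rw [ENNReal.ofReal_natCast, hm.kac hα]
  simp

lemma abs_gs_le {f : ℝ → ℝ} {B : ℝ} (hB : ∀ x, |f x| ≤ B) (x : ℝ) :
    |gs α f x| ≤ B * ret α x := by
  rw [gs, birkhoffSum]
  refine (Finset.abs_sum_le_sum_abs _ _).trans ((Finset.sum_le_sum fun i _ => hB _).trans ?_)
  simp [mul_comm]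

lemma integrableOn_gs (hm : Inv α m) (hα : 0 < α) {f : ℝ → ℝ} (hf : Measurable f) {B : ℝ}
    (hB : ∀ x, |f x| ≤ B) : IntegrableOn (gs α f) A m :=
  ((hm.integrableOn_ret hα).const_mul B).mono' (measurable_gs hα hf).aestronglyMeasurable
    (Eventually.of_forall fun x => abs_gs_le hB x)

/-- Kac's formula for a bounded observable. -/
lemma integral_gs (hm : Inv α m) (hα : 0 < α) {f : ℝ → ℝ} (hf : Measurable f) {B : ℝ}
    (hB : ∀ x, |f x| ≤ B) : ∫ x in A, gs α f x ∂m = ∫ x, f x ∂m := by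
  have := hm.prob
  have hB0 : 0 ≤ B := (abs_nonneg _).trans (hB 0)
  have hfi : Integrable f m := Integrable.of_bound hf.aestronglyMeasurable B
    (Eventually.of_forall hB)
  have hpos : ∀ x, 0 ≤ f x + B := fun x => by linarith [(abs_le.1 (hB x)).1]
  have h := hm.tower hα (F := fun x => ENNReal.ofReal (f x + B)) (by fun_prop)
    (K := (2 * B).toNNReal) (fun x => ENNReal.ofReal_le_ofReal (by linarith [(abs_le.1 (hB x)).2]))
  have e : ∀ x, ∑ j ∈ Finset.range (ret α x), ENNReal.ofReal (f ((lsv α)^[j] x) + B) =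
      ENNReal.ofReal (gs α f x + ret α x * B) := by
    intro x
    rw [← ENNReal.ofReal_sum_of_nonneg fun j _ => hpos _, Finset.sum_add_distrib]
    simp [gs, birkhoffSum]
  simp_rw [e] at h
  have hgi := hm.integrableOn_gs hα hf hB
  have hri := (hm.integrableOn_ret hα).mul_const B
  have hfi2 : Integrable (fun x => f x + B) m := hfi.add (integrable_const B)
  have hgi2 : IntegrableOn (fun x => gs α f x + ret α x * B) A m := hgi.add hri
  rw [← ofReal_integral_eq_lintegral_ofReal hfi2
    (Eventually.of_forall hpos), ← ofReal_integral_eq_lintegral_ofReal hgi2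
    (Eventually.of_forall fun x => ?_)] at h
  · have h2 := (ENNReal.ofReal_eq_ofReal_iff (integral_nonneg hpos) (integral_nonneg fun x => ?_)).1 h
    · rw [integral_add hfi (integrable_const B), integral_add hgi hri, integral_mul_const,
        hm.integral_ret hα] at h2
      simp at h2
      exact h2.symm
    · have := (abs_le.1 (abs_gs_le hB (α := α) x)).1
      show 0 ≤ gs α f x + ret α x * B
      linarith
  · have := (abs_le.1 (abs_gs_le hB (α := α) x)).1
    show 0 ≤ gs α f x + ret α x * B
    linarith

/-- The first return map preserves the restriction of the invariant measure. -/
lemma Ret_inv (hm : Inv α m) (hα : 0 < α) {F : ℝ → ℂ} (hF : Measurable F) {B : ℝ}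
    (hB : ∀ x, ‖F x‖ ≤ B) : ∫ x in A, F (Ret α x) ∂m = ∫ x in A, F x ∂m := by
  have := hm.prob
  have hA := measurableSet_A
  have hFl : Measurable fun x => F (land α x) := hF.comp (measurable_land hα)
  have hi : Integrable (fun x => F (land α x)) m :=
    Integrable.of_bound hFl.aestronglyMeasurable B (Eventually.of_forall fun x => hB _)
  have hi' : Integrable (fun x => F (land α (lsv α x))) m :=
    Integrable.of_bound (hFl.comp measurable_lsv).aestronglyMeasurable B
      (Eventually.of_forall fun x => hB _)
  have h1 : ∫ x, F (land α (lsv α x)) ∂m = ∫ x, F (land α x) ∂m := by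
    rw [← integral_map measurable_lsv.aemeasurable (f := fun x => F (land α x))
      hFl.aestronglyMeasurable, hm.mp.map_eq]
  rw [← integral_add_compl hA hi, ← integral_add_compl hA hi'] at h1
  have h2 : ∫ x in Aᶜ, F (land α (lsv α x)) ∂m = ∫ x in Aᶜ, F (land α x) ∂m := by
    refine integral_congr_ae ?_
    filter_upwards [ae_restrict_of_ae hm.supp, ae_restrict_mem hA.compl] with x hx hxA
    have hx2 : x ≤ 1/2 := by by_contra h; exact hxA ⟨not_le.1 h, hx.2⟩
    rw [land_of_le hα hx.1 hx2]
  rw [h2] at h1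
  have h3 := add_right_cancel h1
  simp_rw [← Ret_eq_land] at h3
  rw [h3]
  refine setIntegral_congr_fun hA fun x hx => ?_
  simp only [land_of_mem_A hα hx]

lemma Ret_iter_inv (hm : Inv α m) (hα : 0 < α) {F : ℝ → ℂ} (hF : Measurable F) {B : ℝ}
    (hB : ∀ x, ‖F x‖ ≤ B) (k : ℕ) : ∫ x in A, F ((Ret α)^[k] x) ∂m = ∫ x in A, F x ∂m := by
  induction k with
  | zero => rfl
  | succ k ih =>
    simp_rw [Function.iterate_succ_apply]
    rw [hm.Ret_inv hα (F := fun x => F ((Ret α)^[k] x)) (hF.comp ((measurable_Ret hα).iterate k))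
      (fun x => hB _), ih]

end Inv

/-- Integration against an absolutely continuous finite measure on `Y`. -/
lemma exists_density_Y {κ : Measure ℝ} [IsFiniteMeasure κ] (hκ : κ ≪ volume.restrict Y) :
    ∃ w : ℝ → ℂ, IntegrableOn w Y ∧ ∀ Φ : ℝ → ℂ, ∫ x, Φ x ∂κ = ∫ x in Y, Φ x * w x := by
  refine ⟨fun x => ((κ.rnDeriv (volume.restrict Y) x).toReal : ℂ),
    Measure.integrable_toReal_rnDeriv.ofReal, fun Φ => ?_⟩
  rw [← integral_rnDeriv_smul hκ]
  refine integral_congr_ae (Eventually.of_forall fun x => ?_)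
  simp [mul_comm]

namespace Inv
variable {r : ℝ}

lemma ac_A (hm : Inv α m) : m.restrict A ≪ volume.restrict Y := by
  rw [restrict_Y]; exact hm.ac.restrict A

/-- Invariance of `m` under the return map, combined with equidistribution, identifies `m` on `A`
as a multiple of the invariant density of the induced system. -/
lemma integral_A (hm : Inv α m) (hα : 0 < α) (hα1 : α < 1) (hr : 0 < r) (hr1 : r ≤ 1) {F : ℝ → ℂ}
    (hF : Measurable F) {B : ℝ} (hB : ∀ x, ‖F x‖ ≤ B) :
    ∫ x in A, F x ∂m = (∫ y in Y, F y * (sys hα hα1 r hr hr1).H y) * m.real A := by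
  have := hm.prob
  obtain ⟨w, hw, hΦ⟩ := exists_density_Y hm.ac_A
  have h := equidist hα hα1 hr hr1 hF hB hw
  have e : ∫ y in Y, w y = m.real A := by
    have := hΦ fun _ => 1
    simp only [one_mul] at this
    rw [← this]
    simp [Measure.real]
  rw [e] at h
  refine tendsto_nhds_unique (tendsto_const_nhds.congr fun k => ?_) h
  rw [← hΦ fun x => F ((Ret α)^[k] x), hm.Ret_iter_inv hα hF hB]

/-- On `(1/2, 1]` the invariant measure is a multiple of the invariant measure of the induced
system. -/
lemma restrict_A (hm : Inv α m) (hα : 0 < α) (hα1 : α < 1) (hr : 0 < r) (hr1 : r ≤ 1) :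
    m.restrict A = (volume.restrict Y).withDensity
      fun x => ENNReal.ofReal (m.real A * (sys hα hα1 r hr hr1).h0 x) := by
  have := hm.prob
  set S := sys hα hα1 r hr hr1
  have hi : IntegrableOn (fun x => m.real A * S.h0 x) Y := S.h0_hb_real.integrableOn.const_mul _
  ext s hs
  rw [withDensity_apply _ hs, ← ofReal_integral_eq_lintegral_ofReal (Integrable.restrict hi)]
  · have h1 := hm.integral_A hα hα1 hr hr1 (F := s.indicator fun _ => 1)
      (measurable_const.indicator hs) (B := 1) (fun x => by
        by_cases h : x ∈ s <;> simp [h])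
    have h2 : ∫ x in A, s.indicator (fun _ => (1:ℂ)) x ∂m = ((m.restrict A).real s : ℂ) := by
      rw [integral_indicator hs]
      simp [Measure.real]
    have h3 : ∫ y in Y, s.indicator (fun _ => (1:ℂ)) y * S.H y =
        ((∫ x in s, S.h0 x ∂(volume.restrict Y) : ℝ) : ℂ) := by
      rw [← integral_complex_ofReal, ← integral_indicator hs]
      refine integral_congr_ae (Eventually.of_forall fun x => ?_)
      by_cases h : x ∈ s <;> simp [h, Sys.H]
    rw [h2, h3] at h1
    have h4 : (m.restrict A).real s = (∫ x in s, S.h0 x ∂(volume.restrict Y)) * m.real A := by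
      exact_mod_cast h1
    rw [integral_const_mul, mul_comm, ← h4, Measure.real, ENNReal.ofReal_toReal (measure_ne_top _ _)]
  · refine ae_restrict_of_ae ((ae_restrict_iff' measurableSet_Icc).2 (Eventually.of_forall fun x hx => ?_))
    have := S.h0_ge hx
    exact mul_nonneg measureReal_nonneg (le_trans (by positivity) this)

lemma integral_A_real (hm : Inv α m) (hα : 0 < α) (hα1 : α < 1) (hr : 0 < r) (hr1 : r ≤ 1)
    (g : ℝ → ℝ) : ∫ x in A, g x ∂m = m.real A * ∫ x in Y, g x * (sys hα hα1 r hr hr1).h0 x := by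
  set S := sys hα hα1 r hr hr1
  rw [hm.restrict_A hα hα1 hr hr1, integral_withDensity_eq_integral_toReal_smul₀
    (S.h0_hb_real.integrableOn.const_mul _).aemeasurable.ennreal_ofReal
    (Eventually.of_forall fun x => ENNReal.ofReal_lt_top), ← integral_const_mul]
  refine setIntegral_congr_fun measurableSet_Icc fun x hx => ?_
  have h1 : 0 ≤ S.h0 x := le_trans (by positivity) (S.h0_ge hx)
  simp only [smul_eq_mul]
  rw [ENNReal.toReal_ofReal (mul_nonneg measureReal_nonneg h1)]
  ring

/-- The value at `1/2` of the continuous density of the invariant measure. -/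
lemma density_half (hm : Inv α m) (hα : 0 < α) (hα1 : α < 1) (hr : 0 < r) (hr1 : r ≤ 1)
    {h : ℝ → ℝ} (hh : ContinuousOn h (Set.Ioc 0 1))
    (hmh : m = volume.withDensity fun x => ENNReal.ofReal (h x)) :
    h (1/2) = m.real A * (sys hα hα1 r hr hr1).h0 (1/2) := by
  have := hm.prob
  set S := sys hα hα1 r hr hr1
  have hY : Y ⊆ Set.Ioc (0:ℝ) 1 := fun x hx => ⟨by linarith [hx.1], hx.2⟩
  have hhY := hh.mono hY
  have e1 := hm.restrict_A hα hα1 hr hr1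
  have e2 : m.restrict A = (volume.restrict Y).withDensity fun x => ENNReal.ofReal (h x) := by
    conv_lhs => rw [hmh]
    rw [restrict_withDensity measurableSet_A, restrict_Y, A]
  rw [e2] at e1
  have hae := (withDensity_eq_iff (hhY.aemeasurable measurableSet_Icc).ennreal_ofReal
    (S.h0_hb_real.integrableOn.const_mul _).aemeasurable.ennreal_ofReal (by
      rw [← setLIntegral_univ, ← withDensity_apply _ MeasurableSet.univ, ← e2]
      exact measure_ne_top _ _)).1 e1
  have hae2 : (fun x => max (h x) 0) =ᵐ[volume.restrict (Set.Icc (1/2) 1)]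
      fun x => max (m.real A * S.h0 x) 0 := by
    filter_upwards [hae] with x hx
    have := congrArg ENNReal.toReal hx
    rwa [ENNReal.toReal_ofReal', ENNReal.toReal_ofReal'] at this
  have h1 := Measure.eqOn_Icc_of_ae_eq volume (by norm_num) hae2
    (hhY.sup continuousOn_const)
    ((S.h0_hb_real.continuousOn.const_mul _).sup continuousOn_const)
    (show (1/2:ℝ) ∈ Set.Icc (1/2:ℝ) 1 from ⟨le_rfl, by norm_num⟩)
  simp only at h1
  have h2 : 0 < m.real A * S.h0 (1/2) := mul_pos (hm.A_pos hα)
    (lt_of_lt_of_le (by positivity) (S.h0_ge (y := 1/2) ⟨le_rfl, by norm_num⟩))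
  rw [max_eq_left h2.le] at h1
  rcases le_total (h (1/2)) 0 with h3 | h3
  · rw [max_eq_right h3] at h1; linarith
  · rwa [max_eq_left h3] at h1

/-- The law of the landing point is absolutely continuous. -/
lemma land_ac (hm : Inv α m) (hα : 0 < α) : m.map (land α) ≪ volume.restrict Y := by
  refine Measure.AbsolutelyContinuous.mk fun s hs h => ?_
  rw [Measure.map_apply (measurable_land hα) hs]
  have h1 : volume (s ∩ A) = 0 := by
    rw [restrict_Y, Measure.restrict_apply hs] at h
    exact h
  have h2 : m (⋃ n : ℕ, ((lsv α)^[n]) ⁻¹' (s ∩ A)) = 0 := by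
    refine measure_iUnion_null fun n => ?_
    rw [(hm.mp.iterate n).measure_preimage (hs.inter measurableSet_A).nullMeasurableSet]
    exact hm.ac h1
  refine measure_mono_null_ae ?_ h2
  filter_upwards [hm.supp] with x hx hxs
  exact Set.mem_iUnion.2 ⟨ent α x, hxs, (chi_land hα hx).1⟩

end Inv
end LSV

namespace LSV
variable {α : ℝ}

/-! ### Limit theorem and tightness for the first return map, started from the invariant measure -/

/-- A centered observable `g` of the first return map which is locally Hölder along the inverse
branches and grows like `c` times the return time. -/
structure Adm {r : ℝ} (hα : 0 < α) (hα1 : α < 1) (hr : 0 < r) (hr1 : r ≤ 1) (g : ℝ → ℝ)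
    (G : ℕ → ℝ → ℝ) (C c : ℝ) : Prop where
  meas : Measurable g
  branch : ∀ n, ∀ y ∈ Set.Ioc (1/2 : ℝ) 1, g (psi α n y) = G n y
  obs : (sys hα hα1 r hr hr1).Obs G C
  C_nonneg : 0 ≤ C
  asymp : Asymp G c
  centered : ∫ x in Y, g x * (sys hα hα1 r hr hr1).h0 x = 0

/-- The characteristic exponent of the limit law. -/
noncomputable def expo (α c t : ℝ) : ℂ :=
  ∫ σ in Set.Ioi (0:ℝ), Psi (t * (c * (α * 4 ^ α)⁻¹) * σ ^ (-α))

lemma continuousAt_expo (hα2 : 1/2 < α) (hα1 : α < 1) (c : ℝ) : ContinuousAt (expo α c) 0 := by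
  have hα : 0 < α := by linarith
  have h0 : expo α c 0 = 0 := by simp [expo, Psi_zero]
  rw [ContinuousAt, h0]
  set κ := c * (α * 4 ^ α)⁻¹
  set D := |Gamma (1 - 1/α)| * (|Real.cos (π * (1/α) / 2)| * (1 + |Real.tan (π * (1/α) / 2)|))
  have hle : ∀ t, ‖expo α c t‖ ≤ |t * κ| ^ (1/α) * D := by
    intro t
    rw [expo, integral_Psi hα2 hα1, norm_mul, norm_neg, Complex.norm_real, norm_mul,
      Complex.norm_real, Real.norm_eq_abs, Real.norm_eq_abs, abs_mul,
      abs_of_nonneg (show 0 ≤ |t * κ| ^ (1/α) by positivity)]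
    have h1 : ‖1 - Complex.I * (Real.sign (t * κ) : ℝ) * (Real.tan (π * (1/α) / 2) : ℝ)‖ ≤
        1 + |Real.tan (π * (1/α) / 2)| := by
      refine (norm_sub_le _ _).trans ?_
      rw [norm_mul, norm_mul, norm_one, Complex.norm_I, one_mul, Complex.norm_real,
        Complex.norm_real, Real.norm_eq_abs, Real.norm_eq_abs]
      have : |Real.sign (t * κ)| ≤ 1 := by
        rcases Real.sign_apply_eq (t * κ) with h | h | h <;> rw [h] <;> norm_num
      gcongr
      exact mul_le_of_le_one_left (abs_nonneg _) this
    calc _ ≤ |Gamma (1 - 1/α)| * (|t * κ| ^ (1/α) * |Real.cos (π * (1/α) / 2)| *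
          (1 + |Real.tan (π * (1/α) / 2)|)) := by gcongr
      _ = _ := by simp only [D]; ring
  refine squeeze_zero_norm hle ?_
  have h1 : Continuous fun t : ℝ => |t * κ| ^ (1/α) * D :=
    ((by fun_prop : Continuous fun t : ℝ => |t * κ|).rpow_const
      fun _ => Or.inr (by positivity)).mul_const D
  have h2 := h1.tendsto 0
  simpa [hα.ne'] using h2

variable {m : Measure ℝ} {r : ℝ} {hα : 0 < α} {hα1 : α < 1} {hr : 0 < r} {hr1 : r ≤ 1}
  {g : ℝ → ℝ} {G : ℕ → ℝ → ℝ} {C c : ℝ}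

/-- Stable limit for `⌊n * m A⌋` steps of the return map, the initial point being the first point
of the orbit in `A`, with law absolutely continuous. -/
lemma Adm.limit (hg : Adm hα hα1 hr hr1 g G C c) (hm : Inv α m) (hα2 : 1/2 < α) (t : ℝ) :
    Tendsto (fun n : ℕ => ∫ x, Complex.exp (Complex.I *
      (t / (n:ℝ) ^ α * birkhoffSum (Ret α) g ⌊n * m.real A⌋₊ (land α x) : ℝ)) ∂m) atTop
      (𝓝 (Complex.exp (m.real A * ((sys hα hα1 r hr hr1).H (1/2) * expo α c t)))) := by
  have := hm.prob
  have : IsProbabilityMeasure (m.map (land α)) :=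
    Measure.isProbabilityMeasure_map (measurable_land hα).aemeasurable
  obtain ⟨w, hw, hΦ⟩ := exists_density_Y (hm.land_ac hα)
  have h := induced_stable hα hα1 hr hr1 hα2 hg.meas hg.branch hg.obs hg.C_nonneg hg.asymp
    hg.centered (hm.A_pos hα) t hw
  have e : ∫ y in Y, w y = 1 := by
    have := hΦ fun _ => 1
    simp only [one_mul] at this
    rw [← this]
    simp
  rw [e, mul_one] at h
  refine h.congr fun n => ?_
  rw [← hΦ fun x => Complex.exp (Complex.I *
      (t / (n:ℝ) ^ α * birkhoffSum (Ret α) g ⌊n * m.real A⌋₊ x : ℝ)), integral_map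
      (measurable_land hα).aemeasurable]
  exact (measurable_cexp_I (measurable_birkhoff_Ret hα hg.meas _) _).aestronglyMeasurable

/-- Tightness of the normalized sums, from continuity at `0` of the limit characteristic
function. -/
lemma Adm.tight (hg : Adm hα hα1 hr hr1 g G C c) (hm : Inv α m) (hα2 : 1/2 < α)
    {δ : ENNReal} (hδ : 0 < δ) :
    ∃ K > 0, ∀ n : ℕ, 1 ≤ n → m {x | K * (n:ℝ) ^ α <
      |birkhoffSum (Ret α) g ⌊n * m.real A⌋₊ (land α x)|} ≤ δ := by
  have := hm.prob
  set Z : ℕ → ℝ → ℝ := fun n x => birkhoffSum (Ret α) g ⌊n * m.real A⌋₊ (land α x) / (n:ℝ) ^ α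
    with hZ
  have hZm : ∀ n, Measurable (Z n) := fun n =>
    ((measurable_birkhoff_Ret hα hg.meas _).comp (measurable_land hα)).div_const _
  have hprob : ∀ n, IsProbabilityMeasure (m.map (Z n)) := fun n =>
    Measure.isProbabilityMeasure_map (hZm n).aemeasurable
  have hcont : ContinuousAt (fun t => Complex.exp (m.real A *
      ((sys hα hα1 r hr hr1).H (1/2) * expo α c t))) 0 :=
    ((continuousAt_const.mul (continuousAt_const.mul (continuousAt_expo hα2 hα1 c)))).cexp
  have htight := isTightMeasureSet_of_tendsto_charFun (μ := fun n => m.map (Z n)) hcont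
    (fun t => by
      refine (hg.limit hm hα2 t).congr fun n => ?_
      rw [charFun_apply_real, integral_map (hZm n).aemeasurable (by fun_prop)]
      refine integral_congr_ae (Eventually.of_forall fun x => ?_)
      simp only [hZ]
      congr 1
      push_cast
      ring)
  obtain ⟨Q, hQ, hQm⟩ := isTightMeasureSet_iff_exists_isCompact_measure_compl_le.1 htight δ hδ
  obtain ⟨K, hK⟩ := hQ.isBounded.exists_norm_le
  refine ⟨max K 1, by positivity, fun n hn => ?_⟩
  refine le_trans ?_ (hQm _ ⟨n, rfl⟩)
  rw [Measure.map_apply (hZm n) hQ.measurableSet.compl]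
  refine measure_mono fun x hx hxQ => ?_
  have hn0 : (0:ℝ) < (n:ℝ) ^ α := rpow_pos_of_pos (by exact_mod_cast hn) _
  have h1 := hK _ hxQ
  rw [Real.norm_eq_abs, hZ] at h1
  simp only [abs_div, abs_of_pos hn0] at h1
  rw [div_le_iff₀ hn0] at h1
  have h2 : max K 1 * (n:ℝ) ^ α < _ := hx
  have h3 : K * (n:ℝ) ^ α ≤ max K 1 * (n:ℝ) ^ α := by gcongr; exact le_max_left _ _
  linarith

/-! ### Excursions and Birkhoff sums -/

/-- The time of the `k`-th return to `(1/2, 1]`. -/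
noncomputable def tau (α : ℝ) (k : ℕ) (y : ℝ) : ℕ := ∑ i ∈ Finset.range k, ret α ((Ret α)^[i] y)

lemma Ret_iter (k : ℕ) (y : ℝ) : (Ret α)^[k] y = (lsv α)^[tau α k y] y := by
  induction k with
  | zero => simp [tau]
  | succ k ih =>
    rw [Function.iterate_succ_apply', tau, Finset.sum_range_succ, add_comm,
      Function.iterate_add_apply, ← tau, ← ih, Ret]

lemma birkhoffSum_gs (f : ℝ → ℝ) (k : ℕ) (y : ℝ) :
    birkhoffSum (Ret α) (gs α f) k y = birkhoffSum (lsv α) f (tau α k y) y := by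
  induction k with
  | zero => simp [tau]
  | succ k ih =>
    have h1 : tau α (k + 1) y = tau α k y + ret α ((Ret α)^[k] y) := Finset.sum_range_succ _ _
    rw [birkhoffSum_succ, ih, h1, birkhoffSum_add, ← Ret_iter, gs]

lemma birkhoffSum_ent_tau (f : ℝ → ℝ) (k : ℕ) (x : ℝ) :
    birkhoffSum (lsv α) f (ent α x + tau α k (land α x)) x =
      birkhoffSum (lsv α) f (ent α x) x + birkhoffSum (Ret α) (gs α f) k (land α x) := by
  rw [birkhoffSum_add, birkhoffSum_gs, land]

lemma abs_birkhoffSum_le {T f : ℝ → ℝ} {B : ℝ} (hB : ∀ x, |f x| ≤ B) (n : ℕ) (x : ℝ) :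
    |birkhoffSum T f n x| ≤ B * n := by
  rw [birkhoffSum]
  refine (Finset.abs_sum_le_sum_abs _ _).trans ((Finset.sum_le_sum fun i _ => hB _).trans ?_)
  simp [mul_comm]

lemma abs_birkhoffSum_sub_le {T f : ℝ → ℝ} {B : ℝ} (hB : ∀ x, |f x| ≤ B) (a b : ℕ) (x : ℝ) :
    |birkhoffSum T f a x - birkhoffSum T f b x| ≤ B * |(a:ℝ) - b| := by
  have key : ∀ a b : ℕ, b ≤ a → |birkhoffSum T f a x - birkhoffSum T f b x| ≤ B * |(a:ℝ) - b| := by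
    intro a b hab
    obtain ⟨d, rfl⟩ := Nat.exists_eq_add_of_le hab
    rw [birkhoffSum_add, add_sub_cancel_left]
    push_cast
    rw [add_sub_cancel_left, abs_of_nonneg (show (0:ℝ) ≤ (d:ℝ) from Nat.cast_nonneg d)]
    exact abs_birkhoffSum_le hB d _
  rcases le_total b a with h | h
  · exact key a b h
  · rw [abs_sub_comm, abs_sub_comm (a:ℝ)]; exact key b a h

/-- The centered return time is admissible. -/
lemma adm_ret (hm : Inv α m) : Adm hα hα1 hr hr1 (fun x => (ret α x : ℝ) - (m.real A)⁻¹)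
    (fun n _ => (n:ℝ) + 1 - (m.real A)⁻¹) (1 + (m.real A)⁻¹) 1 := by
  have := hm.prob
  have hA := hm.A_pos hα
  have hA' : 0 < (m.real A)⁻¹ := inv_pos.2 hA
  refine ⟨(measurable_from_nat.comp (measurable_ret hα)).sub_const _, fun n y hy => ?_,
    ⟨fun n y _ => ?_, fun n y _ z _ => ?_⟩, by positivity, fun ε hε => ?_, ?_⟩
  · rw [ret_psi hα n hy]; push_cast; ring
  · have : (0:ℝ) ≤ n := by positivity
    rw [abs_le]
    constructor <;> nlinarith
  · rw [sub_self, abs_zero]; positivity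
  · obtain ⟨N, hN⟩ := exists_nat_ge ((m.real A)⁻¹ / ε)
    refine ⟨N, fun n hn y _ => ?_⟩
    rw [div_le_iff₀ hε] at hN
    have h1 : (N:ℝ) ≤ n := by exact_mod_cast hn
    rw [show (n:ℝ) + 1 - (m.real A)⁻¹ - 1 * (n + 1) = -(m.real A)⁻¹ by ring, abs_neg, abs_of_pos hA']
    nlinarith
  · have h1 := hm.integral_A_real hα hα1 hr hr1 (fun x => (ret α x : ℝ) - (m.real A)⁻¹)
    rw [integral_sub (hm.integrableOn_ret hα) (integrable_const _), hm.integral_ret hα] at h1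
    have h2 : ∫ x in A, (m.real A)⁻¹ ∂m = 1 := by
      rw [setIntegral_const, smul_eq_mul, mul_inv_cancel₀ hA.ne']
    rw [h2, sub_self] at h1
    exact (mul_eq_zero.1 h1.symm).resolve_left hA.ne'

lemma birkhoffSum_ret (a : ℝ) (k : ℕ) (y : ℝ) :
    birkhoffSum (Ret α) (fun x => (ret α x : ℝ) - a) k y = tau α k y - k * a := by
  simp [birkhoffSum, tau]

/-- The observable induced by a centered Hölder function is admissible. -/
lemma Nice.adm {f : ℝ → ℝ} {B C r : ℝ} (hf : Nice f B C r) (hα : 0 < α) (hα1 : α < 1)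
    (hm : Inv α m) (h0 : ∫ x, f x ∂m = 0) :
    Adm hα hα1 hf.r_pos hf.r_le (gs α f) (Gs α f) (max B C) (f 0) where
  meas := measurable_gs hα hf.meas
  branch := gs_psi hα f
  obs := hf.obs hα hα1
  C_nonneg := hf.C_nonneg.trans (le_max_right _ _)
  asymp := hf.asymp hα
  centered := by
    have h1 := hm.integral_A_real hα hα1 hf.r_pos hf.r_le (gs α f)
    rw [hm.integral_gs hα hf.meas hf.bdd, h0] at h1
    exact (mul_eq_zero.1 h1.symm).resolve_left (hm.A_pos hα).ne'

end LSV

namespace LSV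
variable {α : ℝ} {m : Measure ℝ}

/-! ### From the return map back to the original map -/

lemma abs_tau_sub_le {μ : ℝ} (hμ : 0 < μ) (n : ℕ) (y : ℝ) :
    |(tau α ⌊n * μ⌋₊ y : ℝ) - n| ≤
      |birkhoffSum (Ret α) (fun x => (ret α x : ℝ) - μ⁻¹) ⌊n * μ⌋₊ y| + μ⁻¹ := by
  rw [birkhoffSum_ret]
  have h1 : (⌊n * μ⌋₊ : ℝ) ≤ n * μ := Nat.floor_le (by positivity)
  have h2 : n * μ < ⌊n * μ⌋₊ + 1 := Nat.lt_floor_add_one _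
  have h3 : (⌊n * μ⌋₊ : ℝ) * μ⁻¹ ≤ n := by rw [← div_eq_mul_inv, div_le_iff₀ hμ]; exact h1
  have h4 : (n:ℝ) ≤ ⌊n * μ⌋₊ * μ⁻¹ + μ⁻¹ := by
    rw [← add_one_mul, ← div_eq_mul_inv, le_div_iff₀ hμ]; exact h2.le
  have h5 := abs_add_le ((tau α ⌊n * μ⌋₊ y : ℝ) - ⌊n * μ⌋₊ * μ⁻¹) (⌊n * μ⌋₊ * μ⁻¹ - n)
  rw [sub_add_sub_cancel] at h5
  have h6 : |(⌊n * μ⌋₊ : ℝ) * μ⁻¹ - n| ≤ μ⁻¹ := by rw [abs_le]; constructor <;> linarith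
  linarith

variable {f : ℝ → ℝ} {B C r : ℝ}

/-- Outside a set of small measure the entrance time is bounded, and both the time of the
`⌊n m(A)⌋`-th return minus `n` and the induced Birkhoff sum are `O(n ^ α)`. -/
lemma Nice.core (hf : Nice f B C r) (hm : Inv α m) (hα2 : 1/2 < α) (hα1 : α < 1)
    (h0 : ∫ x, f x ∂m = 0) {δ : ENNReal} (hδ : 0 < δ) :
    ∃ K > 0, ∀ n : ℕ, 1 ≤ n → m {x | ¬ ((ent α x : ℝ) ≤ K ∧
      |(tau α ⌊n * m.real A⌋₊ (land α x) : ℝ) - n| ≤ K * (n:ℝ) ^ α ∧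
      |birkhoffSum (Ret α) (gs α f) ⌊n * m.real A⌋₊ (land α x)| ≤ K * (n:ℝ) ^ α)} ≤ δ := by
  have hα : 0 < α := by linarith
  have hμ := hm.A_pos hα
  have hδ3 : 0 < δ / 3 := ENNReal.div_pos hδ.ne' (by norm_num)
  obtain ⟨L, hL⟩ := (ENNReal.tendsto_nhds_zero.1 (hm.tendsto_ent_gt hα) _ hδ3).exists
  obtain ⟨K₁, hK₁, h₁⟩ := (adm_ret (hα := hα) (hα1 := hα1) (hr := hf.r_pos) (hr1 := hf.r_le)
    hm).tight hm hα2 hδ3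
  obtain ⟨K₂, hK₂, h₂⟩ := (hf.adm hα hα1 hm h0).tight hm hα2 hδ3
  have hμ' : 0 < (m.real A)⁻¹ := inv_pos.2 hμ
  refine ⟨L + (K₁ + (m.real A)⁻¹) + K₂, by positivity, fun n hn => ?_⟩
  have hn1 : (1:ℝ) ≤ (n:ℝ) ^ α := one_le_rpow (by exact_mod_cast hn) hα.le
  have hL0 : (0:ℝ) ≤ L := by positivity
  rw [← ENNReal.add_thirds δ]
  refine le_trans (measure_mono ?_) ((measure_union_le _ _).trans
    (add_le_add ((measure_union_le _ _).trans (add_le_add hL (h₁ n hn))) (h₂ n hn)))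
  intro x hx
  by_contra hx'
  simp only [Set.mem_union, Set.mem_ofPred_eq, not_or, not_lt] at hx'
  obtain ⟨⟨a1, a2⟩, a3⟩ := hx'
  have a1' : (ent α x : ℝ) ≤ L := by exact_mod_cast a1
  refine hx ⟨by linarith, (abs_tau_sub_le hμ n _).trans ?_, a3.trans ?_⟩
  · nlinarith [mul_nonneg hL0 (by linarith : (0:ℝ) ≤ (n:ℝ) ^ α),
      mul_nonneg hK₂.le (by linarith : (0:ℝ) ≤ (n:ℝ) ^ α)]
  · gcongr; linarith

lemma tendsto_nat_rpow (hα : 0 < α) : Tendsto (fun n : ℕ => (n:ℝ) ^ α) atTop atTop :=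
  (tendsto_rpow_atTop hα).comp tendsto_natCast_atTop_atTop

lemma eventually_rpow_le (hα1 : α < 1) (D : ℝ) {ε : ℝ} (hε : 0 < ε) :
    ∀ᶠ n : ℕ in atTop, D * (n:ℝ) ^ α ≤ ε * n := by
  have h1 := (tendsto_nat_rpow (α := 1 - α) (by linarith)).eventually_ge_atTop (D / ε)
  filter_upwards [h1, eventually_ge_atTop 1] with n hn hn1
  have hn0 : (0:ℝ) < n := by exact_mod_cast hn1
  rw [div_le_iff₀ hε] at hn
  have h2 : (n:ℝ) ^ (1 - α) * (n:ℝ) ^ α = n := by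
    rw [← rpow_add hn0]; simp
  calc D * (n:ℝ) ^ α ≤ ((n:ℝ) ^ (1 - α) * ε) * (n:ℝ) ^ α := by gcongr
    _ = ε * ((n:ℝ) ^ (1 - α) * (n:ℝ) ^ α) := by ring
    _ = ε * n := by rw [h2]

/-- A weak law of large numbers. -/
lemma Nice.wlln (hf : Nice f B C r) (hm : Inv α m) (hα2 : 1/2 < α) (hα1 : α < 1)
    (h0 : ∫ x, f x ∂m = 0) {ε : ℝ} (hε : 0 < ε) :
    Tendsto (fun n : ℕ => m {x | ε * n < |birkhoffSum (lsv α) f n x|}) atTop (𝓝 0) := by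
  have hα : 0 < α := by linarith
  have hB : 0 ≤ B := (abs_nonneg _).trans (hf.bdd 0)
  refine ENNReal.tendsto_nhds_zero.2 fun δ hδ => ?_
  obtain ⟨K, hK, hcore⟩ := hf.core hm hα2 hα1 h0 hδ
  filter_upwards [eventually_rpow_le hα1 ((3 * B + 1) * K) hε, eventually_ge_atTop 1] with n hn hn1
  refine (measure_mono ?_).trans (hcore n hn1)
  rintro x hx ⟨a1, a2, a3⟩
  have hx' : ε * n < |birkhoffSum (lsv α) f n x| := hx
  refine absurd hx' (not_lt.2 (le_trans ?_ hn))
  set k := ⌊n * m.real A⌋₊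
  have hp : (1:ℝ) ≤ (n:ℝ) ^ α := one_le_rpow (by exact_mod_cast hn1) hα.le
  have h1 := abs_birkhoffSum_sub_le (T := lsv α) hf.bdd n (ent α x + tau α k (land α x)) x
  rw [birkhoffSum_ent_tau] at h1
  have h2 := abs_birkhoffSum_le (T := lsv α) hf.bdd (ent α x) x
  have h3 : |(n:ℝ) - (ent α x + tau α k (land α x) : ℕ)| ≤ 2 * K * (n:ℝ) ^ α := by
    push_cast
    have : (0:ℝ) ≤ ent α x := by positivity
    rw [abs_le] at a2 ⊢
    constructor <;> nlinarith
  have h4 : B * |(n:ℝ) - (ent α x + tau α k (land α x) : ℕ)| ≤ B * (2 * K * (n:ℝ) ^ α) := by gcongr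
  have h5 : B * (ent α x : ℝ) ≤ B * (K * (n:ℝ) ^ α) := by
    gcongr; nlinarith
  have h6 := abs_add_le (birkhoffSum (lsv α) f n x - (birkhoffSum (lsv α) f (ent α x) x +
    birkhoffSum (Ret α) (gs α f) k (land α x))) (birkhoffSum (lsv α) f (ent α x) x +
    birkhoffSum (Ret α) (gs α f) k (land α x))
  rw [sub_add_cancel] at h6
  have h7 := abs_add_le (birkhoffSum (lsv α) f (ent α x) x)
    (birkhoffSum (Ret α) (gs α f) k (land α x))
  nlinarith

/-- A maximal version of the weak law of large numbers. -/
lemma Nice.wlln_max (hf : Nice f B C r) (hm : Inv α m) (hα2 : 1/2 < α) (hα1 : α < 1)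
    (h0 : ∫ x, f x ∂m = 0) {ε : ℝ} (hε : 0 < ε) :
    Tendsto (fun M : ℕ => m {x | ∃ l ≤ M, ε * M < |birkhoffSum (lsv α) f l x|}) atTop (𝓝 0) := by
  have hB : 0 ≤ B := (abs_nonneg _).trans (hf.bdd 0)
  obtain ⟨q, hq⟩ := exists_nat_gt (B / (ε / 4))
  have hq0 : (0:ℝ) < q := lt_of_le_of_lt (by positivity) hq
  have hqn : 0 < q := by exact_mod_cast hq0
  rw [div_lt_iff₀ (by positivity)] at hq
  -- The multiples of `M / q + 1` below `M` form a net of at most `q` points.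
  have hlim : Tendsto (fun M : ℕ => ∑ i ∈ Finset.range q, if i = 0 then (0:ENNReal) else
      m {x | ε / 2 * (i * (M / q + 1) : ℕ) < |birkhoffSum (lsv α) f (i * (M / q + 1)) x|})
      atTop (𝓝 0) := by
    have hz : (0:ENNReal) = ∑ _i ∈ Finset.range q, (0:ENNReal) := by simp
    suffices h : Tendsto _ atTop (𝓝 (∑ _i ∈ Finset.range q, (0:ENNReal))) by rwa [← hz] at h
    refine tendsto_finsetSum _ fun i _ => ?_
    by_cases hi : i = 0
    · simp [hi]
    · simp only [hi, if_false]
      have h1 : Tendsto (fun M : ℕ => i * (M / q + 1)) atTop atTop := by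
        refine tendsto_atTop_mono (f := fun M : ℕ => M / q) (fun M => ?_)
          (Nat.tendsto_div_const_atTop hqn.ne')
        exact (Nat.le_succ _).trans (Nat.le_mul_of_pos_left _ (Nat.pos_of_ne_zero hi))
      exact (hf.wlln hm hα2 hα1 h0 (half_pos hε)).comp h1
  refine tendsto_of_tendsto_of_tendsto_of_le_of_le' tendsto_const_nhds hlim
    (Eventually.of_forall fun _ => zero_le) ?_
  obtain ⟨M₀, hM₀⟩ := exists_nat_ge (B / (ε / 4))
  rw [div_le_iff₀ (by positivity)] at hM₀
  filter_upwards [eventually_ge_atTop M₀] with M hM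
  have hM' : (M₀:ℝ) ≤ M := by exact_mod_cast hM
  set d := M / q + 1 with hd
  refine le_trans (measure_mono (t := ⋃ i ∈ Finset.range q, if i = 0 then ∅ else
    {x | ε / 2 * (i * d : ℕ) < |birkhoffSum (lsv α) f (i * d) x|}) ?_)
    ((measure_biUnion_finset_le _ _).trans (Finset.sum_le_sum fun i _ => ?_))
  · rintro x ⟨l, hl, hx⟩
    have hid : l / d * d ≤ l := Nat.div_mul_le_self l d
    have hiq : l / d < q := by
      rw [Nat.div_lt_iff_lt_mul (Nat.succ_pos _)]
      exact lt_of_le_of_lt hl (Nat.lt_mul_div_succ M hqn)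
    have hlid : l < l / d * d + d := by
      have := Nat.lt_div_mul_add (a := l) (b := d) (Nat.succ_pos _)
      exact this
    have h1 := abs_birkhoffSum_sub_le (T := lsv α) hf.bdd l (l / d * d) x
    have hdM : (d:ℝ) ≤ M / q + 1 := by
      rw [hd]; push_cast; gcongr; exact Nat.cast_div_le
    have c1 : ((l / d * d : ℕ) : ℝ) ≤ l := by exact_mod_cast hid
    have c2 : (l:ℝ) < (l / d * d : ℕ) + d := by exact_mod_cast hlid
    have c3 : (l:ℝ) ≤ M := by exact_mod_cast hl
    rw [abs_of_nonneg (by linarith : (0:ℝ) ≤ (l:ℝ) - (l / d * d : ℕ))] at h1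
    have h2 : B * ((l:ℝ) - (l / d * d : ℕ)) ≤ B * (M / q + 1) := by gcongr; linarith
    have h3 : B * (M / q + 1) ≤ ε / 2 * M := by
      have : B * (M / q) ≤ ε / 4 * M := by
        rw [mul_div_assoc', div_le_iff₀ hq0]
        nlinarith [(Nat.cast_nonneg M : (0:ℝ) ≤ M)]
      nlinarith
    have h4 : |birkhoffSum (lsv α) f l x| - |birkhoffSum (lsv α) f (l / d * d) x| ≤ _ :=
      (abs_sub_abs_le_abs_sub _ _).trans h1
    have h5 : ε / 2 * (l / d * d : ℕ) < |birkhoffSum (lsv α) f (l / d * d) x| := by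
      have : ε / 2 * (l / d * d : ℕ) ≤ ε / 2 * M := by gcongr; linarith
      linarith
    have hi : l / d ≠ 0 := by
      intro h
      rw [h, zero_mul] at h5
      simp at h5
    refine Set.mem_biUnion (x := l / d) (Finset.mem_coe.2 (Finset.mem_range.2 hiq)) ?_
    rw [if_neg hi]
    exact h5
  · split_ifs <;> simp

/-- The Birkhoff sum up to time `n` and the induced one up to the `⌊n m(A)⌋`-th return are
`o(n ^ α)`-close in probability. -/
lemma Nice.window (hf : Nice f B C r) (hm : Inv α m) (hα2 : 1/2 < α) (hα1 : α < 1)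
    (h0 : ∫ x, f x ∂m = 0) {ε : ℝ} (hε : 0 < ε) :
    Tendsto (fun n : ℕ => m {x | ε * (n:ℝ) ^ α < |birkhoffSum (lsv α) f n x -
      birkhoffSum (Ret α) (gs α f) ⌊n * m.real A⌋₊ (land α x)|}) atTop (𝓝 0) := by
  have hα : 0 < α := by linarith
  have hB : 0 ≤ B := (abs_nonneg _).trans (hf.bdd 0)
  refine ENNReal.tendsto_nhds_zero.2 fun δ hδ => ?_
  have hδ2 : 0 < δ / 2 := ENNReal.div_pos hδ.ne' (by norm_num)
  obtain ⟨K, hK, hcore⟩ := hf.core hm hα2 hα1 h0 hδ2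
  set ε' := ε / (8 * (2 * K + 1)) with hε'
  have hε'0 : 0 < ε' := by positivity
  have hM : Tendsto (fun n : ℕ => 2 * ⌈2 * K * (n:ℝ) ^ α⌉₊) atTop atTop := by
    refine tendsto_atTop_mono (fun n => Nat.le_mul_of_pos_left _ (by norm_num)) ?_
    exact tendsto_nat_ceil_atTop.comp
      ((tendsto_nat_rpow hα).const_mul_atTop (by positivity))
  have hmax := ENNReal.tendsto_nhds_zero.1 ((hf.wlln_max hm hα2 hα1 h0 hε'0).comp hM) _ hδ2
  filter_upwards [hmax, eventually_ge_atTop 1, eventually_rpow_le hα1 (2 * K + 1) one_pos,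
    (tendsto_nat_rpow hα).eventually_ge_atTop (B * K / (ε / 2))] with n hn hn1 hnM hnB
  rw [one_mul] at hnM
  rw [div_le_iff₀ (by positivity)] at hnB
  simp only [Function.comp_apply] at hn
  have hp : (1:ℝ) ≤ (n:ℝ) ^ α := one_le_rpow (by exact_mod_cast hn1) hα.le
  set M := ⌈2 * K * (n:ℝ) ^ α⌉₊ with hMdef
  have hM1 : 2 * K * (n:ℝ) ^ α ≤ M := Nat.le_ceil _
  have hM2 : (M:ℝ) < 2 * K * (n:ℝ) ^ α + 1 := Nat.ceil_lt_add_one (by positivity)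
  have hM3 : (M:ℝ) ≤ (2 * K + 1) * (n:ℝ) ^ α := by nlinarith
  have hMn : M ≤ n := by exact_mod_cast hM3.trans hnM
  set k := ⌊n * m.real A⌋₊
  rw [← ENNReal.add_halves δ]
  refine le_trans (measure_mono ?_) ((measure_union_le _ _).trans (add_le_add (hcore n hn1)
    (((hm.mp.iterate (n - M)).measure_preimage_le _).trans hn)))
  intro x hx
  by_contra hx'
  rw [Set.mem_union, not_or] at hx'
  obtain ⟨hx1, hx2⟩ := hx'
  obtain ⟨a1, a2, a3⟩ := not_not.1 hx1
  have hx3 : ∀ l ≤ 2 * M, |birkhoffSum (lsv α) f l ((lsv α)^[n - M] x)| ≤ ε' * (2 * M : ℕ) := by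
    intro l hl
    by_contra h
    exact hx2 ⟨l, hl, not_le.1 h⟩
  have hx' : ε * (n:ℝ) ^ α < _ := hx
  refine absurd hx' (not_lt.2 ?_)
  set N := ent α x + tau α k (land α x) with hN
  have h3 : |(N:ℝ) - n| ≤ M := by
    refine le_trans ?_ hM1
    rw [hN]
    push_cast
    have : (0:ℝ) ≤ ent α x := by positivity
    rw [abs_le] at a2 ⊢
    constructor <;> nlinarith
  rw [abs_le] at h3
  have h4 : n ≤ N + M := by
    have : (n:ℝ) ≤ N + M := by linarith
    exact_mod_cast this
  have h5 : N ≤ n + M := by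
    have : (N:ℝ) ≤ n + M := by linarith
    exact_mod_cast this
  have e1 : birkhoffSum (lsv α) f n x = birkhoffSum (lsv α) f (n - M) x +
      birkhoffSum (lsv α) f M ((lsv α)^[n - M] x) := by
    rw [← birkhoffSum_add, Nat.sub_add_cancel hMn]
  have e2 : birkhoffSum (lsv α) f N x = birkhoffSum (lsv α) f (n - M) x +
      birkhoffSum (lsv α) f (N + M - n) ((lsv α)^[n - M] x) := by
    rw [← birkhoffSum_add]; congr 1; omega
  have e3 := birkhoffSum_ent_tau (α := α) f k x
  rw [← hN] at e3
  have e4 : birkhoffSum (lsv α) f n x - birkhoffSum (Ret α) (gs α f) k (land α x) =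
      (birkhoffSum (lsv α) f M ((lsv α)^[n - M] x) -
      birkhoffSum (lsv α) f (N + M - n) ((lsv α)^[n - M] x)) + birkhoffSum (lsv α) f (ent α x) x := by
    linarith
  rw [e4]
  have b1 := hx3 M (by omega)
  have b2 := hx3 (N + M - n) (by omega)
  have b3 := abs_birkhoffSum_le (T := lsv α) hf.bdd (ent α x) x
  have b4 := abs_add_le (birkhoffSum (lsv α) f M ((lsv α)^[n - M] x) -
      birkhoffSum (lsv α) f (N + M - n) ((lsv α)^[n - M] x)) (birkhoffSum (lsv α) f (ent α x) x)
  have b5 := abs_sub (birkhoffSum (lsv α) f M ((lsv α)^[n - M] x))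
      (birkhoffSum (lsv α) f (N + M - n) ((lsv α)^[n - M] x))
  have b6 : ε' * (2 * M : ℕ) ≤ ε / 4 * (n:ℝ) ^ α := by
    have : ε' * (2 * K + 1) = ε / 8 := by rw [hε']; field_simp
    push_cast
    calc ε' * (2 * M) ≤ ε' * (2 * ((2 * K + 1) * (n:ℝ) ^ α)) := by gcongr
      _ = 2 * (ε' * (2 * K + 1)) * (n:ℝ) ^ α := by ring
      _ = _ := by rw [this]; ring
  have b7 : B * (ent α x : ℝ) ≤ B * K := by gcongr
  linarith

/-- Characteristic functions only change by a small amount under a change of the random variable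
that is small in probability. -/
lemma norm_integral_cexp_sub_le [IsProbabilityMeasure m] {u v : ℝ → ℝ} (hu : Measurable u)
    (hv : Measurable v) {ε : ℝ} (hε : 0 ≤ ε) :
    ‖(∫ x, Complex.exp (Complex.I * (u x : ℝ)) ∂m) - ∫ x, Complex.exp (Complex.I * (v x : ℝ)) ∂m‖ ≤
      ε + 2 * m.real {x | ε < |u x - v x|} := by
  have hn : ∀ s : ℝ, ‖Complex.exp (Complex.I * (s:ℂ))‖ = 1 := fun s => by
    rw [mul_comm]; exact Complex.norm_exp_ofReal_mul_I s
  have hi : ∀ w : ℝ → ℝ, Measurable w →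
      Integrable (fun x => Complex.exp (Complex.I * (w x : ℝ))) m := fun w hw =>
    Integrable.of_bound (by fun_prop) 1 (Eventually.of_forall fun x => (hn _).le)
  have hS : MeasurableSet {x | ε < |u x - v x|} :=
    measurableSet_lt measurable_const (hu.sub hv).abs
  rw [← integral_sub (hi u hu) (hi v hv)]
  have h1 : Integrable (fun x => ε + {x | ε < |u x - v x|}.indicator (fun _ => (2:ℝ)) x) m :=
    (integrable_const _).add ((integrable_const _).indicator hS)
  refine (norm_integral_le_of_norm_le h1 (Eventually.of_forall fun x => ?_)).trans (le_of_eq ?_)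
  · by_cases hx : ε < |u x - v x|
    · rw [Set.indicator_of_mem (show x ∈ {x | ε < |u x - v x|} from hx)]
      have := norm_sub_le (Complex.exp (Complex.I * (u x : ℝ))) (Complex.exp (Complex.I * (v x : ℝ)))
      rw [hn, hn] at this
      linarith
    · rw [Set.indicator_of_notMem (show x ∉ {x | ε < |u x - v x|} from hx), add_zero]
      have e : Complex.exp (Complex.I * (u x : ℝ)) - Complex.exp (Complex.I * (v x : ℝ)) =
          Complex.exp (Complex.I * (v x : ℝ)) *
          (Complex.exp (Complex.I * ((u x - v x : ℝ) : ℂ)) - 1) := by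
        rw [mul_sub, ← Complex.exp_add, mul_one]; congr 2; push_cast; ring
      rw [e, norm_mul, hn, one_mul]
      exact (Real.norm_exp_I_mul_ofReal_sub_one_le).trans (not_lt.1 hx)
  · rw [integral_add (integrable_const _) ((integrable_const _).indicator hS),
      integral_indicator_const _ hS]
    simp [mul_comm]

lemma measurable_birkhoff_lsv (hf : Measurable f) (n : ℕ) :
    Measurable (birkhoffSum (lsv α) f n) := by
  unfold birkhoffSum
  exact Finset.measurable_sum _ fun i _ => hf.comp (measurable_iter i)

/-- The stable limit for the map itself: its Birkhoff sum up to time `n` differs from the induced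
sum over `⌊n * m A⌋` returns by `o(n ^ α)` in probability. -/
lemma Nice.limit (hf : Nice f B C r) (hm : Inv α m) (hα : 0 < α) (hα2 : 1/2 < α) (hα1 : α < 1)
    (h0 : ∫ x, f x ∂m = 0) (t : ℝ) :
    Tendsto (fun n : ℕ => ∫ x, Complex.exp (Complex.I *
      (t / (n:ℝ) ^ α * birkhoffSum (lsv α) f n x : ℝ)) ∂m) atTop
      (𝓝 (Complex.exp (m.real A * ((sys hα hα1 r hf.r_pos hf.r_le).H (1/2) * expo α (f 0) t)))) := by
  have := hm.prob
  have h1 := (hf.adm hα hα1 hm h0).limit hm hα2 t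
  refine h1.congr_dist ?_
  refine Metric.tendsto_atTop.2 fun ε hε => ?_
  set η := ε / (2 * (|t| + 1)) with hη
  have hη0 : 0 < η := by positivity
  have h2 := (ENNReal.tendsto_toReal ENNReal.zero_ne_top).comp (hf.window hm hα2 hα1 h0 hη0)
  rw [ENNReal.toReal_zero] at h2
  have h3 := h2.eventually_lt_const (show (0:ℝ) < ε / 4 by positivity)
  obtain ⟨N, hN⟩ := eventually_atTop.1 h3
  refine ⟨max N 1, fun n hn => ?_⟩
  have hn1 : 1 ≤ n := (le_max_right _ _).trans hn
  have hn0 : (0:ℝ) < (n:ℝ) ^ α := rpow_pos_of_pos (by exact_mod_cast hn1) _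
  rw [Real.dist_0_eq_abs, abs_of_nonneg dist_nonneg, dist_comm, dist_eq_norm]
  have h4 := hN n ((le_max_left _ _).trans hn)
  refine (norm_integral_cexp_sub_le (m := m) (ε := ε / 2)
    ((measurable_birkhoff_lsv hf.meas n).const_mul _)
    (((measurable_birkhoff_Ret hα (measurable_gs hα hf.meas) _).comp
      (measurable_land hα)).const_mul _) (by positivity)).trans_lt ?_
  have h5 : m.real {x | ε / 2 < |t / (n:ℝ) ^ α * birkhoffSum (lsv α) f n x -
      t / (n:ℝ) ^ α * (birkhoffSum (Ret α) (gs α f) ⌊n * m.real A⌋₊ ∘ land α) x|} ≤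
      m.real {x | η * (n:ℝ) ^ α < |birkhoffSum (lsv α) f n x -
      birkhoffSum (Ret α) (gs α f) ⌊n * m.real A⌋₊ (land α x)|} := by
    refine measureReal_mono fun x hx => ?_
    have hx' : ε / 2 < _ := hx
    by_contra h
    have h6 : |birkhoffSum (lsv α) f n x -
        birkhoffSum (Ret α) (gs α f) ⌊n * m.real A⌋₊ (land α x)| ≤ η * (n:ℝ) ^ α :=
      not_lt.1 fun h' => h h'
    refine absurd hx' (not_lt.2 ?_)
    rw [Function.comp_apply, ← mul_sub, abs_mul, abs_div, abs_of_pos hn0]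
    calc _ ≤ |t| / (n:ℝ) ^ α * (η * (n:ℝ) ^ α) := by gcongr
      _ = |t| * η := by field_simp
      _ ≤ (|t| + 1) * η := by gcongr; linarith
      _ = ε / 2 := by rw [hη]; field_simp
  have h7 : m.real {x | η * (n:ℝ) ^ α < |birkhoffSum (lsv α) f n x -
      birkhoffSum (Ret α) (gs α f) ⌊n * m.real A⌋₊ (land α x)|} < ε / 4 := h4
  linarith

end LSV

namespace LSV
variable {α : ℝ} {m : Measure ℝ}

/-! ### Extension of the observable and evaluation of the constants -/

/-- The projection of the line onto `[0, 1]`. -/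
noncomputable def clamp (x : ℝ) : ℝ := max 0 (min x 1)

lemma clamp_mem (x : ℝ) : clamp x ∈ Set.Icc (0:ℝ) 1 :=
  ⟨le_max_left _ _, max_le zero_le_one (min_le_right _ _)⟩

lemma clamp_of_mem {x : ℝ} (hx : x ∈ Set.Icc (0:ℝ) 1) : clamp x = x := by
  rw [clamp, min_eq_left hx.2, max_eq_right hx.1]

lemma continuous_clamp : Continuous clamp := by unfold clamp; fun_prop

/-- A Hölder function on `[0, 1]`, extended to the line by clamping. -/
lemma nice_clamp {f : ℝ → ℝ} {C r : ℝ} (hr : 0 < r) (hf : ∀ x ∈ Set.Icc (0:ℝ) 1,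
    ∀ y ∈ Set.Icc (0:ℝ) 1, |f x - f y| ≤ C * |x - y| ^ r) :
    Nice (fun x => f (clamp x)) (|f 0| + max C 0) (max C 0) (min r 1) := by
  have hr' : 0 < min r 1 := lt_min hr one_pos
  have hle : ∀ x ∈ Set.Icc (0:ℝ) 1, ∀ y ∈ Set.Icc (0:ℝ) 1, |x - y| ≤ 1 := by
    intro x hx y hy
    rw [abs_le]; constructor <;> linarith [hx.1, hx.2, hy.1, hy.2]
  have hf' : ∀ x ∈ Set.Icc (0:ℝ) 1, ∀ y ∈ Set.Icc (0:ℝ) 1,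
      |f x - f y| ≤ max C 0 * |x - y| ^ min r 1 := by
    intro x hx y hy
    refine (hf x hx y hy).trans ?_
    have h1 : |x - y| ^ r ≤ |x - y| ^ min r 1 :=
      rpow_le_rpow_of_exponent_ge' (abs_nonneg _) (hle x hx y hy) hr'.le (min_le_left _ _)
    have h2 : 0 ≤ |x - y| ^ r := by positivity
    exact (mul_le_mul_of_nonneg_right (le_max_left C 0) h2).trans
      (mul_le_mul_of_nonneg_left h1 (le_max_right _ _))
  have h0 : (0:ℝ) ∈ Set.Icc (0:ℝ) 1 := ⟨le_rfl, zero_le_one⟩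
  refine ⟨?_, fun x => ?_, hr', min_le_right _ _, le_max_right _ _, fun x hx y hy => ?_⟩
  · refine Continuous.measurable (continuous_iff_continuousAt.2 fun x => ?_)
    rw [ContinuousAt, tendsto_iff_dist_tendsto_zero]
    have h1 : Continuous fun y => max C 0 * |clamp y - clamp x| ^ min r 1 :=
      (((continuous_clamp.sub continuous_const).abs).rpow_const fun _ => Or.inr hr'.le).const_mul _
    have h2 := h1.tendsto x
    simp only [sub_self, abs_zero, zero_rpow hr'.ne', mul_zero] at h2
    exact squeeze_zero (fun _ => dist_nonneg)
      (fun y => hf' _ (clamp_mem y) _ (clamp_mem x)) h2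
  · have h1 := hf' _ (clamp_mem x) 0 h0
    have h2 : |clamp x - 0| ^ min r 1 ≤ 1 :=
      rpow_le_one (abs_nonneg _) (hle _ (clamp_mem x) 0 h0) hr'.le
    have h3 := abs_sub_abs_le_abs_sub (f (clamp x)) (f 0)
    have h4 : max C 0 * |clamp x - 0| ^ min r 1 ≤ max C 0 :=
      mul_le_of_le_one_right (le_max_right _ _) h2
    linarith
  · simp only [clamp_of_mem hx, clamp_of_mem hy]
    exact hf' x hx y hy

lemma lsv_mem_unit (hα : 0 < α) {x : ℝ} (hx : x ∈ Set.Icc (0:ℝ) 1) :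
    lsv α x ∈ Set.Icc (0:ℝ) 1 := by
  rw [lsv]
  split_ifs with h
  · have h1 : (2:ℝ) ^ α * x ^ α ≤ 1 := by
      rw [← mul_rpow (by norm_num) hx.1]
      exact rpow_le_one (by linarith [hx.1]) (by linarith) hα.le
    have h2 : 0 ≤ (2:ℝ) ^ α * x ^ α := mul_nonneg (by positivity) (rpow_nonneg hx.1 _)
    have := hx.1
    constructor
    · positivity
    · nlinarith
  · constructor <;> linarith [hx.2]

lemma iter_mem_unit (hα : 0 < α) {x : ℝ} (hx : x ∈ Set.Icc (0:ℝ) 1) (n : ℕ) :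
    (lsv α)^[n] x ∈ Set.Icc (0:ℝ) 1 := by
  induction n with
  | zero => exact hx
  | succ n ih => rw [Function.iterate_succ_apply']; exact lsv_mem_unit hα ih

lemma birkhoffSum_clamp (hα : 0 < α) (f : ℝ → ℝ) (n : ℕ) {x : ℝ} (hx : x ∈ Set.Icc (0:ℝ) 1) :
    birkhoffSum (lsv α) (fun x => f (clamp x)) n x = birkhoffSum (lsv α) f n x :=
  Finset.sum_congr rfl fun i _ => by
    simp only [clamp_of_mem (iter_mem_unit hα hx i)]

/-- The scale parameter of the limit law. -/
lemma abs_rpow_const (hα : 0 < α) (t : ℝ) {b : ℝ} (hb : b ≠ 0) :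
    |t * (b * (α * 4 ^ α)⁻¹)| ^ (1/α) = |t| ^ (1/α) * (4 * (α / |b|) ^ (1/α))⁻¹ := by
  have hb' : 0 < |b| := abs_pos.2 hb
  have h4 : ((4:ℝ) ^ α) ^ (1/α) = 4 := by
    rw [← rpow_mul (by norm_num), mul_one_div_cancel hα.ne', rpow_one]
  have h5 : |b * (α * 4 ^ α)⁻¹| = (4 ^ α * (α / |b|))⁻¹ := by
    rw [abs_mul, abs_of_pos (show 0 < (α * (4:ℝ) ^ α)⁻¹ by positivity)]
    field_simp
  rw [abs_mul, mul_rpow (abs_nonneg _) (abs_nonneg _), h5, inv_rpow (by positivity),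
    mul_rpow (by positivity) (by positivity), h4]

lemma sign_const (hα : 0 < α) (t b : ℝ) :
    Real.sign (t * (b * (α * 4 ^ α)⁻¹)) = Real.sign b * Real.sign t := by
  have hp : 0 < (α * (4:ℝ) ^ α)⁻¹ := by positivity
  rcases lt_trichotomy t 0 with ht | ht | ht <;> rcases lt_trichotomy b 0 with hb | hb | hb
  · rw [sign_of_pos (mul_pos_of_neg_of_neg ht (mul_neg_of_neg_of_pos hb hp)), sign_of_neg ht,
      sign_of_neg hb]; norm_num
  · simp [hb]
  · rw [sign_of_neg (mul_neg_of_neg_of_pos ht (mul_pos hb hp)), sign_of_neg ht, sign_of_pos hb,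
      one_mul]
  · simp [ht]
  · simp [ht]
  · simp [ht]
  · rw [sign_of_neg (mul_neg_of_pos_of_neg ht (mul_neg_of_neg_of_pos hb hp)), sign_of_pos ht,
      sign_of_neg hb, mul_one]
  · simp [hb]
  · rw [sign_of_pos (mul_pos ht (mul_pos hb hp)), sign_of_pos ht, sign_of_pos hb, one_mul]

lemma limit_const (hα2 : 1/2 < α) (hα1 : α < 1) (t : ℝ) {b μ H h : ℝ} (hb : b ≠ 0)
    (hh : h = μ * H) :
    (μ:ℂ) * (H * expo α b t) =
      -(((h / (4 * (α / |b|) ^ (1/α))) * Real.Gamma (1 - 1/α) *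
              Real.cos (π / (2 * α)) : ℝ) : ℂ) *
            ((|t| ^ (1/α) : ℝ) : ℂ) *
            (1 - Complex.I * ((Real.sign b : ℝ) : ℂ) * ((Real.sign t : ℝ) : ℂ) *
              ((Real.tan (π / (2 * α)) : ℝ) : ℂ)) := by
  have hα : 0 < α := by linarith
  have e : π * (1/α) / 2 = π / (2 * α) := by field_simp
  rw [expo, integral_Psi hα2 hα1, e, abs_rpow_const hα t hb, sign_const hα, hh]
  push_cast
  ring

end LSV

open LSV in
/-- Convergence to a stable law for the LSV map with `1/2 < α < 1` and a Hölder observable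
not vanishing at the neutral fixed point: `S_n f / n^α` converges in distribution to the
stable law `X_{1/α, c, sgn f(0)}`, stated via characteristic functions. -/
theorem lsv_stable_law (α : ℝ) (hα : 1 / 2 < α ∧ α < 1)
    (m : Measure ℝ) [IsProbabilityMeasure m]
    (hsupp : m (Set.Icc (0:ℝ) 1) = 1)
    (hT : MeasurePreserving (lsv α) m m)
    (h : ℝ → ℝ) (hh_cont : ContinuousOn h (Set.Ioc 0 1))
    (hm : m = MeasureTheory.volume.withDensity fun x => ENNReal.ofReal (h x))
    (f : ℝ → ℝ)
    (hf_holder : ∃ C r : ℝ, 0 < r ∧ ∀ x ∈ Set.Icc (0:ℝ) 1, ∀ y ∈ Set.Icc (0:ℝ) 1,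
      |f x - f y| ≤ C * |x - y| ^ r)
    (γ : ℝ) (hγ : (2 * α - 1) / (α + 1) < γ)
    (hf_holder0 : ∃ ε > (0:ℝ), ∃ C : ℝ, ∀ x ∈ Set.Icc (0:ℝ) ε, ∀ y ∈ Set.Icc (0:ℝ) ε,
      |f x - f y| ≤ C * |x - y| ^ γ)
    (hf_int : ∫ x, f x ∂m = 0)
    (hf0 : f 0 ≠ 0) :
    ∀ t : ℝ,
      Tendsto
        (fun n : ℕ => ∫ x, Complex.exp (Complex.I * (t : ℂ) *
          ((birkhoffSum (lsv α) f n x / (n : ℝ) ^ α : ℝ) : ℂ)) ∂m) atTop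
        (𝓝 (Complex.exp
          (-(((h (1/2) / (4 * (α / |f 0|) ^ (1/α))) * Real.Gamma (1 - 1/α) *
              Real.cos (π / (2 * α)) : ℝ) : ℂ) *
            ((|t| ^ (1/α) : ℝ) : ℂ) *
            (1 - Complex.I * ((Real.sign (f 0) : ℝ) : ℂ) * ((Real.sign t : ℝ) : ℂ) *
              ((Real.tan (π / (2 * α)) : ℝ) : ℂ))))) := by
  intro t
  obtain ⟨hα2, hα1⟩ := hα
  have hα0 : 0 < α := by linarith
  obtain ⟨C, r, hr, hC⟩ := hf_holder
  have hac : m ≪ volume := by rw [hm]; exact withDensity_absolutelyContinuous _ _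
  have hunit : ∀ᵐ x ∂m, x ∈ Set.Icc (0:ℝ) 1 :=
    (prob_compl_eq_zero_iff measurableSet_Icc).2 hsupp
  have hinv : Inv α m := by
    refine ⟨inferInstance, hT, hac, ?_⟩
    have h0 : ∀ᵐ x ∂m, x ≠ 0 := by
      have : m {0} = 0 := hac (by simp)
      rw [ae_iff]
      simpa using this
    filter_upwards [hunit, h0] with x hx hx0
    exact ⟨lt_of_le_of_ne hx.1 (Ne.symm hx0), hx.2⟩
  have hn := nice_clamp hr hC
  have hint : ∫ x, f (clamp x) ∂m = 0 := by
    rw [← hf_int]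
    refine integral_congr_ae ?_
    filter_upwards [hunit] with x hx
    rw [clamp_of_mem hx]
  have hlim := hn.limit hinv hα0 hα2 hα1 hint t
  have hd := hinv.density_half hα0 hα1 hn.r_pos hn.r_le hh_cont hm
  have hc0 : clamp 0 = 0 := clamp_of_mem ⟨le_rfl, zero_le_one⟩
  simp only [hc0] at hlim
  rw [← limit_const hα2 hα1 t hf0 hd]
  refine hlim.congr fun n => integral_congr_ae ?_
  filter_upwards [hunit] with x hx
  rw [birkhoffSum_clamp hα0 f n hx]
  congr 1
  push_cast
  ring
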